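/- Let S₁ = (n₁,…,n_k) and S₂ = (m₁,…,m_l) be tuples of integers at least 2 with (n_i, n_j) = 1 and (m_i, m_j) = 1 for i ≠ j. Then Γ(S₁) and Γ(S₂) are quasi-isometric if and only if k = l and there is a permutation σ of {1,…,k} such that for each i, n_i is a rational power of m_{σ(i)}, i.e. there exist positive integers s and t with n_i^s = m_{σ(i)}^t. -/

import Mathlib

/-- `f : X → Y` is a `(K,C)`-quasi-isometry with respect to the distance
functions `dX`, `dY`. -/
def IsQI {X Y : Type*} (K C : ℝ) (dX : X → X → ℝ) (dY : Y → Y → ℝ)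
    (f : X → Y) : Prop :=
  (∀ x₁ x₂ : X, dX x₁ x₂ / K - C ≤ dY (f x₁) (f x₂)) ∧
  (∀ x₁ x₂ : X, dY (f x₁) (f x₂) ≤ K * dX x₁ x₂ + C) ∧
  (∀ y : Y, ∃ x : X, dY (f x) y ≤ C)

/-- The word metric on a group `G` associated to a generating set `S`:
the distance from `g` to `h` is the length of a shortest word in the
elements of `S` and their inverses representing `g⁻¹ * h`. -/
noncomputable def wordDist {G : Type*} [Group G] (S : Set G) (g h : G) : ℝ :=
  sInf {r : ℝ | ∃ L : List G, (∀ x ∈ L, x ∈ S ∨ x⁻¹ ∈ S) ∧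
      L.prod = g⁻¹ * h ∧ r = L.length}

/-- Two groups are quasi-isometric if, when equipped with word metrics coming
from finite generating sets, there is a quasi-isometry between them. -/
def QuasiIsometricGroups (G H : Type*) [Group G] [Group H] : Prop :=
  ∃ (S : Finset G) (T : Finset H),
    Subgroup.closure (S : Set G) = ⊤ ∧ Subgroup.closure (T : Set H) = ⊤ ∧
    ∃ (K C : ℝ) (f : G → H), 1 ≤ K ∧ 0 ≤ C ∧
      IsQI K C (wordDist (S : Set G)) (wordDist (T : Set H)) f

/-- Two groups are (abstractly) commensurable if they contain isomorphic
subgroups of finite index. -/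
def CommensurableGroups (G H : Type*) [Group G] [Group H] : Prop :=
  ∃ (G₁ : Subgroup G) (H₁ : Subgroup H),
    G₁.FiniteIndex ∧ H₁.FiniteIndex ∧ Nonempty (G₁ ≃* H₁)

/-- The relators for the group
`Γ(n₁,…,n_k) = ⟨a₁,…,a_k, b ∣ aᵢ⁻¹ b aᵢ = b^{nᵢ}, aᵢaⱼ = aⱼaᵢ (i ≠ j)⟩`.
The generator `aᵢ` is `Sum.inl i` and `b` is `Sum.inr ()`. -/
def gammaRels {k : ℕ} (n : Fin k → ℕ) : Set (FreeGroup (Fin k ⊕ Unit)) :=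
  {r | (∃ i : Fin k,
        r = (FreeGroup.of (Sum.inl i))⁻¹ * FreeGroup.of (Sum.inr ()) *
            FreeGroup.of (Sum.inl i) * (FreeGroup.of (Sum.inr ()) ^ (n i))⁻¹) ∨
      (∃ i j : Fin k, i ≠ j ∧
        r = FreeGroup.of (Sum.inl i) * FreeGroup.of (Sum.inl j) *
            (FreeGroup.of (Sum.inl i))⁻¹ * (FreeGroup.of (Sum.inl j))⁻¹)}

/-- The group `Γ(n₁,…,n_k)` given by the presentation
`⟨a₁,…,a_k, b ∣ aᵢ⁻¹ b aᵢ = b^{nᵢ}, aᵢaⱼ = aⱼaᵢ (i ≠ j)⟩`. -/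
def GammaGroup {k : ℕ} (n : Fin k → ℕ) : Type := PresentedGroup (gammaRels n)

instance {k : ℕ} (n : Fin k → ℕ) : Group (GammaGroup n) := by
  unfold GammaGroup; infer_instance

/-- The generator `aᵢ` of `Γ(n₁,…,n_k)`. -/
def gammaA {k : ℕ} (n : Fin k → ℕ) (i : Fin k) : GammaGroup n :=
  PresentedGroup.of (rels := gammaRels n) (Sum.inl i)

/-- The generator `b` of `Γ(n₁,…,n_k)`. -/
def gammaB {k : ℕ} (n : Fin k → ℕ) : GammaGroup n :=
  PresentedGroup.of (rels := gammaRels n) (Sum.inr ())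

/-- The solvable Baumslag–Solitar group `BS(1,n) = ⟨a, b ∣ a b a⁻¹ = bⁿ⟩`.
The generator `a` is `true` and `b` is `false`. -/
def BS (n : ℕ) : Type :=
  PresentedGroup {FreeGroup.of true * FreeGroup.of false * (FreeGroup.of true)⁻¹ *
    (FreeGroup.of false ^ n)⁻¹}

instance (n : ℕ) : Group (BS n) := by unfold BS; infer_instance

/-!
A quasi-isometry `Γ(n) → Γ(m)` is the same thing as a coarse inverse pair for left translations.
Coning off the relators `aᵢ⁻¹ b aᵢ = b ^ nᵢ` one at a time gives a Koszul resolution of `ℤ` by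
finite free `ℤ[Γ(n)]`-modules. It has length `k + 1`, one top cell, and its locally finite
top-dimensional real cycles are the functions on the cosets of `⟨b⟩` whose value at a coset is, in
each of the `k` directions, the sum of the values at its children. Coarse maps induce chain maps
that are equivariant up to finite ambiguity, so a coarse equivalence carries these cycles
bijectively to one another by a matrix with finitely many values and support near the graph. In
particular `k = l`.

A cycle can be collapsed below any coset, moving all its weight there onto a single ray, without
changing it elsewhere. Since cycles and their transfers are constant on the cosets of `⟨b⟩`, a
coarse equivalence must send each coset near a single coset. On such a coset, distances in the
`ℤ[1/N]`-coordinate scale by the character `modulus : aᵢ ↦ nᵢ`, and comparing scales along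
conjugates of `b` shows that the coarse equivalence changes `modulus` by at most a bounded factor.

The character `modulus` is itself a cycle. Its transfer to `Γ(m)` has bounded density with respect
to the character of `Γ(m)`, and is, up to finitely many factors, a product of powers of the `nᵢ`.
As the density at a coset is the average of the densities at its children, near the supremum of
the density it is almost constant along `a_j`, and the pigeonhole principle gives a relation
`m_j ^ d = ∏ nᵢ ^ fᵢ` with `d > 0`. By symmetry and coprimality, each `nᵢ` is a rational power
of exactly one `m_j`. Conversely, replacing `nᵢ` by `nᵢ ^ s` passes to a subgroup of finite index.
-/

/-! ### Coarse equivalences of groups -/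

section Coarse

open scoped Pointwise

variable {G H K X Y : Type*} [Group G] [Group H] [Group K]

/-- A map of groups is bornologous if it is uniformly expansive for the coarse structures given by
left translation: bounded displacements `x⁻¹ * y` go to bounded displacements, where bounded sets
are the finite ones. -/
def Bornologous (F : G → H) : Prop :=
  ∀ E : Set G, E.Finite → ∃ E' : Set H, E'.Finite ∧ ∀ x y, x⁻¹ * y ∈ E → (F x)⁻¹ * F y ∈ E'

/-- Two maps into a group are close if they differ by right multiplication by elements of a finite
set. -/
def CoarselyClose (F F' : X → H) : Prop :=
  ∃ E : Set H, E.Finite ∧ ∀ x, (F x)⁻¹ * F' x ∈ E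

/-- `F` and `F'` are mutually inverse coarse equivalences. -/
structure IsCoarseInverse (F : G → H) (F' : H → G) : Prop where
  bornologous : Bornologous F
  bornologous_inv : Bornologous F'
  left : CoarselyClose id (F' ∘ F)
  right : CoarselyClose id (F ∘ F')

/-- Coarse equivalence of groups. For finitely generated groups this is quasi-isometry, but it does
not mention generating sets. -/
def CoarselyEquivalent (G H : Type*) [Group G] [Group H] : Prop :=
  ∃ (F : G → H) (F' : H → G), IsCoarseInverse F F'

lemma Bornologous.id : Bornologous (id : G → G) := fun E hE => ⟨E, hE, fun _ _ h => h⟩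

lemma Bornologous.comp {F' : H → K} {F : G → H} (hF' : Bornologous F') (hF : Bornologous F) :
    Bornologous (F' ∘ F) := by
  intro E hE
  obtain ⟨E₁, hE₁, h₁⟩ := hF E hE
  obtain ⟨E₂, hE₂, h₂⟩ := hF' E₁ hE₁
  exact ⟨E₂, hE₂, fun x y hxy => h₂ _ _ (h₁ _ _ hxy)⟩

namespace CoarselyClose

lemma trans {F F' F'' : X → H} (h : CoarselyClose F F') (h' : CoarselyClose F' F'') :
    CoarselyClose F F'' := by
  obtain ⟨E, hE, h⟩ := h
  obtain ⟨E', hE', h'⟩ := h'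
  refine ⟨E * E', hE.mul hE', fun x => ?_⟩
  simpa [mul_assoc] using Set.mul_mem_mul (h x) (h' x)

lemma comp_left {F F' : X → H} (h : CoarselyClose F F') {f : H → K} (hf : Bornologous f) :
    CoarselyClose (f ∘ F) (f ∘ F') := by
  obtain ⟨E, hE, h⟩ := h
  obtain ⟨E', hE', h'⟩ := hf E hE
  exact ⟨E', hE', fun x => h' _ _ (h x)⟩

lemma comp_right {F F' : X → H} (h : CoarselyClose F F') (f : Y → X) :
    CoarselyClose (F ∘ f) (F' ∘ f) := by
  obtain ⟨E, hE, h⟩ := h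
  exact ⟨E, hE, fun x => h _⟩

end CoarselyClose

namespace IsCoarseInverse

variable {F : G → H} {F' : H → G}

lemma symm (h : IsCoarseInverse F F') : IsCoarseInverse F' F :=
  ⟨h.bornologous_inv, h.bornologous, h.right, h.left⟩

lemma comp {f : H → K} {f' : K → H} (h' : IsCoarseInverse f f') (h : IsCoarseInverse F F') :
    IsCoarseInverse (f ∘ F) (F' ∘ f') where
  bornologous := h'.bornologous.comp h.bornologous
  bornologous_inv := h.bornologous_inv.comp h'.bornologous_inv
  left := h.left.trans ((h'.left.comp_right F).comp_left h.bornologous_inv)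
  right := h'.right.trans ((h.right.comp_right f').comp_left h'.bornologous)

lemma exists_finite_displacement (h : IsCoarseInverse F F') {E : Set H} (hE : E.Finite) :
    ∃ E' : Set G, E'.Finite ∧ ∀ x y, (F x)⁻¹ * F y ∈ E → x⁻¹ * y ∈ E' := by
  obtain ⟨E₁, hE₁, h₁⟩ := h.bornologous_inv E hE
  obtain ⟨E₂, hE₂, h₂⟩ := h.left
  refine ⟨E₂ * E₁ * E₂⁻¹, (hE₂.mul hE₁).mul hE₂.inv, fun x y hxy => ?_⟩
  simpa [mul_assoc] using Set.mul_mem_mul (Set.mul_mem_mul (h₂ x) (h₁ _ _ hxy))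
    (Set.inv_mem_inv.2 (h₂ y))

lemma finite_fiber (h : IsCoarseInverse F F') (y : H) : (F ⁻¹' {y}).Finite := by
  obtain ⟨E, hE, hE'⟩ := h.exists_finite_displacement (Set.finite_singleton (1 : H))
  rcases (F ⁻¹' {y}).eq_empty_or_nonempty with h₀ | ⟨x₀, hx₀⟩
  · simp [h₀]
  · refine (hE.image (x₀ * ·)).subset fun x hx => ⟨x₀⁻¹ * x, hE' _ _ ?_, by simp⟩
    have hxy : F x = y := hx
    have hx₀y : F x₀ = y := hx₀
    simp [hxy, hx₀y]

end IsCoarseInverse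

lemma CoarselyEquivalent.symm (h : CoarselyEquivalent G H) : CoarselyEquivalent H G := by
  obtain ⟨F, F', h⟩ := h
  exact ⟨F', F, h.symm⟩

lemma CoarselyEquivalent.trans (h : CoarselyEquivalent G H) (h' : CoarselyEquivalent H K) :
    CoarselyEquivalent G K := by
  obtain ⟨F, F', h⟩ := h
  obtain ⟨f, f', h'⟩ := h'
  exact ⟨f ∘ F, F' ∘ f', h'.comp h⟩

end Coarse

/-! ### Word metrics and quasi-isometries -/

section WordMetric

open scoped Pointwise

variable {G H X : Type*} [Group G] [Group H]

lemma wordDist_eq_wordDist_one (S : Set G) (g h : G) :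
    wordDist S g h = wordDist S 1 (g⁻¹ * h) := by
  simp [wordDist]

lemma wordDist_mul_prod_le (S : Set G) (g : G) {L : List G} (hL : ∀ x ∈ L, x ∈ S ∨ x⁻¹ ∈ S) :
    wordDist S g (g * L.prod) ≤ L.length := by
  refine csInf_le ⟨0, ?_⟩ ⟨L, hL, by simp, rfl⟩
  rintro r ⟨L, _, _, rfl⟩
  positivity

section Generating

variable {S : Set G} (hS : Subgroup.closure S = ⊤)
include hS

lemma exists_list_wordDist_eq (g h : G) :
    ∃ L : List G, (∀ x ∈ L, x ∈ S ∨ x⁻¹ ∈ S) ∧ g * L.prod = h ∧ wordDist S g h = L.length := by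
  classical
  have hmem : g⁻¹ * h ∈ (Subgroup.closure S).toSubmonoid := hS ▸ Subgroup.mem_top _
  rw [Subgroup.closure_toSubmonoid] at hmem
  obtain ⟨L₀, hL₀, hprod₀⟩ := Submonoid.exists_list_of_mem_closure hmem
  have hex : ∃ d : ℕ, ∃ L : List G, (∀ x ∈ L, x ∈ S ∨ x⁻¹ ∈ S) ∧ L.prod = g⁻¹ * h ∧
      L.length = d := ⟨_, L₀, hL₀, hprod₀, rfl⟩
  obtain ⟨L, hL, hprod, hlen⟩ := Nat.find_spec hex
  refine ⟨L, hL, by simp [hprod], le_antisymm ?_ (le_csInf ⟨_, L, hL, hprod, rfl⟩ ?_)⟩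
  · simpa [hprod] using wordDist_mul_prod_le S g hL
  · rintro r ⟨L', hL', hprod', rfl⟩
    rw [hlen]
    exact_mod_cast Nat.find_min' hex ⟨L', hL', hprod', rfl⟩

lemma wordDist_nonneg (g h : G) : 0 ≤ wordDist S g h := by
  obtain ⟨L, _, _, hlen⟩ := exists_list_wordDist_eq hS g h
  rw [hlen]
  positivity

lemma wordDist_triangle (g h x : G) : wordDist S g x ≤ wordDist S g h + wordDist S h x := by
  obtain ⟨L, hL, rfl, hlen⟩ := exists_list_wordDist_eq hS g h
  obtain ⟨L', hL', rfl, hlen'⟩ := exists_list_wordDist_eq hS (g * L.prod) x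
  have hLL' : ∀ x ∈ L ++ L', x ∈ S ∨ x⁻¹ ∈ S := fun x hx =>
    (List.mem_append.1 hx).elim (hL x) (hL' x)
  rw [hlen, hlen', mul_assoc]
  simpa using wordDist_mul_prod_le S g hLL'

lemma wordDist_comm (g h : G) : wordDist S g h = wordDist S h g := by
  suffices hle : ∀ g h : G, wordDist S h g ≤ wordDist S g h from le_antisymm (hle _ _) (hle _ _)
  intro g h
  obtain ⟨L, hL, rfl, hlen⟩ := exists_list_wordDist_eq hS g h
  have hinv : ∀ x ∈ (L.map (·⁻¹)).reverse, x ∈ S ∨ x⁻¹ ∈ S := by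
    intro x hx
    obtain ⟨y, hy, rfl⟩ : ∃ y ∈ L, y⁻¹ = x := by simpa using hx
    simpa using (hL y hy).symm
  simpa [hlen, ← List.prod_inv_reverse] using wordDist_mul_prod_le S (g * L.prod) hinv

lemma finite_setOf_wordDist_one_le (hfin : S.Finite) (R : ℝ) :
    {g : G | wordDist S 1 g ≤ R}.Finite := by
  have : Finite (S ∪ S⁻¹ : Set G) := (hfin.union hfin.inv).to_subtype
  refine ((List.finite_length_le (S ∪ S⁻¹ : Set G) ⌊R⌋₊).image
    fun L => (L.map Subtype.val).prod).subset fun g hg => ?_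
  obtain ⟨L, hL, hprod, hlen⟩ := exists_list_wordDist_eq hS 1 g
  lift L to List (S ∪ S⁻¹ : Set G) using hL
  refine ⟨L, Nat.le_floor ?_, by simpa using hprod⟩
  rw [Set.mem_ofPred_eq, hlen] at hg
  simpa using hg

end Generating

lemma exists_wordDist_one_le (S : Set G) {E : Set G} (hE : E.Finite) :
    ∃ M : ℝ, 0 ≤ M ∧ ∀ g ∈ E, wordDist S 1 g ≤ M := by
  obtain ⟨M, hM⟩ := (hE.image (wordDist S 1)).bddAbove
  exact ⟨max M 0, le_max_right _ _, fun g hg => le_max_of_le_left (hM ⟨g, hg, rfl⟩)⟩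

lemma bornologous_of_wordDist_le {S : Set G} {T : Set H} (hTfin : T.Finite)
    (hT : Subgroup.closure T = ⊤) {F : G → H} {A B : ℝ} (hA : 0 ≤ A)
    (hF : ∀ x y, wordDist T (F x) (F y) ≤ A * wordDist S x y + B) : Bornologous F := by
  intro E hE
  obtain ⟨M, -, hM⟩ := exists_wordDist_one_le S hE
  refine ⟨_, finite_setOf_wordDist_one_le hT hTfin (A * M + B), fun x y hxy => ?_⟩
  have hxy' : wordDist S x y ≤ M := by simpa [wordDist_eq_wordDist_one S x y] using hM _ hxy
  calc wordDist T 1 ((F x)⁻¹ * F y) = wordDist T (F x) (F y) :=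
        (wordDist_eq_wordDist_one T _ _).symm
    _ ≤ A * wordDist S x y + B := hF x y
    _ ≤ A * M + B := by gcongr

lemma Bornologous.exists_wordDist_le {F : G → H} (hF : Bornologous F) {S : Set G}
    (hSfin : S.Finite) (hS : Subgroup.closure S = ⊤) {T : Set H} (hT : Subgroup.closure T = ⊤) :
    ∃ M : ℝ, 0 ≤ M ∧ ∀ x y, wordDist T (F x) (F y) ≤ M * wordDist S x y := by
  obtain ⟨E, hE, hFE⟩ := hF (S ∪ S⁻¹) (hSfin.union hSfin.inv)
  obtain ⟨M, hM0, hM⟩ := exists_wordDist_one_le T hE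
  have along_word : ∀ L : List G, (∀ x ∈ L, x ∈ S ∨ x⁻¹ ∈ S) → ∀ x,
      wordDist T (F x) (F (x * L.prod)) ≤ M * L.length := by
    intro L
    induction L with
    | nil => exact fun _ x => by simpa using wordDist_mul_prod_le T (F x) (L := []) (by simp)
    | cons s L ih =>
      intro hL x
      have first : wordDist T (F x) (F (x * s)) ≤ M := by
        rw [wordDist_eq_wordDist_one]
        exact hM _ (hFE x (x * s) (by simpa using hL s (by simp)))
      have rest := ih (fun z hz => hL z (List.mem_cons_of_mem _ hz)) (x * s)
      have := wordDist_triangle hT (F x) (F (x * s)) (F (x * s * L.prod))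
      rw [List.prod_cons, ← mul_assoc, List.length_cons]
      push_cast
      linarith
  refine ⟨M, hM0, fun x y => ?_⟩
  obtain ⟨L, hL, rfl, hlen⟩ := exists_list_wordDist_eq hS x y
  exact hlen ▸ along_word L hL x

lemma coarselyClose_of_wordDist_le {T : Set H} (hTfin : T.Finite) (hT : Subgroup.closure T = ⊤)
    {F F' : X → H} {C : ℝ} (h : ∀ x, wordDist T (F x) (F' x) ≤ C) : CoarselyClose F F' :=
  ⟨_, finite_setOf_wordDist_one_le hT hTfin C, fun x =>
    (wordDist_eq_wordDist_one T _ _).symm.trans_le (h x)⟩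

lemma CoarselyClose.exists_wordDist_le {F F' : X → H} (h : CoarselyClose F F') (T : Set H) :
    ∃ C : ℝ, 0 ≤ C ∧ ∀ x, wordDist T (F x) (F' x) ≤ C := by
  obtain ⟨E, hE, h⟩ := h
  obtain ⟨C, hC0, hC⟩ := exists_wordDist_one_le T hE
  exact ⟨C, hC0, fun x => (wordDist_eq_wordDist_one T _ _).trans_le (hC _ (h x))⟩

lemma QuasiIsometricGroups.coarselyEquivalent (h : QuasiIsometricGroups G H) :
    CoarselyEquivalent G H := by
  obtain ⟨S, T, hS, hT, K, C, f, hK, -, hlower, hupper, hsurj⟩ := h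
  choose f' hf' using hsurj
  have hK0 : 0 < K := zero_lt_one.trans_le hK
  have lower (x y : G) :
      wordDist (S : Set G) x y ≤ K * (wordDist (T : Set H) (f x) (f y) + C) := by
    have := hlower x y
    rw [sub_le_iff_le_add, div_le_iff₀ hK0] at this
    linarith
  refine ⟨f, f', ?_, ?_, ?_, ?_⟩
  · exact bornologous_of_wordDist_le T.finite_toSet hT hK0.le hupper
  · refine bornologous_of_wordDist_le (S := (T : Set H)) (B := K * (3 * C)) S.finite_toSet hS hK0.le
      fun x y => (lower _ _).trans ?_
    have h₁ := wordDist_triangle hT (f (f' x)) x (f (f' y))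
    have h₂ := wordDist_triangle hT x y (f (f' y))
    rw [← mul_add]
    refine mul_le_mul_of_nonneg_left ?_ hK0.le
    linarith [hf' x, hf' y, wordDist_comm hT y (f (f' y))]
  · refine coarselyClose_of_wordDist_le S.finite_toSet hS (C := K * (C + C)) fun x => ?_
    refine (lower _ _).trans ?_
    gcongr
    exact (wordDist_comm hT _ _).trans_le (hf' (f x))
  · exact coarselyClose_of_wordDist_le T.finite_toSet hT
      fun y => (wordDist_comm hT _ _).trans_le (hf' y)

lemma CoarselyEquivalent.quasiIsometricGroups (h : CoarselyEquivalent G H) {S : Finset G}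
    {T : Finset H} (hS : Subgroup.closure (S : Set G) = ⊤)
    (hT : Subgroup.closure (T : Set H) = ⊤) : QuasiIsometricGroups G H := by
  obtain ⟨F, F', h⟩ := h
  obtain ⟨M, hM0, hM⟩ := h.bornologous.exists_wordDist_le S.finite_toSet hS hT
  obtain ⟨M', hM0', hM'⟩ := h.bornologous_inv.exists_wordDist_le T.finite_toSet hT hS
  obtain ⟨D, hD0, hD⟩ := h.left.exists_wordDist_le (S : Set G)
  obtain ⟨D', hD0', hD'⟩ := h.right.exists_wordDist_le (T : Set H)
  have lower (x y : G) :
      wordDist (S : Set G) x y ≤ M' * wordDist (T : Set H) (F x) (F y) + 2 * D := by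
    have h₁ := wordDist_triangle hS x (F' (F x)) y
    have h₂ := wordDist_triangle hS (F' (F x)) (F' (F y)) y
    have h₃ := wordDist_comm hS (F' (F y)) y
    have hx : wordDist (S : Set G) x (F' (F x)) ≤ D := hD x
    have hy : wordDist (S : Set G) y (F' (F y)) ≤ D := hD y
    linarith [hM' (F x) (F y)]
  refine ⟨S, T, hS, hT, 1 + M + M', 2 * D + D', F, by linarith, by linarith, ?_, ?_, ?_⟩
  · intro x y
    have hT0 := wordDist_nonneg hT (F x) (F y)
    rw [sub_le_iff_le_add, div_le_iff₀ (by linarith)]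
    calc wordDist (S : Set G) x y ≤ M' * wordDist (T : Set H) (F x) (F y) + 2 * D := lower x y
      _ ≤ (1 + M + M') * wordDist (T : Set H) (F x) (F y) + (1 + M + M') * (2 * D + D') := by
          refine add_le_add (by gcongr; linarith) ?_
          nlinarith [mul_nonneg (add_nonneg hM0 hM0') hD0, mul_nonneg (add_nonneg hM0 hM0') hD0']
      _ = _ := by ring
  · intro x y
    have hS0 := wordDist_nonneg hS x y
    nlinarith [hM x y, mul_nonneg hM0' hS0]
  · intro y
    have hy : wordDist (T : Set H) y (F (F' y)) ≤ D' := hD' y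
    exact ⟨F' y, by linarith [wordDist_comm hT (F (F' y)) y]⟩

end WordMetric

namespace GammaGroup

/-! ### Relations and homomorphisms -/

section Relations

variable {k : ℕ} (n : Fin k → ℕ)

lemma commute_gammaA (i j : Fin k) : Commute (gammaA n i) (gammaA n j) := by
  rcases eq_or_ne i j with rfl | hij
  · exact Commute.refl _
  have hrel := PresentedGroup.mk_eq_one_iff.2 (Subgroup.subset_normalClosure
    (show _ ∈ gammaRels n from Or.inr ⟨i, j, hij, rfl⟩))
  simp only [map_mul, map_inv] at hrel
  exact mul_inv_eq_iff_eq_mul.1 (mul_inv_eq_one.1 hrel)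

lemma conj_gammaB (i : Fin k) :
    (gammaA n i)⁻¹ * gammaB n * gammaA n i = gammaB n ^ n i := by
  have hrel := PresentedGroup.mk_eq_one_iff.2 (Subgroup.subset_normalClosure
    (show _ ∈ gammaRels n from Or.inl ⟨i, rfl⟩))
  simp only [map_mul, map_inv, map_pow] at hrel
  exact mul_inv_eq_one.1 hrel

lemma semiconjBy_gammaA (i : Fin k) : SemiconjBy (gammaA n i) (gammaB n ^ n i) (gammaB n) := by
  rw [SemiconjBy, ← conj_gammaB]
  group

/-- The homomorphism out of `Γ(n₁,…,n_k)` with prescribed values on the generators. -/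
def lift {H : Type*} [Group H] (A : Fin k → H) (B : H) (hconj : ∀ i, (A i)⁻¹ * B * A i = B ^ n i)
    (hcomm : ∀ i j, A i * A j = A j * A i) : GammaGroup n →* H :=
  PresentedGroup.toGroup (f := Sum.elim A fun _ => B) (by
    rintro r (⟨i, rfl⟩ | ⟨i, j, -, rfl⟩)
    · simp [hconj]
    · simp [hcomm i j])

section Lift

variable {n} {H : Type*} [Group H] {A : Fin k → H} {B : H}
  (hconj : ∀ i, (A i)⁻¹ * B * A i = B ^ n i) (hcomm : ∀ i j, A i * A j = A j * A i)

@[simp]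
lemma lift_gammaA (i : Fin k) : lift n A B hconj hcomm (gammaA n i) = A i :=
  PresentedGroup.toGroup.of _

@[simp]
lemma lift_gammaB : lift n A B hconj hcomm (gammaB n) = B :=
  PresentedGroup.toGroup.of _

end Lift

lemma closure_range_gammaA_union_gammaB :
    Subgroup.closure (Set.range (gammaA n) ∪ {gammaB n}) = ⊤ := by
  have hrange : Set.range (PresentedGroup.of (rels := gammaRels n)) =
      Set.range (gammaA n) ∪ {gammaB n} := by
    rw [← Set.range_const (ι := Unit), ← Set.Sum.elim_range]
    exact congrArg Set.range (funext fun x => by cases x <;> rfl)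
  rw [← hrange]
  exact PresentedGroup.closure_range_of _

variable {n} in
@[elab_as_elim]
lemma induction_left {P : GammaGroup n → Prop} (one : P 1)
    (gammaA_mul : ∀ i g, P g → P (gammaA n i * g))
    (inv_gammaA_mul : ∀ i g, P g → P ((gammaA n i)⁻¹ * g))
    (gammaB_zpow_mul : ∀ (j : ℤ) g, P g → P (gammaB n ^ j * g)) (g : GammaGroup n) : P g := by
  have hg : g ∈ Subgroup.closure (Set.range (gammaA n) ∪ {gammaB n}) := by
    rw [closure_range_gammaA_union_gammaB]
    exact Subgroup.mem_top g
  induction hg using Subgroup.closure_induction_left with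
  | one => exact one
  | mul_left x hx y _ ih =>
    rcases hx with ⟨i, rfl⟩ | rfl
    · exact gammaA_mul i y ih
    · simpa using gammaB_zpow_mul 1 y ih
  | inv_mul_cancel x hx y _ ih =>
    rcases hx with ⟨i, rfl⟩ | rfl
    · exact inv_gammaA_mul i y ih
    · simpa using gammaB_zpow_mul (-1) y ih

/-- The homomorphism `v ↦ ∏ i, aᵢ ^ vᵢ` onto the subgroup generated by the `aᵢ`. -/
noncomputable def aPow : (Fin k → Multiplicative ℤ) →* GammaGroup n :=
  MonoidHom.noncommPiCoprod (fun i => zpowersHom (GammaGroup n) (gammaA n i)) fun i j _ x y =>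
    show Commute (gammaA n i ^ x.toAdd) (gammaA n j ^ y.toAdd) from
      (commute_gammaA n i j).zpow_zpow _ _

@[simp]
lemma aPow_mulSingle (i : Fin k) (j : Multiplicative ℤ) :
    aPow n (Pi.mulSingle i j) = gammaA n i ^ j.toAdd :=
  (MonoidHom.noncommPiCoprod_mulSingle (fun i => zpowersHom (GammaGroup n) (gammaA n i)) i j).trans
    (zpowersHom_apply _ _ _)

variable {n} in
lemma exists_eq_aPow_mul_gammaB_zpow_mul_aPow (g : GammaGroup n) :
    ∃ (r s : Fin k → Multiplicative ℤ) (j : ℤ), g = aPow n r * gammaB n ^ j * aPow n s ∧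
      (∀ i, 0 ≤ (r i).toAdd) ∧ ∃ M : ℤ, SemiconjBy (aPow n r) (gammaB n ^ M) (gammaB n) := by
  induction g using induction_left with
  | one => exact ⟨1, 1, 0, by simp, by simp, 1, by simp⟩
  | gammaA_mul i g ih =>
    obtain ⟨r, s, j, rfl, hr, M, hM⟩ := ih
    refine ⟨Pi.mulSingle i (.ofAdd 1) * r, s, j, by simp [mul_assoc], fun i' => ?_, n i * M, ?_⟩
    · rcases eq_or_ne i' i with rfl | hi
      · simpa using add_nonneg zero_le_one (hr i')
      · simpa [hi] using hr i'
    · have hr : SemiconjBy (aPow n r) (gammaB n ^ (n i * M)) (gammaB n ^ n i) := by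
        simpa [mul_comm, zpow_mul] using hM.zpow_right (n i)
      simpa using (semiconjBy_gammaA n i).mul_left hr
  | inv_gammaA_mul i g ih =>
    obtain ⟨r, s, j, rfl, hr, hM⟩ := ih
    refine ⟨r, Pi.mulSingle i (.ofAdd (-1)) * s, n i * j, ?_, hr, hM⟩
    have hr : (gammaA n i)⁻¹ * aPow n r = aPow n r * (gammaA n i)⁻¹ := by
      simpa using (map_mul (aPow n) (Pi.mulSingle i (.ofAdd (-1))) r).symm.trans
        ((congrArg _ (mul_comm _ _)).trans (map_mul (aPow n) r _))
    have hb : (gammaA n i)⁻¹ * gammaB n ^ j = gammaB n ^ (n i * j : ℤ) * (gammaA n i)⁻¹ := by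
      rw [inv_mul_eq_iff_eq_mul, ← mul_assoc, eq_mul_inv_iff_mul_eq, zpow_mul, zpow_natCast]
      exact ((semiconjBy_gammaA n i).zpow_right j).symm
    rw [← mul_assoc, ← mul_assoc, hr, mul_assoc (aPow n r), hb]
    simp [mul_assoc]
  | gammaB_zpow_mul j' g ih =>
    obtain ⟨r, s, j, rfl, hr, M, hM⟩ := ih
    refine ⟨r, s, M * j' + j, ?_, hr, M, hM⟩
    have hb : gammaB n ^ j' * aPow n r = aPow n r * gammaB n ^ (M * j') := by
      rw [zpow_mul]
      exact ((hM.zpow_right j').eq).symm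
    rw [← mul_assoc, ← mul_assoc, hb, zpow_add]
    simp only [mul_assoc]

end Relations

/-! ### Coordinates -/

/-- A tuple of positive integers. -/
class PositiveTuple {k : ℕ} (n : Fin k → ℕ) : Prop where
  pos : ∀ i, 0 < n i

/-- A tuple of pairwise coprime integers at least `2`. -/
class AdmissibleTuple {k : ℕ} (n : Fin k → ℕ) : Prop where
  two_le : ∀ i, 2 ≤ n i
  coprime : Pairwise fun i j => (n i).Coprime (n j)

instance {k : ℕ} (n : Fin k → ℕ) [AdmissibleTuple n] : PositiveTuple n :=
  ⟨fun i => two_pos.trans_le (AdmissibleTuple.two_le i)⟩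

lemma PositiveTuple.cast_ne_zero {k : ℕ} {n : Fin k → ℕ} [PositiveTuple n] (i : Fin k) :
    (n i : ℚ) ≠ 0 :=
  Nat.cast_ne_zero.2 (PositiveTuple.pos i).ne'

section Coordinates

variable {k : ℕ} (n : Fin k → ℕ) [PositiveTuple n]

/-- The action of `ℤᵏ` on `ℚ` in which the `i`-th basis vector divides by `nᵢ`. -/
noncomputable def scaling : (Fin k → Multiplicative ℤ) →* MulAut (Multiplicative ℚ) :=
  ((MulAutMultiplicative ℚ).symm.toMonoidHom.comp AddAut.mulLeft).comp
    (∏ i, (zpowersHom ℚˣ (Units.mk0 (n i : ℚ) (PositiveTuple.cast_ne_zero i))⁻¹).comp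
      (Pi.evalMonoidHom _ i))

lemma toAdd_scaling (v : Fin k → Multiplicative ℤ) (q : Multiplicative ℚ) :
    (scaling n v q).toAdd = (∏ i, (n i : ℚ) ^ (v i).toAdd)⁻¹ * q.toAdd := by
  have hunit : ∀ u : ℚˣ, ((MulAutMultiplicative ℚ).symm (AddAut.mulLeft u) q).toAdd =
      u * q.toAdd := fun _ => rfl
  refine (hunit _).trans ?_
  simp [MonoidHom.finsetProd_apply]

lemma toAdd_scaling_mulSingle (i : Fin k) (q : Multiplicative ℚ) :
    (scaling n (Pi.mulSingle i (.ofAdd 1)) q).toAdd = (n i : ℚ)⁻¹ * q.toAdd := by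
  rw [toAdd_scaling, Finset.prod_eq_single i] <;> simp +contextual

/-- The homomorphism `Γ(n₁,…,n_k) → ℚ ⋊ ℤᵏ` with `aᵢ ↦ (0, eᵢ)` and `b ↦ (1, 0)`. -/
noncomputable def coords :
    GammaGroup n →* Multiplicative ℚ ⋊[scaling n] (Fin k → Multiplicative ℤ) :=
  lift n (fun i => SemidirectProduct.inr (Pi.mulSingle i (.ofAdd 1)))
    (SemidirectProduct.inl (.ofAdd 1))
    (fun i => by
      rw [mul_assoc, inv_mul_eq_iff_eq_mul, ← map_pow]
      ext : 1
      · apply Multiplicative.toAdd.injective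
        simp [toAdd_scaling_mulSingle, PositiveTuple.cast_ne_zero i, -map_pow]
      · simp [-map_pow])
    fun i j => by rw [← map_mul, ← map_mul, mul_comm]

variable {n}

/-- The exponents of the `aᵢ` in an element of `Γ(n₁,…,n_k)`. -/
noncomputable def exponent (g : GammaGroup n) (i : Fin k) : ℤ := ((coords n g).right i).toAdd

/-- The translation part of the affine action of `Γ(n₁,…,n_k)` on `ℚ` in which `aᵢ` is division by
`nᵢ` and `b` is translation by `1`. -/
noncomputable def translation (g : GammaGroup n) : ℚ := (coords n g).left.toAdd

/-- The homomorphism to the positive rationals with `aᵢ ↦ nᵢ` and `b ↦ 1`: the affine action of `g`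
on `ℚ` is `q ↦ translation g + (modulus g)⁻¹ * q`. -/
noncomputable def modulus (g : GammaGroup n) : ℚ := ∏ i, (n i : ℚ) ^ exponent g i

@[simp]
lemma exponent_one : exponent (1 : GammaGroup n) = 0 := by
  ext
  simp [exponent]

@[simp]
lemma exponent_mul (g h : GammaGroup n) : exponent (g * h) = exponent g + exponent h := by
  ext
  simp [exponent]

@[simp]
lemma exponent_inv (g : GammaGroup n) : exponent g⁻¹ = -exponent g := by
  ext
  simp [exponent]

lemma exponent_inv_mul (g h : GammaGroup n) : exponent (g⁻¹ * h) = exponent h - exponent g := by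
  simp [sub_eq_neg_add]

@[simp]
lemma exponent_pow (g : GammaGroup n) (j : ℕ) : exponent (g ^ j) = j • exponent g := by
  induction j with
  | zero => simp
  | succ j ih => rw [pow_succ, exponent_mul, ih, succ_nsmul]

@[simp]
lemma exponent_gammaA (i : Fin k) : exponent (gammaA n i) = Pi.single i 1 := by
  ext j
  rcases eq_or_ne j i with rfl | hij
  · simp [exponent, coords]
  · simp [exponent, coords, hij]

lemma coords_gammaB_zpow (j : ℤ) :
    coords n (gammaB n ^ j) = SemidirectProduct.inl (.ofAdd (j : ℚ)) := by
  rw [map_zpow, coords, lift_gammaB, ← map_zpow, ← ofAdd_zsmul, zsmul_one]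

@[simp]
lemma exponent_gammaB_zpow (j : ℤ) : exponent (gammaB n ^ j) = 0 := by
  ext
  simp [exponent, coords_gammaB_zpow]

@[simp]
lemma exponent_gammaB : exponent (gammaB n) = 0 := by
  simpa using exponent_gammaB_zpow (n := n) 1

lemma coords_aPow (v : Fin k → Multiplicative ℤ) : coords n (aPow n v) = SemidirectProduct.inr v :=
  DFunLike.congr_fun (MonoidHom.pi_ext (f := (coords n).comp (aPow n)) fun i j => by
    have hj : Pi.mulSingle i j =
        (Pi.mulSingle i (.ofAdd 1) : Fin k → Multiplicative ℤ) ^ j.toAdd := by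
      rw [← Pi.mulSingle_zpow, ← ofAdd_zsmul, zsmul_one]
      rfl
    rw [MonoidHom.comp_apply, aPow_mulSingle, map_zpow, coords, lift_gammaA, ← map_zpow, ← hj]) v

@[simp]
lemma exponent_aPow (v : Fin k → Multiplicative ℤ) (i : Fin k) :
    exponent (aPow n v) i = (v i).toAdd := by
  simp [exponent, coords_aPow]

lemma modulus_pos (g : GammaGroup n) : 0 < modulus g :=
  Finset.prod_pos fun i _ => zpow_pos (Nat.cast_pos.2 (PositiveTuple.pos i)) _

@[simp]
lemma modulus_one : modulus (1 : GammaGroup n) = 1 := by simp [modulus]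

@[simp]
lemma modulus_mul (g h : GammaGroup n) : modulus (g * h) = modulus g * modulus h := by
  simp [modulus, zpow_add₀ (PositiveTuple.cast_ne_zero _), Finset.prod_mul_distrib]

@[simp]
lemma modulus_inv (g : GammaGroup n) : modulus g⁻¹ = (modulus g)⁻¹ := by
  simp [modulus]

@[simp]
lemma modulus_pow (g : GammaGroup n) (r : ℕ) : modulus (g ^ r) = modulus g ^ r := by
  induction r with
  | zero => simp
  | succ r ih => rw [pow_succ, modulus_mul, ih, pow_succ]

@[simp]
lemma modulus_gammaA (i : Fin k) : modulus (gammaA n i) = n i := by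
  rw [modulus, Finset.prod_eq_single i] <;> simp +contextual

@[simp]
lemma modulus_gammaB_zpow (j : ℤ) : modulus (gammaB n ^ j) = 1 := by simp [modulus]

@[simp]
lemma modulus_gammaB : modulus (gammaB n) = 1 := by simp [modulus]

lemma modulus_aPow (v : Fin k → Multiplicative ℤ) :
    modulus (aPow n v) = ∏ i, (n i : ℚ) ^ (v i).toAdd := by
  simp [modulus]

@[simp]
lemma translation_one : translation (1 : GammaGroup n) = 0 := by simp [translation]

lemma translation_mul (g h : GammaGroup n) :
    translation (g * h) = translation g + (modulus g)⁻¹ * translation h := by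
  simp [translation, toAdd_scaling, modulus, exponent]

lemma translation_inv (g : GammaGroup n) : translation g⁻¹ = -modulus g * translation g := by
  have := translation_mul g⁻¹ g
  rw [inv_mul_cancel, translation_one, modulus_inv, inv_inv] at this
  linarith

lemma translation_inv_mul (g h : GammaGroup n) :
    translation (g⁻¹ * h) = modulus g * (translation h - translation g) := by
  rw [translation_mul, translation_inv, modulus_inv, inv_inv]
  ring

@[simp]
lemma translation_aPow (v : Fin k → Multiplicative ℤ) : translation (aPow n v) = 0 := by
  simp [translation, coords_aPow]

@[simp]
lemma translation_gammaA_zpow (i : Fin k) (j : ℤ) : translation (gammaA n i ^ j) = 0 := by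
  simpa using translation_aPow (n := n) (Pi.mulSingle i (.ofAdd j))

@[simp]
lemma translation_gammaA (i : Fin k) : translation (gammaA n i) = 0 := by
  simpa using translation_gammaA_zpow (n := n) i 1

@[simp]
lemma translation_gammaB_zpow (j : ℤ) : translation (gammaB n ^ j) = j := by
  simp [translation, coords_gammaB_zpow]

@[simp]
lemma translation_gammaB : translation (gammaB n) = 1 := by
  simpa using translation_gammaB_zpow (n := n) 1

lemma translation_aPow_mul_gammaB_zpow_mul_aPow (r s : Fin k → Multiplicative ℤ) (j : ℤ) :
    translation (aPow n r * gammaB n ^ j * aPow n s) = (modulus (aPow n r))⁻¹ * j := by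
  simp [translation_mul]

lemma gammaB_zpow_injective : Function.Injective (gammaB n ^ · : ℤ → GammaGroup n) := by
  intro i j h
  simpa using congrArg translation h

lemma eq_one_of_translation_eq_zero {g : GammaGroup n} (htrans : translation g = 0)
    (hexp : exponent g = 0) : g = 1 := by
  obtain ⟨r, s, j, rfl, -, -⟩ := exists_eq_aPow_mul_gammaB_zpow_mul_aPow g
  obtain rfl : j = 0 := by
    simpa [translation_aPow_mul_gammaB_zpow_mul_aPow, (modulus_pos _).ne'] using htrans
  have hrs : r * s = 1 := by
    ext i
    simpa using congrFun hexp i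
  simpa [hrs] using (map_mul (aPow n) r s).symm

lemma ext_translation_exponent {g h : GammaGroup n} (htrans : translation g = translation h)
    (hexp : exponent g = exponent h) : g = h :=
  inv_mul_eq_one.1 <| eq_one_of_translation_eq_zero (by simp [translation_inv_mul, htrans])
    (by simp [hexp])

lemma exists_translation_mul_pow_eq (g : GammaGroup n) :
    ∃ (R : ℕ) (z : ℤ), translation g * ((∏ i, n i : ℕ) : ℚ) ^ R = z := by
  obtain ⟨r, s, j, rfl, hr, -⟩ := exists_eq_aPow_mul_gammaB_zpow_mul_aPow g
  lift (fun i => (r i).toAdd) to Fin k → ℕ using hr with r' hr'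
  have hdvd : ∏ i, n i ^ r' i ∣ (∏ i, n i) ^ ∑ i, r' i := by
    rw [← Finset.prod_pow]
    exact Finset.prod_dvd_prod_of_dvd _ _ fun i _ =>
      pow_dvd_pow _ (Finset.single_le_sum (fun _ _ => Nat.zero_le _) (Finset.mem_univ i))
  obtain ⟨c, hc⟩ := hdvd
  have hmod : modulus (aPow n r) = (∏ i, n i ^ r' i : ℕ) := by
    rw [modulus_aPow]
    push_cast
    exact Finset.prod_congr rfl fun i _ => by rw [← congrFun hr' i, zpow_natCast]
  refine ⟨∑ i, r' i, j * c, ?_⟩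
  rw [← Nat.cast_pow, hc, Nat.cast_mul, ← hmod]
  have := (modulus_pos (aPow n r)).ne'
  rw [translation_aPow_mul_gammaB_zpow_mul_aPow]
  push_cast
  field_simp

lemma exists_translation_eq_exponent_eq {x : ℚ} {R : ℕ} {z : ℤ}
    (hx : x * ((∏ i, n i : ℕ) : ℚ) ^ R = z) (v : Fin k → ℤ) :
    ∃ g : GammaGroup n, translation g = x ∧ exponent g = v := by
  have hmod : modulus (aPow n fun _ => .ofAdd (R : ℤ)) = ((∏ i, n i : ℕ) : ℚ) ^ R := by
    simp [modulus_aPow, Finset.prod_pow]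
  refine ⟨aPow n (fun _ => .ofAdd (R : ℤ)) * gammaB n ^ z * aPow n fun i => .ofAdd (v i - R),
    ?_, ?_⟩
  · have := (modulus_pos (aPow n fun _ => .ofAdd (R : ℤ))).ne'
    rw [translation_aPow_mul_gammaB_zpow_mul_aPow, ← hx, ← hmod]
    field_simp
  · ext i
    simp

lemma finite_setOf_exponent_le_translation_mem (r : ℕ) :
    {g : GammaGroup n | (∀ i, |exponent g i| ≤ r) ∧ translation g ∈ Set.Ico 0 1 ∧
      ∃ z : ℤ, translation g * ((∏ i, n i : ℕ) : ℚ) ^ r = z}.Finite := by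
  set N : ℚ := ((∏ i, n i : ℕ) : ℚ) ^ r
  have hN : 0 < N := by
    have := Finset.prod_pos fun i (_ : i ∈ Finset.univ) => PositiveTuple.pos (n := n) i
    positivity
  refine Set.Finite.of_finite_image (f := fun g => (⌊translation g * N⌋, exponent g))
    (((Set.finite_Icc 0 ⌊N⌋).prod
      (Set.finite_Icc (fun _ => (-r : ℤ)) (fun _ => (r : ℤ)))).subset ?_) ?_
  · rintro _ ⟨g, ⟨hexp, ⟨h₀, h₁⟩, -⟩, rfl⟩
    refine ⟨⟨by positivity, Int.floor_le_floor ?_⟩,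
      fun i => (abs_le.1 (hexp i)).1, fun i => (abs_le.1 (hexp i)).2⟩
    exact mul_le_of_le_one_left hN.le h₁.le
  · rintro g ⟨-, -, z, hz⟩ g' ⟨-, -, z', hz'⟩ heq
    simp only [hz, hz', Int.floor_intCast, Prod.mk.injEq] at heq
    exact ext_translation_exponent (mul_right_cancel₀ hN.ne' (by rw [hz, hz', heq.1])) heq.2

end Coordinates

end GammaGroup

/-! ### Rational powers give quasi-isometric groups -/

section Embedding

open scoped Pointwise

lemma CoarselyEquivalent.of_injective {G H : Type*} [Group G] [Group H] (φ : G →* H)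
    (hφ : Function.Injective φ) {E : Set H} (hE : E.Finite) (h : ∀ y, ∃ x, ∃ e ∈ E, y = φ x * e) :
    CoarselyEquivalent G H := by
  choose f' e he hy using h
  have hy' : ∀ y, φ (f' y) = y * (e y)⁻¹ := fun y => eq_mul_inv_of_mul_eq (hy y).symm
  refine ⟨φ, f', ?_, ?_, ?_, ?_⟩
  · exact fun D hD => ⟨φ '' D, hD.image _, fun x y hxy => ⟨_, hxy, by simp⟩⟩
  · refine fun D hD =>
      ⟨φ ⁻¹' (E * D * E⁻¹), ((hE.mul hD).mul hE.inv).preimage hφ.injOn, fun x y hxy => ?_⟩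
    have := Set.mul_mem_mul (Set.mul_mem_mul (he x) hxy) (Set.inv_mem_inv.2 (he y))
    simpa [hy', mul_assoc] using this
  · exact ⟨φ ⁻¹' E⁻¹, hE.inv.preimage hφ.injOn, fun x => by simpa [hy'] using he (φ x)⟩
  · exact ⟨E⁻¹, hE.inv, fun y => by simpa [hy'] using he y⟩

end Embedding

namespace GammaGroup

section Powers

variable {k l : ℕ} {p : Fin k → ℕ} {m : Fin l → ℕ}

lemma conj_gammaB_of_pow (i : Fin l) (s : ℕ) :
    (gammaA m i ^ s)⁻¹ * gammaB m * gammaA m i ^ s = gammaB m ^ m i ^ s := by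
  have h : SemiconjBy (gammaA m i ^ s) (gammaB m ^ m i ^ s) (gammaB m) := by
    induction s with
    | zero => simp
    | succ s ih =>
      rw [pow_succ', pow_succ, pow_mul]
      exact (semiconjBy_gammaA m i).mul_left (ih.pow_right (m i))
  rw [mul_assoc, inv_mul_eq_iff_eq_mul, h.eq]

/-- The embedding `Γ(p₁,…,p_k) → Γ(m₁,…,m_k)` with `aᵢ ↦ a_{σ i} ^ sᵢ` and `b ↦ b`, where
`pᵢ = m_{σ i} ^ sᵢ`. -/
def powHom (σ : Fin k ≃ Fin l) (s : Fin k → ℕ) (hp : ∀ i, p i = m (σ i) ^ s i) :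
    GammaGroup p →* GammaGroup m :=
  lift p (fun i => gammaA m (σ i) ^ s i) (gammaB m)
    (fun i => by rw [hp, conj_gammaB_of_pow])
    fun i j => ((commute_gammaA m (σ i) (σ j)).pow_pow _ _).eq

variable [PositiveTuple p] [PositiveTuple m] {σ : Fin k ≃ Fin l} {s : Fin k → ℕ}
  (hp : ∀ i, p i = m (σ i) ^ s i)

lemma exponent_powHom (g : GammaGroup p) (i : Fin k) :
    exponent (powHom σ s hp g) (σ i) = s i * exponent g i := by
  have gen (j : Fin k) : exponent (powHom σ s hp (gammaA p j)) (σ i) =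
      s i * exponent (gammaA p j) i := by
    rcases eq_or_ne i j with rfl | hij
    · simp [powHom]
    · simp [powHom, hij]
  induction g using induction_left with
  | one => simp
  | gammaA_mul j g ih => simp only [map_mul, exponent_mul, Pi.add_apply, gen, ih, mul_add]
  | inv_gammaA_mul j g ih =>
    simp only [map_mul, map_inv, exponent_inv_mul, Pi.sub_apply, gen, ih, mul_sub]
  | gammaB_zpow_mul j g ih => simp [powHom, ← ih]

lemma modulus_powHom (g : GammaGroup p) : modulus (powHom σ s hp g) = modulus g := by
  rw [modulus, modulus, ← Equiv.prod_comp σ]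
  refine Finset.prod_congr rfl fun i _ => ?_
  rw [exponent_powHom, hp, zpow_mul, zpow_natCast, Nat.cast_pow]

lemma translation_powHom (g : GammaGroup p) : translation (powHom σ s hp g) = translation g := by
  have gen (j : Fin k) : translation (powHom σ s hp (gammaA p j)) = 0 := by
    simpa [powHom] using translation_gammaA_zpow (n := m) (σ j) (s j)
  induction g using induction_left with
  | one => simp
  | gammaA_mul j g ih => simp [translation_mul, modulus_powHom, gen, ih]
  | inv_gammaA_mul j g ih => simp [translation_inv_mul, modulus_powHom, gen, ih]
  | gammaB_zpow_mul j g ih =>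
    have hb : powHom σ s hp (gammaB p) = gammaB m := lift_gammaB _ _
    simp [translation_mul, hb, ih]

variable (hs : ∀ i, 0 < s i)
include hs

lemma powHom_injective : Function.Injective (powHom σ s hp) := by
  rw [injective_iff_map_eq_one]
  refine fun g hg => eq_one_of_translation_eq_zero ?_ (funext fun i => ?_)
  · rw [← translation_powHom hp, hg, translation_one]
  · simpa [hg, (hs i).ne'] using (exponent_powHom hp g i).symm

lemma exists_eq_powHom_mul_aPow (y : GammaGroup m) :
    ∃ x, y = powHom σ s hp x *
      aPow m fun j => .ofAdd (exponent y j % s (σ.symm j)) := by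
  obtain ⟨R, z, hz⟩ := exists_translation_mul_pow_eq y
  obtain ⟨c, hc⟩ : ∏ i, m i ∣ ∏ i, p i := by
    rw [← Equiv.prod_comp σ]
    exact Finset.prod_dvd_prod_of_dvd _ _ fun i _ => hp i ▸ dvd_pow_self _ (hs i).ne'
  have hx : translation y * ((∏ i, p i : ℕ) : ℚ) ^ R = (z * c ^ R : ℤ) := by
    rw [hc]
    push_cast at hz ⊢
    rw [mul_pow, ← mul_assoc, hz]
  obtain ⟨x, htrans, hexp⟩ :=
    exists_translation_eq_exponent_eq hx fun i => exponent y (σ i) / s i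
  refine ⟨x, ext_translation_exponent ?_ (funext fun j => ?_)⟩
  · simp [translation_mul, translation_powHom, htrans]
  · obtain ⟨i, rfl⟩ := σ.surjective j
    simp [exponent_powHom, hexp, Int.mul_ediv_add_emod]

include hp in
lemma coarselyEquivalent_of_eq_pow : CoarselyEquivalent (GammaGroup p) (GammaGroup m) := by
  refine .of_injective (powHom σ s hp) (powHom_injective hp hs)
    (E := (fun v => aPow m fun j => .ofAdd (v j)) ''
      Set.Icc (0 : Fin l → ℤ) fun j => s (σ.symm j)) ((Set.finite_Icc _ _).image _) fun y => ?_
  obtain ⟨x, hx⟩ := exists_eq_powHom_mul_aPow hp hs y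
  have hpos (j : Fin l) : (0 : ℤ) < s (σ.symm j) := Int.natCast_pos.2 (hs _)
  exact ⟨x, _, ⟨_, ⟨fun j => Int.emod_nonneg _ (hpos j).ne',
    fun j => (Int.emod_lt_of_pos _ (hpos j)).le⟩, rfl⟩, hx⟩

end Powers

lemma exists_finset_closure_eq_top {k : ℕ} (n : Fin k → ℕ) :
    ∃ S : Finset (GammaGroup n), Subgroup.closure (S : Set (GammaGroup n)) = ⊤ :=
  ⟨((Set.finite_range (gammaA n)).union (Set.finite_singleton (gammaB n))).toFinset, by
    rw [Set.Finite.coe_toFinset, closure_range_gammaA_union_gammaB]⟩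

theorem quasiIsometricGroups_of_pow_eq_pow {k l : ℕ} {n : Fin k → ℕ} {m : Fin l → ℕ}
    [PositiveTuple n] [PositiveTuple m]
    (h : ∃ σ : Fin k ≃ Fin l, ∀ i, ∃ s t : ℕ, 0 < s ∧ 0 < t ∧ n i ^ s = m (σ i) ^ t) :
    QuasiIsometricGroups (GammaGroup n) (GammaGroup m) := by
  obtain ⟨σ, h⟩ := h
  choose s t hs ht hst using h
  have : PositiveTuple fun i => n i ^ s i := ⟨fun i => pow_pos (PositiveTuple.pos i) _⟩
  have hn : CoarselyEquivalent (GammaGroup fun i => n i ^ s i) (GammaGroup n) :=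
    coarselyEquivalent_of_eq_pow (σ := Equiv.refl _) (fun _ => rfl) hs
  have hm : CoarselyEquivalent (GammaGroup fun i => n i ^ s i) (GammaGroup m) :=
    coarselyEquivalent_of_eq_pow hst ht
  obtain ⟨S, hS⟩ := exists_finset_closure_eq_top n
  obtain ⟨T, hT⟩ := exists_finset_closure_eq_top m
  exact (hn.symm.trans hm).quasiIsometricGroups hS hT

end GammaGroup

/-! ### Koszul complexes -/

/-- The submodule of chains, i.e. functions from cells to coefficients, supported on the cells of
degree `q`. -/
def homogeneousChains (A : Type*) [Ring A] {Cell : Type*} (deg : Cell → ℕ) (q : ℕ) :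
    Submodule A (Cell → A) where
  carrier := {c | ∀ σ, deg σ ≠ q → c σ = 0}
  add_mem' hc he σ hσ := by simp [hc σ hσ, he σ hσ]
  zero_mem' _ _ := rfl
  smul_mem' x c hc σ hσ := by simp [hc σ hσ]

section HomogeneousChains

variable {A Cell : Type*} [Ring A] [DecidableEq Cell] {deg : Cell → ℕ}

lemma single_mem_homogeneousChains {σ : Cell} {q : ℕ} (hσ : deg σ = q) (x : A) :
    Pi.single σ x ∈ homogeneousChains A deg q :=
  fun _ hτ => Pi.single_eq_of_ne (by rintro rfl; exact hτ hσ) _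

lemma eq_single_of_mem_homogeneousChains {q : ℕ} {c : Cell → A} {σ : Cell}
    (hc : c ∈ homogeneousChains A deg q) (hσ : ∀ τ, deg τ = q ↔ τ = σ) : c = Pi.single σ (c σ) := by
  ext τ
  obtain rfl | hτ := eq_or_ne τ σ
  · simp
  · rw [hc τ fun h => hτ ((hσ τ).1 h), Pi.single_eq_of_ne hτ]

end HomogeneousChains

/-- A finite complex of free left `A`-modules with a chosen basis of cells, having exactly one cell
in degree `0` and one in the top degree `dim`. Chains are functions from cells to `A`. -/
structure CellComplex (A : Type*) [Ring A] where
  Cell : Type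
  [fintypeCell : Fintype Cell]
  [decidableEqCell : DecidableEq Cell]
  deg : Cell → ℕ
  dim : ℕ
  top : Cell
  bot : Cell
  deg_le_dim : ∀ σ, deg σ ≤ dim
  deg_eq_dim_iff : ∀ σ, deg σ = dim ↔ σ = top
  deg_eq_zero_iff : ∀ σ, deg σ = 0 ↔ σ = bot
  d : (Cell → A) →ₗ[A] (Cell → A)
  d_d : ∀ c, d (d c) = 0
  d_apply_eq_zero : ∀ {q c}, c ∈ homogeneousChains A deg q → ∀ {σ}, deg σ + 1 ≠ q → d c σ = 0

attribute [instance] CellComplex.fintypeCell CellComplex.decidableEqCell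

namespace CellComplex

variable {A : Type*} [Ring A] (K : CellComplex A)

abbrev Chain : Type _ := K.Cell → A

abbrev chains (q : ℕ) : Submodule A K.Chain := homogeneousChains A K.deg q

variable {K}

lemma deg_top : K.deg K.top = K.dim := (K.deg_eq_dim_iff _).2 rfl

lemma deg_bot : K.deg K.bot = 0 := (K.deg_eq_zero_iff _).2 rfl

lemma d_mem_chains {q : ℕ} {c : K.Chain} (hc : c ∈ K.chains (q + 1)) : K.d c ∈ K.chains q :=
  fun _ hσ => K.d_apply_eq_zero hc (by simpa using hσ)

lemma d_eq_zero {c : K.Chain} (hc : c ∈ K.chains 0) : K.d c = 0 :=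
  funext fun _ => K.d_apply_eq_zero hc (Nat.succ_ne_zero _)

lemma eq_zero_of_dim_lt {q : ℕ} (hq : K.dim < q) {c : K.Chain} (hc : c ∈ K.chains q) : c = 0 :=
  funext fun σ => hc σ ((K.deg_le_dim σ).trans_lt hq).ne

variable (K) in
/-- `K` is a free resolution of the left module `A ⧸ J`: its homology vanishes in positive degrees,
and the boundaries in degree `0` are the multiples of the bottom cell by elements of `J`. -/
structure IsResolution (J : Submodule A A) : Prop where
  exists_d_eq : ∀ {q w}, w ∈ K.chains q → K.d w = 0 → (q = 0 → w K.bot ∈ J) →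
    ∃ v ∈ K.chains (q + 1), K.d v = w
  d_bot_mem : ∀ {v}, v ∈ K.chains 1 → K.d v K.bot ∈ J

section Cone

variable (φ : K.Chain →ₗ[A] K.Chain)

/-- The boundary map `(x, y) ↦ (d x + y - φ y, -d y)` of the mapping cone of `1 - φ`. -/
noncomputable def coneBoundary : (K.Cell ⊕ K.Cell → A) →ₗ[A] (K.Cell ⊕ K.Cell → A) :=
  (LinearEquiv.sumArrowLequivProdArrow _ _ A A).symm.toLinearMap ∘ₗ
    ((K.d ∘ₗ LinearMap.funLeft A A Sum.inl +
      (LinearMap.id - φ) ∘ₗ LinearMap.funLeft A A Sum.inr).prod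
        (-(K.d ∘ₗ LinearMap.funLeft A A Sum.inr)))

variable {φ}

lemma coneBoundary_apply (c : K.Cell ⊕ K.Cell → A) : coneBoundary φ c =
    Sum.elim (K.d (c ∘ Sum.inl) + (c ∘ Sum.inr - φ (c ∘ Sum.inr))) (-K.d (c ∘ Sum.inr)) :=
  rfl

lemma coneBoundary_sumElim (x y : K.Chain) :
    coneBoundary φ (Sum.elim x y) = Sum.elim (K.d x + (y - φ y)) (-K.d y) :=
  rfl

lemma comp_inl_mem_chains {q : ℕ} {c : K.Cell ⊕ K.Cell → A}
    (hc : c ∈ homogeneousChains A (Sum.elim K.deg (K.deg · + 1)) q) :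
    c ∘ Sum.inl ∈ K.chains q :=
  fun σ hσ => hc (Sum.inl σ) hσ

lemma comp_inr_mem_chains {q : ℕ} {c : K.Cell ⊕ K.Cell → A}
    (hc : c ∈ homogeneousChains A (Sum.elim K.deg (K.deg · + 1)) (q + 1)) :
    c ∘ Sum.inr ∈ K.chains q :=
  fun σ hσ => hc (Sum.inr σ) (by simpa using hσ)

lemma comp_inr_eq_zero {c : K.Cell ⊕ K.Cell → A}
    (hc : c ∈ homogeneousChains A (Sum.elim K.deg (K.deg · + 1)) 0) : c ∘ Sum.inr = 0 :=
  funext fun σ => hc (Sum.inr σ) (Nat.succ_ne_zero _)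

lemma sumElim_mem_chains {q : ℕ} {x y : K.Chain} (hx : x ∈ K.chains (q + 1)) (hy : y ∈ K.chains q) :
    Sum.elim x y ∈ homogeneousChains A (Sum.elim K.deg (K.deg · + 1)) (q + 1) := by
  rintro (σ | σ) hσ
  · exact hx σ hσ
  · exact hy σ (by simpa using hσ)

lemma coneBoundary_apply_eq_zero (hdeg : ∀ {q c}, c ∈ K.chains q → φ c ∈ K.chains q) {q : ℕ}
    {c : K.Cell ⊕ K.Cell → A} (hc : c ∈ homogeneousChains A (Sum.elim K.deg (K.deg · + 1)) q)
    {σ : K.Cell ⊕ K.Cell} (hσ : Sum.elim K.deg (K.deg · + 1) σ + 1 ≠ q) :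
    coneBoundary φ c σ = 0 := by
  have hl := comp_inl_mem_chains hc
  obtain _ | q := q
  · simp [coneBoundary_apply, comp_inr_eq_zero hc, d_eq_zero hl]
  · have hr := comp_inr_mem_chains hc
    obtain σ | σ := σ
    · have hd := K.d_apply_eq_zero hl hσ
      have hφ := (sub_mem hr (hdeg hr)) σ (by simpa using hσ)
      simp only [coneBoundary_apply, Sum.elim_inl, Pi.add_apply, hd, hφ, add_zero]
    · have hd := K.d_apply_eq_zero hr (σ := σ) (by simpa using hσ)
      simp [coneBoundary_apply, hd]

variable (K φ) in
/-- The mapping cone of `1 - φ`, for a chain endomorphism `φ` of degree `0`. -/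
noncomputable def cone (hd : ∀ c, K.d (φ c) = φ (K.d c))
    (hdeg : ∀ {q c}, c ∈ K.chains q → φ c ∈ K.chains q) : CellComplex A where
  Cell := K.Cell ⊕ K.Cell
  deg := Sum.elim K.deg (K.deg · + 1)
  dim := K.dim + 1
  top := Sum.inr K.top
  bot := Sum.inl K.bot
  deg_le_dim := by
    rintro (σ | σ)
    · exact (K.deg_le_dim σ).trans K.dim.le_succ
    · simpa using K.deg_le_dim σ
  deg_eq_dim_iff := by
    rintro (σ | σ)
    · simpa using ((K.deg_le_dim σ).trans_lt K.dim.lt_succ_self).ne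
    · simp [K.deg_eq_dim_iff]
  deg_eq_zero_iff := by rintro (σ | σ) <;> simp [K.deg_eq_zero_iff]
  d := coneBoundary φ
  d_d c := by
    rw [coneBoundary_apply c, coneBoundary_sumElim]
    ext (σ | σ) <;> simp [K.d_d, hd]
  d_apply_eq_zero hc _ hσ := coneBoundary_apply_eq_zero hdeg hc hσ

variable {J : Submodule A A} {a : A}

lemma exists_coneBoundary_eq_of_mem_chains_succ (hK : K.IsResolution J)
    (hd : ∀ c, K.d (φ c) = φ (K.d c)) (hdeg : ∀ {q c}, c ∈ K.chains q → φ c ∈ K.chains q)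
    (hbot : ∀ x, φ (Pi.single K.bot x) = Pi.single K.bot (x * a))
    (ha : ∀ y, y * (1 - a) ∈ J → y ∈ J) {q : ℕ} {c : K.Cell ⊕ K.Cell → A}
    (hc : c ∈ homogeneousChains A (Sum.elim K.deg (K.deg · + 1)) (q + 1))
    (hdc : coneBoundary φ c = 0) :
    ∃ v ∈ homogeneousChains A (Sum.elim K.deg (K.deg · + 1)) (q + 2), coneBoundary φ v = c := by
  have hl := comp_inl_mem_chains hc
  have hr := comp_inr_mem_chains hc
  set x := c ∘ Sum.inl
  set y := c ∘ Sum.inr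
  have hx : K.d x + (y - φ y) = 0 := funext fun σ => congrFun hdc (Sum.inl σ)
  have hy : K.d y = 0 := neg_eq_zero.1 (funext fun σ => congrFun hdc (Sum.inr σ))
  have hy_bot (hq : q = 0) : y K.bot ∈ J := by
    subst hq
    have hφ : φ y K.bot = y K.bot * a := by
      rw [eq_single_of_mem_homogeneousChains hr K.deg_eq_zero_iff, hbot]
      simp
    have h := congrFun (eq_neg_of_add_eq_zero_right hx) K.bot
    simp only [Pi.sub_apply, Pi.neg_apply, hφ, ← mul_one_sub] at h
    exact ha _ (h ▸ neg_mem (hK.d_bot_mem hl))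
  obtain ⟨w, hw, hdw⟩ := hK.exists_d_eq hr hy hy_bot
  have hz : K.d (x + (w - φ w)) = 0 := by
    rw [map_add, map_sub, hd, hdw, hx]
  obtain ⟨v, hv, hdv⟩ := hK.exists_d_eq (add_mem hl (sub_mem hw (hdeg hw))) hz (by simp)
  refine ⟨Sum.elim v (-w), sumElim_mem_chains hv (neg_mem hw), ?_⟩
  have hxw : x + (w - φ w) + (-w - -φ w) = x := by abel
  rw [coneBoundary_sumElim, hdv, map_neg, map_neg, neg_neg, hdw, hxw]
  exact Sum.elim_comp_inl_inr c

lemma exists_coneBoundary_eq_of_mem_chains_zero (hK : K.IsResolution J)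
    (hbot : ∀ x, φ (Pi.single K.bot x) = Pi.single K.bot (x * a)) {c : K.Cell ⊕ K.Cell → A}
    (hc : c ∈ homogeneousChains A (Sum.elim K.deg (K.deg · + 1)) 0)
    (hJ : c (Sum.inl K.bot) ∈ J ⊔ Submodule.span A {a - 1}) :
    ∃ v ∈ homogeneousChains A (Sum.elim K.deg (K.deg · + 1)) 1, coneBoundary φ v = c := by
  obtain ⟨u, hu, _, hw, huw⟩ := Submodule.mem_sup.1 hJ
  obtain ⟨w, rfl⟩ := Submodule.mem_span_singleton.1 hw
  have hbot_mem (x : A) : Pi.single K.bot x ∈ K.chains 0 := single_mem_homogeneousChains deg_bot x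
  obtain ⟨v, hv, hdv⟩ := hK.exists_d_eq (hbot_mem u) (d_eq_zero (hbot_mem u)) (by simpa using hu)
  refine ⟨Sum.elim v (Pi.single K.bot (-w)), sumElim_mem_chains hv (hbot_mem _), ?_⟩
  have hc_inl := eq_single_of_mem_homogeneousChains (comp_inl_mem_chains hc) K.deg_eq_zero_iff
  rw [coneBoundary_sumElim, hdv, d_eq_zero (hbot_mem _), hbot, ← Pi.single_sub, ← Pi.single_add,
    ← Sum.elim_comp_inl_inr c, comp_inr_eq_zero hc, neg_zero, hc_inl, Function.comp_apply, ← huw]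
  simp [mul_sub, neg_add_eq_sub]

lemma coneBoundary_bot_mem (hK : K.IsResolution J)
    (hbot : ∀ x, φ (Pi.single K.bot x) = Pi.single K.bot (x * a)) {c : K.Cell ⊕ K.Cell → A}
    (hc : c ∈ homogeneousChains A (Sum.elim K.deg (K.deg · + 1)) 1) :
    coneBoundary φ c (Sum.inl K.bot) ∈ J ⊔ Submodule.span A {a - 1} := by
  have hr := eq_single_of_mem_homogeneousChains (comp_inr_mem_chains hc) K.deg_eq_zero_iff
  have hsplit : coneBoundary φ c (Sum.inl K.bot) =
      K.d (c ∘ Sum.inl) K.bot + (-c (Sum.inr K.bot)) • (a - 1) := by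
    rw [coneBoundary_apply, hr, hbot]
    simp [mul_sub, neg_add_eq_sub]
  rw [hsplit]
  exact Submodule.add_mem_sup (hK.d_bot_mem (comp_inl_mem_chains hc))
    (Submodule.smul_mem _ _ (Submodule.mem_span_singleton_self _))

lemma IsResolution.cone (hK : K.IsResolution J) (hd : ∀ c, K.d (φ c) = φ (K.d c))
    (hdeg : ∀ {q c}, c ∈ K.chains q → φ c ∈ K.chains q)
    (hbot : ∀ x, φ (Pi.single K.bot x) = Pi.single K.bot (x * a))
    (ha : ∀ y, y * (1 - a) ∈ J → y ∈ J) :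
    (K.cone φ hd hdeg).IsResolution (J ⊔ Submodule.span A {a - 1}) where
  exists_d_eq {q c} hc hdc hJ := by
    obtain _ | q := q
    · exact exists_coneBoundary_eq_of_mem_chains_zero hK hbot hc (hJ rfl)
    · exact exists_coneBoundary_eq_of_mem_chains_succ hK hd hdeg hbot ha hc hdc
  d_bot_mem := coneBoundary_bot_mem hK hbot

end Cone

end CellComplex

/-- The left ideal generated by `β` and the `αᵢ - 1` with `i ∈ L`. -/
def koszulIdeal {A ι : Type*} [Ring A] (β : A) (α : ι → A) (L : List ι) : Submodule A A :=
  Submodule.span A (insert β ((α · - 1) '' {i | i ∈ L}))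

/-- The coefficients, up to sign, of the boundary of the top cell of a Koszul complex. -/
def koszulRelators {A ι : Type*} [Ring A] (β : A) (ν : ι → A) (L : List ι) : Set A :=
  insert β ((1 - ν ·) '' {i | i ∈ L})

/-- A Koszul complex: a resolution of `A ⧸ koszulIdeal β α L` with commuting chain endomorphisms
`φᵢ`, where `φᵢ` is multiplication by `αᵢ` on the bottom cell and by `νᵢ` on the top cell. Coning
off `1 - φᵢ` adds `i` to `L`. -/
structure KoszulComplex {A ι : Type*} [Ring A] (β : A) (α ν : ι → A) (L : List ι) extends
    CellComplex A where
  isResolution : toCellComplex.IsResolution (koszulIdeal β α L)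
  dim_eq : dim = L.length + 1
  closure_range_d_top : AddSubgroup.closure (Set.range (d (Pi.single top 1))) =
    AddSubgroup.closure (koszulRelators β ν L)
  φ : ι → (Cell → A) →ₗ[A] (Cell → A)
  d_φ : ∀ i c, d (φ i c) = φ i (d c)
  φ_φ : ∀ i j c, φ i (φ j c) = φ j (φ i c)
  φ_mem : ∀ i {q c}, c ∈ homogeneousChains A deg q → φ i c ∈ homogeneousChains A deg q
  φ_bot : ∀ i x, φ i (Pi.single bot x) = Pi.single bot (x * α i)
  φ_top : ∀ i x, φ i (Pi.single top x) = Pi.single top (x * ν i)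

section Koszul

open CellComplex

variable {A ι : Type*} [Ring A] {β : A} {α ν : ι → A}

lemma koszulIdeal_cons (i : ι) (L : List ι) :
    koszulIdeal β α (i :: L) = koszulIdeal β α L ⊔ Submodule.span A {α i - 1} := by
  simp_rw [koszulIdeal, ← Submodule.span_union, Set.union_singleton, List.mem_cons,
    Set.ofPred_or, Set.ofPred_eq_eq_singleton, Set.image_union, Set.image_singleton,
    Set.singleton_union, Set.insert_comm]

lemma koszulRelators_cons (i : ι) (L : List ι) :
    koszulRelators β ν (i :: L) = insert (1 - ν i) (koszulRelators β ν L) := by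
  simp_rw [koszulRelators, List.mem_cons, Set.ofPred_or, Set.ofPred_eq_eq_singleton,
    Set.image_union, Set.image_singleton, Set.singleton_union, Set.insert_comm]

lemma closure_range_single {σ G : Type*} [DecidableEq σ] [AddGroup G] (s : σ) (x : G) :
    AddSubgroup.closure (Set.range (Pi.single (M := fun _ => G) s x)) =
      AddSubgroup.closure {x} := by
  apply le_antisymm
  · rw [AddSubgroup.closure_le]
    rintro _ ⟨t, rfl⟩
    obtain rfl | ht := eq_or_ne t s
    · simp [AddSubgroup.mem_closure_of_mem]
    · simp [ht, zero_mem]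
  · exact AddSubgroup.closure_mono (Set.singleton_subset_iff.2 ⟨s, by simp⟩)

variable (β) in
/-- The complex `A → A` given by right multiplication by `β`; the cell `true` is the top one. -/
noncomputable def mulRightComplex : CellComplex A where
  Cell := Bool
  deg := Bool.toNat
  dim := 1
  top := true
  bot := false
  deg_le_dim := Bool.toNat_le
  deg_eq_dim_iff := by simp
  deg_eq_zero_iff := by simp
  d := LinearMap.single A _ false ∘ₗ LinearMap.toSpanSingleton A A β ∘ₗ LinearMap.proj true
  d_d c := by simp
  d_apply_eq_zero {q c} hc σ hσ := by
    obtain _ | _ := σ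
    · simp [hc true (by simpa using hσ)]
    · simp

lemma mulRightComplex_d (c : Bool → A) :
    (mulRightComplex β).d c = Pi.single (M := fun _ => A) false (c true * β) :=
  rfl

lemma mulRightComplex_d_false (c : Bool → A) : (mulRightComplex β).d c false = c true * β :=
  Pi.single_eq_same (M := fun _ : Bool => A) false _

lemma mulRightComplex_d_single_top (x : A) :
    (mulRightComplex β).d (Pi.single (mulRightComplex β).top x) =
      Pi.single (mulRightComplex β).bot (x * β) :=
  congrArg (Pi.single (M := fun _ : Bool => A) false ·)
    (congrArg (· * β) (Pi.single_eq_same (M := fun _ : Bool => A) true x))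

lemma mulRightComplex_isResolution (hβ : ∀ y, y * β = 0 → y = 0) :
    (mulRightComplex β).IsResolution (Submodule.span A {β}) where
  exists_d_eq {q w} hw hdw hJ := by
    obtain _ | q := q
    · obtain ⟨x, hx⟩ := Submodule.mem_span_singleton.1 (hJ rfl)
      refine ⟨Pi.single (mulRightComplex β).top x, single_mem_homogeneousChains deg_top x, ?_⟩
      rw [mulRightComplex_d_single_top, ← smul_eq_mul, hx]
      exact (eq_single_of_mem_homogeneousChains hw (mulRightComplex β).deg_eq_zero_iff).symm
    · have htrue : w true = 0 := hβ _ ((mulRightComplex_d_false w).symm.trans (congrFun hdw _))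
      have hfalse : w false = 0 := hw false (Nat.succ_ne_zero q).symm
      refine ⟨0, zero_mem _, ?_⟩
      rw [map_zero]
      exact funext (Bool.rec hfalse.symm htrue.symm)
  d_bot_mem {v} _ := Submodule.mem_span_singleton.2 ⟨v true, (mulRightComplex_d_false v).symm⟩

/-- The endomorphism of the chains multiplying the coefficient of `σ` on the right by `x σ`. -/
noncomputable def mulRightDiagonal {Cell : Type*} (x : Cell → A) : (Cell → A) →ₗ[A] (Cell → A) :=
  LinearMap.pi fun σ => LinearMap.toSpanSingleton A A (x σ) ∘ₗ LinearMap.proj σ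

section MulRightDiagonal

variable {Cell : Type*}

lemma mulRightDiagonal_apply (x c : Cell → A) (σ : Cell) : mulRightDiagonal x c σ = c σ * x σ :=
  rfl

lemma mulRightDiagonal_comm {x y : Cell → A} (hxy : ∀ σ, Commute (x σ) (y σ)) (c : Cell → A) :
    mulRightDiagonal x (mulRightDiagonal y c) = mulRightDiagonal y (mulRightDiagonal x c) := by
  ext σ
  rw [mulRightDiagonal_apply, mulRightDiagonal_apply, mulRightDiagonal_apply,
    mulRightDiagonal_apply, mul_assoc, mul_assoc, (hxy σ).eq]

lemma mulRightDiagonal_single [DecidableEq Cell] (x : Cell → A) (σ : Cell) (y : A) :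
    mulRightDiagonal x (Pi.single σ y) = Pi.single σ (y * x σ) := by
  ext τ
  obtain rfl | hτ := eq_or_ne τ σ
  · simp [mulRightDiagonal_apply]
  · simp [mulRightDiagonal_apply, hτ]

lemma mulRightDiagonal_mem (x : Cell → A) {deg : Cell → ℕ} {q : ℕ} {c : Cell → A}
    (hc : c ∈ homogeneousChains A deg q) : mulRightDiagonal x c ∈ homogeneousChains A deg q :=
  fun σ hσ => by rw [mulRightDiagonal_apply, hc σ hσ, zero_mul]

lemma mulRightComplex_d_mulRightDiagonal {x : Bool → A} (hx : SemiconjBy β (x false) (x true))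
    (c : Bool → A) : (mulRightComplex β).d (mulRightDiagonal x c) =
      mulRightDiagonal x ((mulRightComplex β).d c) := by
  rw [mulRightComplex_d, mulRightComplex_d, mulRightDiagonal_single, mulRightDiagonal_apply,
    mul_assoc, mul_assoc, hx.eq]

end MulRightDiagonal

/-- The diagonal endomorphism `(x, y) ↦ (φ x, φ y)` of the chains on two copies of the cells. -/
noncomputable def sumMap {Cell : Type*} (φ : (Cell → A) →ₗ[A] (Cell → A)) :
    (Cell ⊕ Cell → A) →ₗ[A] (Cell ⊕ Cell → A) :=
  (LinearEquiv.sumArrowLequivProdArrow _ _ A A).symm.toLinearMap ∘ₗ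
    (φ ∘ₗ LinearMap.funLeft A A Sum.inl).prod (φ ∘ₗ LinearMap.funLeft A A Sum.inr)

section SumMap

variable {Cell : Type*}

lemma sumMap_apply (φ : (Cell → A) →ₗ[A] (Cell → A)) (c : Cell ⊕ Cell → A) :
    sumMap φ c = Sum.elim (φ (c ∘ Sum.inl)) (φ (c ∘ Sum.inr)) :=
  rfl

lemma sumMap_sumElim (φ : (Cell → A) →ₗ[A] (Cell → A)) (x y : Cell → A) :
    sumMap φ (Sum.elim x y) = Sum.elim (φ x) (φ y) :=
  rfl

lemma sumMap_single_inl [DecidableEq Cell] {φ : (Cell → A) →ₗ[A] (Cell → A)} {σ : Cell} {x y : A}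
    (h : φ (Pi.single σ x) = Pi.single σ y) :
    sumMap φ (Pi.single (Sum.inl σ) x) = Pi.single (Sum.inl σ) y := by
  rw [← Sum.elim_single_zero, sumMap_sumElim, h, map_zero, Sum.elim_single_zero]

lemma sumMap_single_inr [DecidableEq Cell] {φ : (Cell → A) →ₗ[A] (Cell → A)} {σ : Cell} {x y : A}
    (h : φ (Pi.single σ x) = Pi.single σ y) :
    sumMap φ (Pi.single (Sum.inr σ) x) = Pi.single (Sum.inr σ) y := by
  rw [← Sum.elim_zero_single, sumMap_sumElim, h, map_zero, Sum.elim_zero_single]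

lemma sumMap_comm {φ ψ : (Cell → A) →ₗ[A] (Cell → A)} (h : ∀ c, φ (ψ c) = ψ (φ c))
    (c : Cell ⊕ Cell → A) : sumMap φ (sumMap ψ c) = sumMap ψ (sumMap φ c) := by
  rw [sumMap_apply ψ, sumMap_apply φ c, sumMap_sumElim, sumMap_sumElim, h, h]

end SumMap

lemma CellComplex.sumMap_mem {K : CellComplex A} {φ : K.Chain →ₗ[A] K.Chain}
    (hφ : ∀ {q c}, c ∈ K.chains q → φ c ∈ K.chains q) {q : ℕ} {c : K.Cell ⊕ K.Cell → A}
    (hc : c ∈ homogeneousChains A (Sum.elim K.deg (K.deg · + 1)) q) :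
    sumMap φ c ∈ homogeneousChains A (Sum.elim K.deg (K.deg · + 1)) q := by
  rintro (σ | σ) hσ
  · exact hφ (comp_inl_mem_chains hc) σ hσ
  · obtain _ | q := q
    · rw [sumMap_apply, comp_inr_eq_zero hc, map_zero]
      rfl
    · exact hφ (comp_inr_mem_chains hc) σ (by simpa using hσ)

lemma CellComplex.coneBoundary_sumMap {K : CellComplex A} {φ ψ : K.Chain →ₗ[A] K.Chain}
    (hd : ∀ c, K.d (ψ c) = ψ (K.d c)) (h : ∀ c, φ (ψ c) = ψ (φ c)) (c : K.Cell ⊕ K.Cell → A) :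
    coneBoundary φ (sumMap ψ c) = sumMap ψ (coneBoundary φ c) := by
  rw [sumMap_apply, coneBoundary_sumElim, coneBoundary_apply c, sumMap_sumElim, map_add, map_sub,
    map_neg, hd, hd, h]

lemma commute_of_semiconjBy (hβ : ∀ y, y * β = 0 → y = 0)
    (hα : ∀ i j, Commute (α i) (α j)) (hν : ∀ i, SemiconjBy β (α i) (ν i)) (i j : ι) :
    Commute (ν i) (ν j) := by
  refine sub_eq_zero.1 (hβ _ ?_)
  rw [sub_mul, ← ((hν i).mul_right (hν j)).eq, (hα i j).eq, ((hν j).mul_right (hν i)).eq, sub_self]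

namespace KoszulComplex

/-- The Koszul complex on the empty list: right multiplication by `β`. -/
noncomputable def nil (hβ : ∀ y, y * β = 0 → y = 0) (hα : ∀ i j, Commute (α i) (α j))
    (hν : ∀ i, SemiconjBy β (α i) (ν i)) : KoszulComplex β α ν [] where
  __ := mulRightComplex β
  isResolution := by
    simpa [koszulIdeal] using mulRightComplex_isResolution hβ
  dim_eq := rfl
  closure_range_d_top := by
    rw [mulRightComplex_d_single_top, closure_range_single]
    simp [koszulRelators]
  φ i := mulRightDiagonal fun s : Bool => cond s (ν i) (α i)
  d_φ i := mulRightComplex_d_mulRightDiagonal (hν i)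
  φ_φ i j := mulRightDiagonal_comm (Bool.rec (hα i j) (commute_of_semiconjBy hβ hα hν i j))
  φ_mem _ _ _ := mulRightDiagonal_mem _
  φ_bot _ := mulRightDiagonal_single _ _
  φ_top _ := mulRightDiagonal_single _ _

/-- The Koszul complex on `i :: L`, as the cone of `1 - φᵢ` on the Koszul complex on `L`. -/
noncomputable def cons {L : List ι} (K : KoszulComplex β α ν L) (i : ι)
    (hi : ∀ y, y * (1 - α i) ∈ koszulIdeal β α L → y ∈ koszulIdeal β α L) :
    KoszulComplex β α ν (i :: L) where
  __ := K.cone (K.φ i) (K.d_φ i) (K.φ_mem i)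
  isResolution := by
    rw [koszulIdeal_cons]
    exact K.isResolution.cone (K.d_φ i) (K.φ_mem i) (K.φ_bot i) hi
  dim_eq := congrArg (· + 1) K.dim_eq
  closure_range_d_top := by
    change AddSubgroup.closure (Set.range (coneBoundary (K.φ i) (Pi.single (.inr K.top) 1))) = _
    rw [← Sum.elim_zero_single, coneBoundary_sumElim, map_zero, zero_add, K.φ_top, one_mul,
      ← Pi.single_sub, Set.Sum.elim_range, AddSubgroup.closure_union, closure_range_single,
      Pi.neg_def, ← Set.neg_range, AddSubgroup.closure_neg, K.closure_range_d_top,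
      ← AddSubgroup.closure_union, Set.singleton_union, koszulRelators_cons]
  φ j := sumMap (K.φ j)
  d_φ j := coneBoundary_sumMap (K.d_φ j) (K.φ_φ i j)
  φ_φ j j' := sumMap_comm (K.φ_φ j j')
  φ_mem j _ _ := sumMap_mem (K.φ_mem j)
  φ_bot j x := sumMap_single_inl (K.φ_bot j x)
  φ_top j x := sumMap_single_inr (K.φ_top j x)

lemma nonempty (hβ : ∀ y, y * β = 0 → y = 0) (hα : ∀ i j, Commute (α i) (α j))
    (hν : ∀ i, SemiconjBy β (α i) (ν i))
    (hreg : ∀ L i, i ∉ L → ∀ y, y * (1 - α i) ∈ koszulIdeal β α L → y ∈ koszulIdeal β α L)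
    {L : List ι} (hL : L.Nodup) : Nonempty (KoszulComplex β α ν L) := by
  induction L with
  | nil => exact ⟨nil hβ hα hν⟩
  | cons i L ih =>
    obtain ⟨hi, hL⟩ := List.nodup_cons.1 hL
    obtain ⟨K⟩ := ih hL
    exact ⟨K.cons i (hreg L i hi)⟩

end KoszulComplex

end Koszul

/-! ### Group rings -/

open MonoidAlgebra (of)
open scoped MonoidAlgebra

section Truncate

variable {R G : Type*} [Ring R]

/-- The restriction of the support of an element of the group ring to the elements satisfying
`p`. -/
noncomputable def truncate (p : G → Prop) [DecidablePred p] : R[G] →+ R[G] :=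
  MonoidAlgebra.coeffAddEquiv.symm.toAddMonoidHom.comp
    ((Finsupp.filterAddHom p).comp MonoidAlgebra.coeffAddEquiv.toAddMonoidHom)

variable {p : G → Prop} [DecidablePred p]

lemma coeff_truncate (x : R[G]) (g : G) :
    (truncate p x).coeff g = if p g then x.coeff g else 0 :=
  Finsupp.filter_apply p x.coeff g

lemma truncate_eq_self {x : R[G]} (hx : ∀ g, x.coeff g ≠ 0 → p g) : truncate p x = x := by
  ext g
  rw [coeff_truncate, ite_eq_left_iff]
  exact fun hg => (of_not_not (mt (hx g) hg)).symm

lemma truncate_eq_zero {x : R[G]} (hx : ∀ g, x.coeff g ≠ 0 → ¬p g) : truncate p x = 0 := by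
  ext g
  rw [coeff_truncate]
  exact ite_eq_right_iff.2 fun hg => of_not_not (mt (hx g) (not_not.2 hg))

end Truncate

section GroupRing

variable {R G : Type*} [Group G]

section Ring

variable [Ring R] {p : G → Prop} [DecidablePred p]

lemma coeff_mul_of (x : R[G]) (g h : G) :
    (x * of R G g).coeff h = x.coeff (h * g⁻¹) := by
  rw [MonoidAlgebra.of_apply, MonoidAlgebra.coeff_mul_single_apply, mul_one]

lemma eq_zero_of_mul_of_sub_one_eq_zero {g : G} (hg : ¬IsOfFinOrder g) {x : R[G]}
    (hx : x * (of R G g - 1) = 0) : x = 0 := by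
  rw [mul_sub_one, sub_eq_zero] at hx
  have hcoeff (h : G) (j : ℕ) : x.coeff (h * g ^ j) = x.coeff h := by
    induction j with
    | zero => simp
    | succ j ih =>
      have hshift := coeff_mul_of x g (h * g ^ (j + 1))
      rw [hx, mul_assoc, pow_succ, mul_inv_cancel_right, ih] at hshift
      rw [pow_succ, hshift]
  ext h
  by_contra hne
  have hinj : Function.Injective fun j : ℕ => h * g ^ j :=
    (mul_right_injective h).comp (injective_pow_iff_not_isOfFinOrder.2 hg)
  refine Set.infinite_range_of_injective hinj (x.coeff.support.finite_toSet.subset ?_)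
  rintro _ ⟨j, rfl⟩
  simpa [hcoeff] using hne

lemma truncate_mul_of {g : G} (hg : ∀ h, p (h * g) ↔ p h) (x : R[G]) :
    truncate p (x * of R G g) = truncate p x * of R G g := by
  ext h
  simp only [coeff_mul_of, coeff_truncate, ← hg (h * g⁻¹), inv_mul_cancel_right]

lemma truncate_mem_span {s : Set G} (hp : ∀ g ∈ s, ∀ h, p (h * g) ↔ p h) {x : R[G]}
    (hx : x ∈ Submodule.span R[G] ((of R G · - 1) '' s)) :
    truncate p x ∈ Submodule.span R[G] ((of R G · - 1) '' s) := by
  suffices h : ∀ y : R[G], truncate p (y * x) ∈ _ by simpa using h 1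
  induction hx using Submodule.span_induction with
  | mem x hx =>
    obtain ⟨g, hg, rfl⟩ := hx
    intro y
    rw [mul_sub_one, map_sub, truncate_mul_of (hp g hg), ← mul_sub_one]
    exact Submodule.smul_mem _ _ (Submodule.subset_span ⟨g, hg, rfl⟩)
  | zero => simp
  | add x x' _ _ ih ih' =>
    intro y
    rw [mul_add, map_add]
    exact add_mem (ih y) (ih' y)
  | smul z x _ ih =>
    intro y
    rw [smul_eq_mul, ← mul_assoc]
    exact ih _

lemma exists_truncate_eq (e : G →* Multiplicative ℤ) {a : G} (ha : e a = .ofAdd 1) (x : R[G]) :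
    ∃ (M : ℤ) (m : ℕ), truncate (fun g => (e g).toAdd < M)
      (x - x * of R G a ^ m) = x := by
  obtain ⟨C, hC⟩ := (x.coeff.support.image fun g => |(e g).toAdd|).bddAbove
  have hbound (g : G) (hg : x.coeff g ≠ 0) : |(e g).toAdd| ≤ C :=
    hC (Finset.mem_coe.2 (Finset.mem_image_of_mem _ (Finsupp.mem_support_iff.2 hg)))
  refine ⟨C + 1, (2 * C + 1).toNat, ?_⟩
  have hself : truncate (fun g => (e g).toAdd < C + 1) x = x :=
    truncate_eq_self fun g hg => by have := abs_le.1 (hbound g hg); lia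
  have hzero : truncate (fun g => (e g).toAdd < C + 1)
      (x * of R G a ^ (2 * C + 1).toNat) = 0 := by
    refine truncate_eq_zero fun g hg => ?_
    rw [← map_pow, coeff_mul_of] at hg
    have := abs_le.1 (hbound _ hg)
    simp only [map_mul, map_inv, map_pow, ha, toAdd_mul, toAdd_inv, toAdd_pow, toAdd_ofAdd,
      nsmul_eq_mul, mul_one, Int.ofNat_toNat] at this
    lia
  rw [map_sub, hself, hzero, sub_zero]

/-- Modulo the left ideal `J`, right multiplication by `a` acts as a shift of the grading by `e`.
An element fixed by it modulo `J` is congruent to all its translates, and is recovered from its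
difference with a far translate by truncation, which preserves `J`. -/
lemma mem_span_of_mul_one_sub_of_mem {s : Set G} (e : G →* Multiplicative ℤ) {a : G}
    (ha : e a = .ofAdd 1) (hs : ∀ g ∈ s, e g = 1)
    (hsa : ∀ x ∈ Submodule.span R[G] ((of R G · - 1) '' s),
      x * of R G a ∈ Submodule.span R[G] ((of R G · - 1) '' s))
    {x : R[G]} (hx : x * (1 - of R G a) ∈
      Submodule.span R[G] ((of R G · - 1) '' s)) :
    x ∈ Submodule.span R[G] ((of R G · - 1) '' s) := by
  have hpow (m : ℕ) : x - x * of R G a ^ m ∈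
      Submodule.span R[G] ((of R G · - 1) '' s) := by
    induction m with
    | zero => simp
    | succ m ih =>
      have htel : x - x * of R G a ^ (m + 1) = x * (1 - of R G a) +
          (x - x * of R G a ^ m) * of R G a := by
        rw [pow_succ]
        noncomm_ring
      exact htel ▸ add_mem hx (hsa _ ih)
  obtain ⟨M, m, hM⟩ := exists_truncate_eq e ha x
  rw [← hM]
  exact truncate_mem_span (fun g hg h => by simp [hs g hg]) (hpow m)

/-- The subgroup of the elements `g` with `g - 1` in a left ideal `J`. -/
def subOneMemSubgroup (J : Submodule R[G] R[G]) : Subgroup G where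
  carrier := {g | of R G g - 1 ∈ J}
  one_mem' := by rw [Set.mem_ofPred_eq, map_one, sub_self]; exact zero_mem _
  mul_mem' {g h} hg hh := by
    have hsplit : of R G (g * h) - 1 = of R G g •
        (of R G h - 1) + (of R G g - 1) := by
      rw [map_mul, smul_eq_mul]
      noncomm_ring
    rw [Set.mem_ofPred_eq, hsplit]
    exact add_mem (J.smul_mem _ hh) hg
  inv_mem' {g} hg := by
    have hsplit : of R G g⁻¹ - 1 =
        (-of R G g⁻¹) • (of R G g - 1) := by
      rw [smul_eq_mul, mul_sub_one, neg_mul, ← map_mul, inv_mul_cancel, map_one]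
      abel
    rw [Set.mem_ofPred_eq, hsplit]
    exact J.smul_mem _ hg

end Ring

variable [CommRing R]

variable (R G) in
/-- The homomorphism from the group ring to the coefficients with `g ↦ 1`. -/
noncomputable def augmentation : R[G] →ₐ[R] R := MonoidAlgebra.lift R R G 1

variable (R G) in
/-- The augmentation ideal of the group ring, as a left ideal. -/
noncomputable def augmentationIdeal : Submodule R[G] R[G] := RingHom.ker (augmentation R G)

lemma mem_augmentationIdeal {x : R[G]} : x ∈ augmentationIdeal R G ↔ augmentation R G x = 0 :=
  RingHom.mem_ker

@[simp]
lemma augmentation_of (g : G) : augmentation R G (of R G g) = 1 := MonoidAlgebra.lift_of 1 g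

lemma sub_algebraMap_mem {J : Submodule R[G] R[G]} (hJ : subOneMemSubgroup J = ⊤) (x : R[G]) :
    x - algebraMap R R[G] (augmentation R G x) ∈ J := by
  induction x using MonoidAlgebra.induction_linear with
  | zero => simp
  | add x y hx hy =>
    rw [map_add, map_add, add_sub_add_comm]
    exact add_mem hx hy
  | single g r =>
    have hg : of R G g - 1 ∈ J := hJ.ge (Subgroup.mem_top g)
    have hsingle : MonoidAlgebra.single g r - algebraMap R R[G] (augmentation R G
        (MonoidAlgebra.single g r)) = algebraMap R R[G] r • (of R G g - 1) := by
      simp [augmentation, mul_sub]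
    exact hsingle ▸ J.smul_mem _ hg

lemma augmentationIdeal_eq_span {s : Set G} (hs : Subgroup.closure s = ⊤) :
    augmentationIdeal R G = Submodule.span R[G] ((of R G · - 1) '' s) := by
  apply le_antisymm
  · intro x hx
    have htop : subOneMemSubgroup (Submodule.span R[G] ((of R G · - 1) '' s)) = ⊤ :=
      top_unique (hs ▸ (Subgroup.closure_le _).2 fun g hg => Submodule.subset_span ⟨g, hg, rfl⟩)
    simpa [mem_augmentationIdeal.1 hx] using sub_algebraMap_mem htop x
  · rw [Submodule.span_le]
    rintro _ ⟨g, -, rfl⟩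
    simp [mem_augmentationIdeal, -MonoidAlgebra.of_apply]

end GroupRing

namespace GammaGroup

section KoszulResolution

variable {k : ℕ} (n : Fin k → ℕ)

/-- `gammaA n i` followed by the geometric sum of the powers of `gammaB n`, the element `νᵢ` with
`(b - 1) aᵢ = νᵢ (b - 1)`. -/
noncomputable def relatorSum (i : Fin k) : ℤ[GammaGroup n] :=
  of ℤ _ (gammaA n i) *
    ∑ s ∈ Finset.range (n i), of ℤ _ (gammaB n) ^ s

lemma semiconjBy_relatorSum (i : Fin k) : SemiconjBy (of ℤ _ (gammaB n) - 1)
    (of ℤ _ (gammaA n i)) (relatorSum n i) := by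
  rw [SemiconjBy, relatorSum, mul_assoc, geom_sum_mul, sub_one_mul, mul_sub_one, ← map_mul,
    ← map_pow, ← map_mul, (semiconjBy_gammaA n i).eq]

lemma koszulIdeal_eq_span (L : List (Fin k)) :
    koszulIdeal (of ℤ _ (gammaB n) - 1)
      (fun i => of ℤ _ (gammaA n i)) L =
    Submodule.span ℤ[GammaGroup n]
      ((of ℤ _ · - 1) '' insert (gammaB n) (gammaA n '' {i | i ∈ L})) := by
  rw [koszulIdeal, Set.image_insert_eq, Set.image_image]

lemma koszulIdeal_finRange : koszulIdeal (of ℤ _ (gammaB n) - 1)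
      (fun i => of ℤ _ (gammaA n i)) (List.finRange k) =
    augmentationIdeal ℤ (GammaGroup n) := by
  rw [koszulIdeal_eq_span]
  refine (augmentationIdeal_eq_span ?_).symm
  simp [← closure_range_gammaA_union_gammaB n]

lemma mul_gammaA_mem_koszulIdeal (L : List (Fin k)) (i : Fin k) {x : ℤ[GammaGroup n]}
    (hx : x ∈ koszulIdeal (of ℤ _ (gammaB n) - 1)
      (fun i => of ℤ _ (gammaA n i)) L) :
    x * of ℤ _ (gammaA n i) ∈ koszulIdeal (of ℤ _ (gammaB n) - 1)
      (fun i => of ℤ _ (gammaA n i)) L := by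
  induction hx using Submodule.span_induction with
  | mem x hx =>
    obtain rfl | ⟨j, hj, rfl⟩ := hx
    · rw [(semiconjBy_relatorSum n i).eq]
      exact Submodule.smul_mem _ _ (Submodule.subset_span (Set.mem_insert _ _))
    · rw [sub_one_mul, ← map_mul, (commute_gammaA n j i).eq, map_mul, ← mul_sub_one]
      exact Submodule.smul_mem _ _ (Submodule.subset_span (.inr ⟨j, hj, rfl⟩))
  | zero => simp
  | add x y _ _ hx hy => exact add_mul x y _ ▸ add_mem hx hy
  | smul r x _ hx =>
    rw [smul_eq_mul, mul_assoc]
    exact Submodule.smul_mem _ r hx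

variable [PositiveTuple n]

lemma mem_koszulIdeal_of_mul_one_sub_mem (L : List (Fin k)) (i : Fin k) (hi : i ∉ L)
    (x : ℤ[GammaGroup n]) (hx : x * (1 - of ℤ _ (gammaA n i)) ∈
      koszulIdeal (of ℤ _ (gammaB n) - 1)
        (fun i => of ℤ _ (gammaA n i)) L) :
    x ∈ koszulIdeal (of ℤ _ (gammaB n) - 1)
      (fun i => of ℤ _ (gammaA n i)) L := by
  have hshift := fun x => mul_gammaA_mem_koszulIdeal n L i (x := x)
  rw [koszulIdeal_eq_span] at hx hshift ⊢
  have he (g : GammaGroup n) : (Pi.evalMonoidHom _ i).comp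
    (SemidirectProduct.rightHom.comp (coords n)) g = .ofAdd (exponent g i) := rfl
  refine mem_span_of_mul_one_sub_of_mem ((Pi.evalMonoidHom _ i).comp
    (SemidirectProduct.rightHom.comp (coords n))) ?_ ?_ hshift hx
  · rw [he, exponent_gammaA, Pi.single_eq_same]
  · rintro _ (rfl | ⟨j, hj, rfl⟩)
    · rw [he, exponent_gammaB, Pi.zero_apply, ofAdd_zero]
    · rw [he, exponent_gammaA, Pi.single_eq_of_ne (by rintro rfl; exact hi hj), ofAdd_zero]

lemma not_isOfFinOrder_gammaB : ¬IsOfFinOrder (gammaB n) := by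
  rw [← injective_zpow_iff_not_isOfFinOrder]
  exact gammaB_zpow_injective

lemma nonempty_koszulComplex : Nonempty (KoszulComplex (of ℤ _ (gammaB n) - 1)
    (fun i => of ℤ _ (gammaA n i)) (relatorSum n) (List.finRange k)) :=
  KoszulComplex.nonempty (fun _ => eq_zero_of_mul_of_sub_one_eq_zero (not_isOfFinOrder_gammaB n))
    (fun i j => (commute_gammaA n i j).map (of ℤ _)) (semiconjBy_relatorSum n)
    (mem_koszulIdeal_of_mul_one_sub_mem n) (List.nodup_finRange k)

theorem exists_isResolution : ∃ X : CellComplex ℤ[GammaGroup n],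
    X.IsResolution (augmentationIdeal ℤ (GammaGroup n)) ∧ X.dim = k + 1 ∧
      AddSubgroup.closure (Set.range (X.d (Pi.single X.top 1))) = AddSubgroup.closure
        (insert (of ℤ _ (gammaB n) - 1) (Set.range (1 - relatorSum n ·))) := by
  obtain ⟨K⟩ := nonempty_koszulComplex n
  refine ⟨K.toCellComplex, koszulIdeal_finRange n ▸ K.isResolution, ?_, ?_⟩
  · rw [K.dim_eq, List.length_finRange]
  · rw [K.closure_range_d_top]
    simp [koszulRelators]

end KoszulResolution

end GammaGroup

/-! ### Controlled maps -/

section IsControlled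

variable {G H K : Type*} [Group G] [Group H] [Group K] {M N P : Type*}
  [AddCommGroup M] [AddCommGroup N] [AddCommGroup P]
  [Module ℤ[G] M] [Module ℤ[H] N] [Module ℤ[K] P]

/-- An additive map `f` of modules over group rings is controlled over `F : G → H` if it is
equivariant up to finite ambiguity: for each `c` the elements `(F g)⁻¹ • f (g • c)` take only
finitely many values. -/
def IsControlled (F : G → H) (f : M →ₗ[ℤ] N) : Prop :=
  ∀ c, (Set.range fun g => of ℤ H (F g)⁻¹ • f (of ℤ G g • c)).Finite

lemma of_inv_smul_of_smul (g : G) (c : M) : of ℤ G g⁻¹ • of ℤ G g • c = c := by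
  rw [smul_smul, ← map_mul, inv_mul_cancel, map_one, one_smul]

lemma of_smul_of_inv_smul (g : G) (c : M) : of ℤ G g • of ℤ G g⁻¹ • c = c := by
  rw [smul_smul, ← map_mul, mul_inv_cancel, map_one, one_smul]

namespace IsControlled

variable {F F' : G → H} {f f' : M →ₗ[ℤ] N}

lemma add (hf : IsControlled F f) (hf' : IsControlled F f') : IsControlled F (f + f') :=
  fun c => ((hf c).image2 (· + ·) (hf' c)).subset <| Set.range_subset_iff.2 fun g =>
    ⟨_, ⟨g, rfl⟩, _, ⟨g, rfl⟩, (smul_add _ _ _).symm⟩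

lemma zsmul (hf : IsControlled F f) (z : ℤ) : IsControlled F (z • f) :=
  fun c => ((hf c).image (z • ·)).subset <| Set.range_subset_iff.2 fun g =>
    ⟨_, ⟨g, rfl⟩, (smul_comm _ _ _).symm⟩

lemma sub (hf : IsControlled F f) (hf' : IsControlled F f') : IsControlled F (f - f') := by
  rw [sub_eq_add_neg, ← neg_one_zsmul]
  exact hf.add (hf'.zsmul _)

lemma zero : IsControlled F (0 : M →ₗ[ℤ] N) :=
  fun c => (Set.finite_singleton 0).subset <| Set.range_subset_iff.2 fun g => by simp

lemma comp {F' : H → K} {f' : N →ₗ[ℤ] P} (hf' : IsControlled F' f') (hf : IsControlled F f) :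
    IsControlled (F' ∘ F) (f' ∘ₗ f) := by
  refine fun c => ((hf c).biUnion fun u _ => hf' u).subset <| Set.range_subset_iff.2 fun g =>
    Set.mem_biUnion ⟨g, rfl⟩ ⟨F g, ?_⟩
  simp only [of_smul_of_inv_smul]
  rfl

lemma of_linearMap (f : M →ₗ[ℤ[G]] M) : IsControlled (id : G → G) (f.restrictScalars ℤ) := by
  refine fun c => (Set.finite_singleton (f c)).subset <| Set.range_subset_iff.2 fun g => ?_
  rw [LinearMap.restrictScalars_apply, map_smul]
  exact of_inv_smul_of_smul g _

lemma id : IsControlled (id : G → G) (LinearMap.id : M →ₗ[ℤ] M) :=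
  of_linearMap (LinearMap.id : M →ₗ[ℤ[G]] M)

lemma congr_close (hf : IsControlled F f) (hF : CoarselyClose F' F) : IsControlled F' f := by
  obtain ⟨E, hE, hFE⟩ := hF
  refine fun c => (hE.image2 (fun e u => of ℤ H e • u) (hf c)).subset <|
    Set.range_subset_iff.2 fun g => ⟨_, hFE g, _, ⟨g, rfl⟩, ?_⟩
  simp only [map_mul, mul_smul, of_smul_of_inv_smul]

end IsControlled

/-- The submodule of the elements at which `f` satisfies the finiteness condition in the definition
of controlled maps. -/
def controlledSubmodule {F : G → H} (hF : Bornologous F) (f : M →ₗ[ℤ] N) : Submodule ℤ[G] M where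
  carrier := {c | (Set.range fun g => of ℤ H (F g)⁻¹ • f (of ℤ G g • c)).Finite}
  zero_mem' := (Set.finite_singleton 0).subset <| Set.range_subset_iff.2 fun g => by simp
  add_mem' hc he := (hc.image2 (· + ·) he).subset <| Set.range_subset_iff.2 fun g =>
    ⟨_, ⟨g, rfl⟩, _, ⟨g, rfl⟩, by simp only [smul_add, map_add]⟩
  smul_mem' x c hc := by
    rw [Set.mem_ofPred_eq] at hc ⊢
    induction x using MonoidAlgebra.induction_linear with
    | zero => exact (Set.finite_singleton 0).subset <| Set.range_subset_iff.2 fun g => by simp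
    | add x y hx hy =>
      exact (hx.image2 (· + ·) hy).subset <| Set.range_subset_iff.2 fun g =>
        ⟨_, ⟨g, rfl⟩, _, ⟨g, rfl⟩, by simp only [add_smul, smul_add, map_add]⟩
    | single a r =>
      obtain ⟨E, hE, hFE⟩ := hF {a} (Set.finite_singleton a)
      refine (hE.image2 (fun e u => of ℤ H e • r • u) hc).subset <| Set.range_subset_iff.2
        fun g => ⟨_, hFE g (g * a) (by simp), _, ⟨g * a, rfl⟩, ?_⟩
      have hsingle : MonoidAlgebra.single a r = r • of ℤ G a := by simp
      simp only [hsingle, map_mul, mul_smul, of_smul_of_inv_smul, smul_assoc, ← smul_comm r,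
        map_zsmul]

lemma isControlled_of_span_eq_top {F : G → H} (hF : Bornologous F) {f : M →ₗ[ℤ] N} {s : Set M}
    (hs : Submodule.span ℤ[G] s = ⊤)
    (h : ∀ c ∈ s, (Set.range fun g => of ℤ H (F g)⁻¹ • f (of ℤ G g • c)).Finite) :
    IsControlled F f := by
  have htop : controlledSubmodule hF f = ⊤ := top_unique (hs ▸ Submodule.span_le.2 h)
  exact fun c => htop.ge Submodule.mem_top

end IsControlled

section ChainBasis

variable {G Cell : Type*} [Fintype Cell]

/-- The `ℤ`-basis of the chains with coefficients in `ℤ[G]` given by the translates of the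
cells. -/
noncomputable def chainBasis : Module.Basis (Cell × G) ℤ (Cell → ℤ[G]) :=
  (Pi.basis fun _ => MonoidAlgebra.basis G ℤ).reindex (Equiv.sigmaEquivProd Cell G)

lemma chainBasis_repr_apply (c : Cell → ℤ[G]) (p : Cell × G) :
    chainBasis.repr c p = (c p.1).coeff p.2 := by
  simp only [chainBasis, Module.Basis.repr_reindex_apply, Pi.basis_repr]
  rfl

variable [Group G]

lemma chainBasis_apply [DecidableEq Cell] (p : Cell × G) :
    chainBasis p = Pi.single p.1 (of ℤ G p.2) := by
  simp [chainBasis, Pi.basis_apply, MonoidAlgebra.basis_apply]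

lemma of_smul_chainBasis (g x : G) (σ : Cell) :
    of ℤ G g • chainBasis (σ, x) = chainBasis (σ, g * x) := by
  classical
  rw [chainBasis_apply, chainBasis_apply, ← Pi.single_smul, smul_eq_mul, ← map_mul]

variable {deg : Cell → ℕ} {q : ℕ}

lemma chainBasis_mem_homogeneousChains {p : Cell × G} (hp : deg p.1 = q) :
    chainBasis p ∈ homogeneousChains ℤ[G] deg q := by
  classical
  rw [chainBasis_apply]
  exact single_mem_homogeneousChains hp _

lemma mem_of_chainBasis_mem {N : Submodule ℤ (Cell → ℤ[G])}
    (hN : ∀ p : Cell × G, deg p.1 = q → chainBasis p ∈ N) {c : Cell → ℤ[G]}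
    (hc : c ∈ homogeneousChains ℤ[G] deg q) : c ∈ N := by
  rw [← chainBasis.linearCombination_repr c]
  refine Submodule.finsuppSum_mem ℤ N _ _ fun p hp => N.smul_mem _ (hN p ?_)
  by_contra hdeg
  exact hp (by rw [chainBasis_repr_apply, hc _ hdeg, MonoidAlgebra.coeff_zero, Finsupp.zero_apply])

lemma isControlled_of_chainBasis {H N : Type*} [Group H] [AddCommGroup N] [Module ℤ[H] N]
    {F : G → H} (hF : Bornologous F) {f : (Cell → ℤ[G]) →ₗ[ℤ] N}
    (h : ∀ σ, (Set.range fun g => of ℤ H (F g)⁻¹ • f (chainBasis (σ, g))).Finite) :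
    IsControlled F f := by
  classical
  refine isControlled_of_span_eq_top hF (Pi.basisFun ℤ[G] Cell).span_eq ?_
  rintro _ ⟨σ, rfl⟩
  convert h σ with g
  rw [Pi.basisFun_apply, chainBasis_apply, ← Pi.single_smul, smul_eq_mul, mul_one]

end ChainBasis

namespace CellComplex

section ControlledLift

variable {G H : Type*} [Group G] [Group H] {X : CellComplex ℤ[G]} {Y : CellComplex ℤ[H]}
  {F : G → H} {θ ω : X.Chain →ₗ[ℤ] Y.Chain} {q q' : ℕ}

variable (Y F θ ω q q') in
/-- The modification of `θ` on the cells of degree `q` to a lift of `ω` along the boundary of `Y`.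
The preimages are chosen after translation back by `F`, so that finitely many choices suffice. -/
noncomputable def controlledLift : X.Chain →ₗ[ℤ] Y.Chain :=
  chainBasis.constr ℤ fun p => if X.deg p.1 = q then
    of ℤ H (F p.2) • Function.invFunOn Y.d (Y.chains q') (of ℤ H (F p.2)⁻¹ • ω (chainBasis p))
  else θ (chainBasis p)

lemma controlledLift_chainBasis_of_deg_eq {p : X.Cell × G} (hp : X.deg p.1 = q) :
    controlledLift Y F θ ω q q' (chainBasis p) = of ℤ H (F p.2) •
      Function.invFunOn Y.d (Y.chains q') (of ℤ H (F p.2)⁻¹ • ω (chainBasis p)) := by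
  rw [controlledLift, Module.Basis.constr_basis, if_pos hp]

lemma controlledLift_chainBasis_of_deg_ne {p : X.Cell × G} (hp : X.deg p.1 ≠ q) :
    controlledLift Y F θ ω q q' (chainBasis p) = θ (chainBasis p) := by
  rw [controlledLift, Module.Basis.constr_basis, if_neg hp]

lemma isControlled_controlledLift (hF : Bornologous F) (hθ : IsControlled F θ)
    (hω : IsControlled F ω) : IsControlled F (controlledLift Y F θ ω q q') := by
  refine isControlled_of_chainBasis hF fun σ => ?_
  have hcell (g : G) : chainBasis (σ, g) = of ℤ G g • (chainBasis (σ, 1) : X.Chain) := by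
    rw [of_smul_chainBasis, mul_one]
  by_cases hσ : X.deg σ = q
  · refine ((hω (chainBasis (σ, 1))).image (Function.invFunOn Y.d (Y.chains q'))).subset <|
      Set.range_subset_iff.2 fun g => ⟨_, ⟨g, rfl⟩, ?_⟩
    rw [controlledLift_chainBasis_of_deg_eq hσ, of_inv_smul_of_smul]
    dsimp only
    rw [← hcell]
  · convert hθ (chainBasis (σ, 1)) using 4 with g
    rw [controlledLift_chainBasis_of_deg_ne hσ, hcell]

lemma controlledLift_of_ne {p : ℕ} (hp : p ≠ q) {c : X.Chain} (hc : c ∈ X.chains p) :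
    controlledLift Y F θ ω q q' c = θ c :=
  mem_of_chainBasis_mem (N := LinearMap.eqLocus (controlledLift Y F θ ω q q') θ)
    (fun _ hσ => controlledLift_chainBasis_of_deg_ne (ne_of_eq_of_ne hσ hp)) hc

lemma controlledLift_spec (hω : ∀ c ∈ X.chains q, ∃ v ∈ Y.chains q', Y.d v = ω c) {c : X.Chain}
    (hc : c ∈ X.chains q) : controlledLift Y F θ ω q q' c ∈ Y.chains q' ∧
      Y.d (controlledLift Y F θ ω q q' c) = ω c := by
  refine mem_of_chainBasis_mem
    (N := ((Y.chains q').restrictScalars ℤ).comap (controlledLift Y F θ ω q q') ⊓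
      LinearMap.eqLocus (Y.d.restrictScalars ℤ ∘ₗ controlledLift Y F θ ω q q') ω) ?_ hc
  intro p hp
  have hex : ∃ v ∈ Y.chains q', Y.d v = of ℤ H (F p.2)⁻¹ • ω (chainBasis p) := by
    obtain ⟨v, hv, hdv⟩ := hω _ (chainBasis_mem_homogeneousChains hp)
    exact ⟨of ℤ H (F p.2)⁻¹ • v, Submodule.smul_mem _ _ hv, by rw [map_smul, hdv]⟩
  rw [Submodule.mem_inf, Submodule.mem_comap, LinearMap.mem_eqLocus, LinearMap.comp_apply,
    controlledLift_chainBasis_of_deg_eq hp]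
  refine ⟨Submodule.smul_mem _ _ (Function.invFunOn_mem hex), ?_⟩
  rw [LinearMap.restrictScalars_apply, map_smul, Function.invFunOn_eq hex, of_smul_of_inv_smul]

end ControlledLift

/-! ### Controlled chain maps and homotopies -/

section ControlledExtension

variable {G H : Type*} [Group G] [Group H] {X : CellComplex ℤ[G]} {Y : CellComplex ℤ[H]}
  {F : G → H}

lemma ext_of_chains {N : Type*} [AddCommGroup N] {f f' : X.Chain →ₗ[ℤ] N}
    (h : ∀ q, ∀ c ∈ X.chains q, f c = f' c) : f = f' :=
  chainBasis.ext fun _ => h _ _ (chainBasis_mem_homogeneousChains rfl)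

lemma isControlled_comp_d {f : X.Chain →ₗ[ℤ] Y.Chain} (hf : IsControlled F f) :
    IsControlled F (f ∘ₗ X.d.restrictScalars ℤ) :=
  hf.comp (.of_linearMap X.d)

variable {J : Submodule ℤ[H] ℤ[H]} {φ θ θ₀ : X.Chain →ₗ[ℤ] Y.Chain} {r q : ℕ} {ε : ℤ}

lemma exists_d_eq_add_zsmul (hY : Y.IsResolution J)
    (hφ_mem : ∀ q, ∀ c ∈ X.chains (q + 1), φ c ∈ Y.chains (q + r))
    (hdφ : ∀ c, Y.d (φ c) = -(ε • φ (X.d c)))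
    (hJ : r = 0 → ∀ c ∈ X.chains 1, (φ c + ε • θ (X.d c)) Y.bot ∈ J)
    (hθ : ∀ c ∈ X.chains q, θ c ∈ Y.chains (q + r) ∧ Y.d (θ c) = φ c + ε • θ (X.d c))
    {c : X.Chain} (hc : c ∈ X.chains (q + 1)) :
    ∃ v ∈ Y.chains (q + r + 1), Y.d v = φ c + ε • θ (X.d c) := by
  obtain ⟨hmem, hd⟩ := hθ _ (d_mem_chains hc)
  refine hY.exists_d_eq (add_mem (hφ_mem q c hc) (zsmul_mem hmem ε)) ?_ fun hq => ?_
  · rw [map_add, map_zsmul, hd, hdφ, X.d_d, map_zero, smul_zero, add_zero, neg_add_cancel]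
  · obtain ⟨rfl, hr⟩ := Nat.add_eq_zero_iff.1 hq
    exact hJ hr c hc

/-- One induction covers both the existence of chain maps (`r = 0`, `φ = 0`, `ε = 1`) and that of
homotopies (`r = 1`, `ε = -1`). -/
lemma exists_controlled_extension_upTo (hY : Y.IsResolution J) (hF : Bornologous F)
    (hφ : IsControlled F φ) (hθ₀ : IsControlled F θ₀)
    (hφ_mem : ∀ q, ∀ c ∈ X.chains (q + 1), φ c ∈ Y.chains (q + r))
    (hdφ : ∀ c, Y.d (φ c) = -(ε • φ (X.d c)))
    (hzero : ∀ c ∈ X.chains 0, θ₀ c ∈ Y.chains r ∧ Y.d (θ₀ c) = φ c)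
    (hJ : r = 0 → ∀ c ∈ X.chains 1, (φ c + ε • θ₀ (X.d c)) Y.bot ∈ J) (Q : ℕ) :
    ∃ θ : X.Chain →ₗ[ℤ] Y.Chain, IsControlled F θ ∧ (∀ c ∈ X.chains 0, θ c = θ₀ c) ∧
      ∀ q ≤ Q, ∀ c ∈ X.chains q,
        θ c ∈ Y.chains (q + r) ∧ Y.d (θ c) = φ c + ε • θ (X.d c) := by
  induction Q with
  | zero =>
    refine ⟨θ₀, hθ₀, fun _ _ => rfl, fun q hq c hc => ?_⟩
    obtain rfl := Nat.le_zero.1 hq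
    simpa [d_eq_zero hc] using hzero c hc
  | succ Q ih =>
    obtain ⟨θ, hθ, hθ_zero, hθ_spec⟩ := ih
    let ω : X.Chain →ₗ[ℤ] Y.Chain := φ + ε • (θ ∘ₗ X.d.restrictScalars ℤ)
    have hω : IsControlled F ω := hφ.add ((isControlled_comp_d hθ).zsmul ε)
    have hJ_θ (hr : r = 0) (c : X.Chain) (hc : c ∈ X.chains 1) :
        (φ c + ε • θ (X.d c)) Y.bot ∈ J := by
      rw [hθ_zero _ (d_mem_chains hc)]
      exact hJ hr c hc
    have hne {q : ℕ} (hq : q ≤ Q) {c : X.Chain} (hc : c ∈ X.chains q) :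
        controlledLift Y F θ ω (Q + 1) (Q + r + 1) c = θ c :=
      controlledLift_of_ne (Nat.lt_succ_of_le hq).ne hc
    have hd_ne {q : ℕ} (hq : q ≤ Q + 1) {c : X.Chain} (hc : c ∈ X.chains q) :
        controlledLift Y F θ ω (Q + 1) (Q + r + 1) (X.d c) = θ (X.d c) := by
      obtain _ | q := q
      · rw [d_eq_zero hc, map_zero, map_zero]
      · exact hne (Nat.le_of_succ_le_succ hq) (d_mem_chains hc)
    refine ⟨controlledLift Y F θ ω (Q + 1) (Q + r + 1), isControlled_controlledLift hF hθ hω,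
      fun c hc => (hne Q.zero_le hc).trans (hθ_zero c hc), fun q hq c hc => ?_⟩
    rw [hd_ne hq hc]
    obtain hq | rfl := Nat.le_succ_iff.1 hq
    · rw [hne hq hc]
      exact hθ_spec q hq c hc
    · rw [Nat.succ_eq_add_one, Nat.add_right_comm]
      exact controlledLift_spec (fun c hc =>
        exists_d_eq_add_zsmul hY hφ_mem hdφ hJ_θ (hθ_spec Q le_rfl) hc) hc

lemma exists_controlled_extension (hY : Y.IsResolution J) (hF : Bornologous F)
    (hφ : IsControlled F φ) (hθ₀ : IsControlled F θ₀)
    (hφ_mem : ∀ q, ∀ c ∈ X.chains (q + 1), φ c ∈ Y.chains (q + r))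
    (hdφ : ∀ c, Y.d (φ c) = -(ε • φ (X.d c)))
    (hzero : ∀ c ∈ X.chains 0, θ₀ c ∈ Y.chains r ∧ Y.d (θ₀ c) = φ c)
    (hJ : r = 0 → ∀ c ∈ X.chains 1, (φ c + ε • θ₀ (X.d c)) Y.bot ∈ J) :
    ∃ θ : X.Chain →ₗ[ℤ] Y.Chain, IsControlled F θ ∧ (∀ c ∈ X.chains 0, θ c = θ₀ c) ∧
      (∀ q, ∀ c ∈ X.chains q, θ c ∈ Y.chains (q + r)) ∧
      ∀ c, Y.d (θ c) = φ c + ε • θ (X.d c) := by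
  obtain ⟨θ, hθ, hθ_zero, hθ_spec⟩ :=
    exists_controlled_extension_upTo hY hF hφ hθ₀ hφ_mem hdφ hzero hJ X.dim
  have hspec (q : ℕ) (c : X.Chain) (hc : c ∈ X.chains q) :
      θ c ∈ Y.chains (q + r) ∧ Y.d (θ c) = φ c + ε • θ (X.d c) := by
    obtain hq | hq := le_or_gt q X.dim
    · exact hθ_spec q hq c hc
    · simp [eq_zero_of_dim_lt hq hc, zero_mem]
  refine ⟨θ, hθ, hθ_zero, fun q c hc => (hspec q c hc).1, fun c => ?_⟩
  have hext : Y.d.restrictScalars ℤ ∘ₗ θ = φ + ε • (θ ∘ₗ X.d.restrictScalars ℤ) :=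
    ext_of_chains fun q c hc => (hspec q c hc).2
  exact LinearMap.congr_fun hext c

end ControlledExtension

section ControlledChainMap

variable {G H K : Type*} [Group G] [Group H] [Group K] {X : CellComplex ℤ[G]}
  {Y : CellComplex ℤ[H]} {Z : CellComplex ℤ[K]} {F : G → H}

/-- A chain map of degree `0`, compatible with the augmentations, that is controlled over `F`. -/
structure IsControlledChainMap (F : G → H) (f : X.Chain →ₗ[ℤ] Y.Chain) : Prop where
  isControlled : IsControlled F f
  mem_chains : ∀ q, ∀ c ∈ X.chains q, f c ∈ Y.chains q
  d_comm : ∀ c, Y.d (f c) = f (X.d c)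
  augmentation_eq : ∀ c ∈ X.chains 0,
    augmentation ℤ H (f c Y.bot) = augmentation ℤ G (c X.bot)

lemma IsControlledChainMap.comp {F' : H → K} {f : X.Chain →ₗ[ℤ] Y.Chain}
    {f' : Y.Chain →ₗ[ℤ] Z.Chain} (hf' : IsControlledChainMap F' f')
    (hf : IsControlledChainMap F f) : IsControlledChainMap (F' ∘ F) (f' ∘ₗ f) where
  isControlled := hf'.isControlled.comp hf.isControlled
  mem_chains q c hc := hf'.mem_chains q _ (hf.mem_chains q c hc)
  d_comm c := by rw [LinearMap.comp_apply, hf'.d_comm, hf.d_comm, LinearMap.comp_apply]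
  augmentation_eq c hc := by
    rw [LinearMap.comp_apply, hf'.augmentation_eq _ (hf.mem_chains 0 c hc), hf.augmentation_eq c hc]

variable (X Y F) in
/-- The map of degree `0` chains that starts the induction for controlled chain maps. -/
noncomputable def bottomMap : X.Chain →ₗ[ℤ] Y.Chain :=
  chainBasis.constr ℤ fun p => chainBasis (Y.bot, F p.2)

lemma bottomMap_chainBasis (p : X.Cell × G) :
    bottomMap X Y F (chainBasis p) = chainBasis (Y.bot, F p.2) :=
  chainBasis.constr_basis ℤ _ p

lemma isControlled_bottomMap (hF : Bornologous F) : IsControlled F (bottomMap X Y F) := by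
  refine isControlled_of_chainBasis hF fun σ =>
    (Set.finite_singleton (chainBasis (Y.bot, 1))).subset (Set.range_subset_iff.2 fun g => ?_)
  rw [bottomMap_chainBasis, of_smul_chainBasis, inv_mul_cancel]
  rfl

lemma bottomMap_mem_chains {c : X.Chain} (hc : c ∈ X.chains 0) :
    bottomMap X Y F c ∈ Y.chains 0 := by
  refine mem_of_chainBasis_mem
    (N := ((Y.chains 0).restrictScalars ℤ).comap (bottomMap X Y F)) (fun p _ => ?_) hc
  rw [Submodule.mem_comap, bottomMap_chainBasis]
  exact chainBasis_mem_homogeneousChains deg_bot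

lemma augmentation_bottomMap {c : X.Chain} (hc : c ∈ X.chains 0) :
    augmentation ℤ H (bottomMap X Y F c Y.bot) = augmentation ℤ G (c X.bot) := by
  let augY : Y.Chain →ₗ[ℤ] ℤ := (augmentation ℤ H).toLinearMap ∘ₗ LinearMap.proj Y.bot
  let augX : X.Chain →ₗ[ℤ] ℤ := (augmentation ℤ G).toLinearMap ∘ₗ LinearMap.proj X.bot
  suffices h : c ∈ LinearMap.eqLocus (augY ∘ₗ bottomMap X Y F) augX from h
  refine mem_of_chainBasis_mem (fun p hp => ?_) hc
  obtain ⟨σ, x⟩ := p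
  obtain rfl := (X.deg_eq_zero_iff σ).1 hp
  have haug : augY (bottomMap X Y F (chainBasis (X.bot, x))) = augX (chainBasis (X.bot, x)) := by
    rw [bottomMap_chainBasis]
    simp [augX, augY, chainBasis_apply, -MonoidAlgebra.of_apply]
  exact haug

lemma exists_isControlledChainMap (hX : X.IsResolution (augmentationIdeal ℤ G))
    (hY : Y.IsResolution (augmentationIdeal ℤ H)) (hF : Bornologous F) :
    ∃ f : X.Chain →ₗ[ℤ] Y.Chain, IsControlledChainMap F f := by
  obtain ⟨f, hf, hf_zero, hf_mem, hdf⟩ := exists_controlled_extension (φ := 0) (r := 0) (ε := 1)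
    hY hF .zero (isControlled_bottomMap (X := X) hF) (fun _ _ _ => zero_mem _) (fun _ => by simp)
    (fun c hc => ⟨bottomMap_mem_chains hc, d_eq_zero (bottomMap_mem_chains hc)⟩) fun _ c hc => by
      have hdc := hX.d_bot_mem hc
      rw [mem_augmentationIdeal] at hdc ⊢
      simpa [augmentation_bottomMap (d_mem_chains hc)] using hdc
  refine ⟨f, hf, hf_mem, fun c => by simpa using hdf c, fun c hc => ?_⟩
  rw [hf_zero c hc, augmentation_bottomMap hc]

lemma IsControlledChainMap.exists_homotopy (hX : X.IsResolution (augmentationIdeal ℤ G)) {E : G → G}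
    {f : X.Chain →ₗ[ℤ] X.Chain} (hf : IsControlledChainMap E f) (hE : CoarselyClose id E) :
    ∃ h : X.Chain →ₗ[ℤ] X.Chain, IsControlled (id : G → G) h ∧
      (∀ q, ∀ c ∈ X.chains q, h c ∈ X.chains (q + 1)) ∧ ∀ c, f c = c + X.d (h c) + h (X.d c) := by
  obtain ⟨φ, hφ_eq⟩ : ∃ φ, φ = f - LinearMap.id := ⟨_, rfl⟩
  have hφ_apply (c : X.Chain) : φ c = f c - c := by rw [hφ_eq]; rfl
  have hφ : IsControlled (id : G → G) φ := hφ_eq ▸ (hf.isControlled.congr_close hE).sub .id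
  have hφ_mem (q : ℕ) (c : X.Chain) (hc : c ∈ X.chains q) : φ c ∈ X.chains q :=
    hφ_apply c ▸ sub_mem (hf.mem_chains q c hc) hc
  have hdφ (c : X.Chain) : X.d (φ c) = φ (X.d c) := by
    rw [hφ_apply, hφ_apply, map_sub, hf.d_comm]
  have hfill (c : X.Chain) (hc : c ∈ X.chains 0) : ∃ v ∈ X.chains 1, X.d v = φ c := by
    refine hX.exists_d_eq (hφ_mem 0 c hc) (d_eq_zero (hφ_mem 0 c hc)) fun _ => ?_
    rw [hφ_apply, mem_augmentationIdeal, Pi.sub_apply, map_sub, hf.augmentation_eq c hc, sub_self]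
  obtain ⟨h, hh, -, hh_mem, hdh⟩ := exists_controlled_extension (r := 1) (ε := -1) hX .id hφ
    (isControlled_controlledLift .id .zero hφ) (fun q => hφ_mem (q + 1))
    (fun c => by rw [hdφ, neg_one_zsmul, neg_neg]) (fun c hc => controlledLift_spec hfill hc)
    (fun hr => absurd hr one_ne_zero)
  refine ⟨h, hh, hh_mem, fun c => ?_⟩
  rw [hdh, hφ_apply, neg_one_zsmul]
  abel

end ControlledChainMap

end CellComplex

/-! ### Locally finite chains -/

section Transfer

variable {ι κ ν : Type*}

/-- The action of an integral matrix with finite rows on real functions. (A row with infinitely many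
nonzero contributions gives the junk value `0`.) -/
noncomputable def transfer (M : Matrix κ ι ℤ) (z : ι → ℝ) (j : κ) : ℝ :=
  ∑ᶠ i, M j i * z i

/-- Each row of the matrix has finitely many nonzero entries. -/
def RowFinite (M : Matrix κ ι ℤ) : Prop :=
  ∀ j, (Function.support (M j)).Finite

lemma transfer_apply_eq_sum {M : Matrix κ ι ℤ} {j : κ} {s : Finset ι}
    (hs : Function.support (M j) ⊆ s) (z : ι → ℝ) : transfer M z j = ∑ i ∈ s, M j i * z i :=
  finsum_eq_sum_of_support_subset _ fun i hi => hs fun hij => hi (by simp [hij])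

lemma transfer_zero_left (z : ι → ℝ) : transfer (0 : Matrix κ ι ℤ) z = 0 := by
  ext j
  simp [transfer]

lemma transfer_zero_right (M : Matrix κ ι ℤ) : transfer M 0 = 0 := by
  ext j
  simp [transfer]

lemma transfer_one [DecidableEq ι] (z : ι → ℝ) : transfer (1 : Matrix ι ι ℤ) z = z := by
  ext j
  rw [transfer_apply_eq_sum (s := {j}) fun i hi => by_contra fun hij => hi
    (Matrix.one_apply_ne' (by simpa using hij))]
  simp

lemma transfer_add_left {M N : Matrix κ ι ℤ} (hM : RowFinite M) (hN : RowFinite N) (z : ι → ℝ) :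
    transfer (M + N) z = transfer M z + transfer N z := by
  ext j
  simp only [transfer, Pi.add_apply, Matrix.add_apply, Int.cast_add, add_mul]
  exact finsum_add_distrib ((hM j).subset fun i hi hij => hi (by simp [hij]))
    ((hN j).subset fun i hi hij => hi (by simp [hij]))

lemma transfer_transfer {M : Matrix κ ι ℤ} {N : Matrix ν κ ℤ} {P : Matrix ν ι ℤ}
    (hM : RowFinite M) (hN : RowFinite N) (hP : ∀ l i, P l i = ∑ᶠ j, N l j * M j i) (z : ι → ℝ) :
    transfer N (transfer M z) = transfer P z := by
  classical
  ext l
  have hN_support : Function.support (N l) ⊆ (hN l).toFinset := by simp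
  have hP_eq (i : ι) : P l i = ∑ j ∈ (hN l).toFinset, N l j * M j i := by
    rw [hP, finsum_eq_sum_of_support_subset _
      fun j hj => hN_support fun hlj => hj (by simp [hlj])]
  set s := (hN l).toFinset.biUnion fun j => (hM j).toFinset
  have hs {j : κ} (hj : j ∈ (hN l).toFinset) : Function.support (M j) ⊆ s := fun i hi =>
    Finset.mem_biUnion.2 ⟨j, hj, by simpa using hi⟩
  have hP_support : Function.support (P l) ⊆ s := fun i hi => by
    rw [Function.mem_support, hP_eq] at hi
    obtain ⟨j, hj, hji⟩ := Finset.exists_ne_zero_of_sum_ne_zero hi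
    exact hs hj (right_ne_zero_of_mul hji)
  calc transfer N (transfer M z) l
      = ∑ j ∈ (hN l).toFinset, ∑ i ∈ s, N l j * (M j i * z i) := by
        rw [transfer_apply_eq_sum hN_support]
        refine Finset.sum_congr rfl fun j hj => ?_
        rw [transfer_apply_eq_sum (hs hj), Finset.mul_sum]
    _ = transfer P z l := by
        rw [transfer_apply_eq_sum hP_support, Finset.sum_comm]
        refine Finset.sum_congr rfl fun i _ => ?_
        rw [hP_eq, Int.cast_sum, Finset.sum_mul]
        exact Finset.sum_congr rfl fun j _ => by push_cast; ring

lemma transfer_extend (M : Matrix κ ι ℤ) {e : ν → ι} (he : e.Injective) (z : ν → ℝ) :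
    transfer M (Function.extend e z 0) = transfer (M.submatrix id e) z := by
  ext j
  have hrange (i : ι) (hi : (M j i : ℝ) * Function.extend e z 0 i ≠ 0) : i ∈ Set.range e :=
    by_contra fun he => hi (by simp [Function.extend_apply' _ _ _ he])
  calc transfer M (Function.extend e z 0) j
      = ∑ᶠ i ∈ Set.range e, M j i * Function.extend e z 0 i := by
        rw [← finsum_mem_inter_support_eq' _ Set.univ _
          fun i hi => iff_of_true trivial (hrange i hi), finsum_mem_univ]
        rfl
    _ = transfer (M.submatrix id e) z j := by
        rw [finsum_mem_range he]
        simp only [he.extend_apply]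
        rfl

/-- A matrix `M` carrying the functions in `Z` to functions in `W`, with finitely many different
entries, whose row of index `y` is supported within bounded distance of `F y`. -/
structure IsTransferMatrix {G H : Type*} [Group G] (Z : Set (G → ℝ)) (W : Set (H → ℝ)) (F : H → G)
    (M : Matrix H G ℤ) : Prop where
  mapsTo : Set.MapsTo (transfer M) Z W
  finite_entries : (Set.range fun p : H × G => M p.1 p.2).Finite
  exists_finite_support : ∃ E : Set G, E.Finite ∧ ∀ y x, M y x ≠ 0 → (F y)⁻¹ * x ∈ E

end Transfer

namespace CellComplex

section ChainMatrix

variable {G H K : Type*} [Group G] [Group H] [Group K] {X : CellComplex ℤ[G]}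
  {Y : CellComplex ℤ[H]} {Z : CellComplex ℤ[K]}

/-- The matrix of an additive map in the bases of translated cells. -/
noncomputable def chainMatrix (f : X.Chain →ₗ[ℤ] Y.Chain) : Matrix (Y.Cell × H) (X.Cell × G) ℤ :=
  chainBasis.toMatrix (f ∘ chainBasis)

lemma chainMatrix_apply (f : X.Chain →ₗ[ℤ] Y.Chain) (j : Y.Cell × H) (i : X.Cell × G) :
    chainMatrix f j i = (f (chainBasis i) j.1).coeff j.2 :=
  chainBasis_repr_apply _ _

lemma chainMatrix_id [DecidableEq (X.Cell × G)] :
    chainMatrix (LinearMap.id : X.Chain →ₗ[ℤ] X.Chain) = 1 :=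
  chainBasis.toMatrix_self

lemma chainMatrix_add (f f' : X.Chain →ₗ[ℤ] Y.Chain) :
    chainMatrix (f + f') = chainMatrix f + chainMatrix f' := by
  ext j i
  simp [chainMatrix_apply]

lemma chainMatrix_comp_apply (f' : Y.Chain →ₗ[ℤ] Z.Chain) (f : X.Chain →ₗ[ℤ] Y.Chain)
    (l : Z.Cell × K) (i : X.Cell × G) :
    chainMatrix (f' ∘ₗ f) l i = ∑ᶠ j, chainMatrix f' l j * chainMatrix f j i := by
  set c := chainBasis.repr (f (chainBasis i))
  have hsupport : Function.support (fun j => chainMatrix f' l j * chainMatrix f j i) ⊆ c.support :=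
    fun j hj => Finsupp.mem_support_iff.2 (right_ne_zero_of_mul hj)
  rw [finsum_eq_sum_of_support_subset _ hsupport]
  have hsum : f (chainBasis i) = ∑ j ∈ c.support, c j • chainBasis j :=
    (chainBasis.linearCombination_repr _).symm
  calc chainMatrix (f' ∘ₗ f) l i = chainBasis.repr (f' (f (chainBasis i))) l := rfl
    _ = ∑ j ∈ c.support, c j * chainMatrix f' l j := by
        rw [hsum]
        simp only [map_sum, map_zsmul, Finsupp.finsetSum_apply, Finsupp.smul_apply, smul_eq_mul]
        rfl
    _ = ∑ j ∈ c.support, chainMatrix f' l j * chainMatrix f j i :=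
        Finset.sum_congr rfl fun j _ => mul_comm _ _

variable {F : G → H} {f : X.Chain →ₗ[ℤ] Y.Chain}

lemma exists_finite_chainMatrix (hf : IsControlled F f) :
    (Set.range fun p : (Y.Cell × H) × (X.Cell × G) => chainMatrix f p.1 p.2).Finite ∧
      ∃ D : Set H, D.Finite ∧ ∀ j i, chainMatrix f j i ≠ 0 → (F i.2)⁻¹ * j.2 ∈ D := by
  classical
  obtain ⟨S, hS⟩ : ∃ S : Finset Y.Chain, ∀ i : X.Cell × G,
      of ℤ H (F i.2)⁻¹ • f (chainBasis i) ∈ S := by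
    refine ⟨(Set.finite_iUnion fun σ => hf (chainBasis (σ, 1))).toFinset, fun i => ?_⟩
    rw [Set.Finite.mem_toFinset]
    exact Set.mem_iUnion.2 ⟨i.1, i.2, by simp only [of_smul_chainBasis, mul_one]⟩
  have hcoeff (j : Y.Cell × H) (i : X.Cell × G) : chainMatrix f j i =
      ((of ℤ H (F i.2)⁻¹ • f (chainBasis i)) j.1).coeff ((F i.2)⁻¹ * j.2) := by
    simp [chainMatrix_apply]
  constructor
  · refine ((Finset.finite_toSet (S.biUnion fun c => Finset.univ.biUnion fun τ =>
      (c τ).coeff.support.image (c τ).coeff)).insert 0).subset ?_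
    rintro _ ⟨⟨j, i⟩, rfl⟩
    refine or_iff_not_imp_left.2 fun hji => ?_
    dsimp only at hji ⊢
    rw [hcoeff] at hji ⊢
    exact Finset.mem_biUnion.2 ⟨_, hS i, Finset.mem_biUnion.2 ⟨j.1, Finset.mem_univ _,
      Finset.mem_image_of_mem _ (Finsupp.mem_support_iff.2 hji)⟩⟩
  · refine ⟨_, Finset.finite_toSet
      (S.biUnion fun c => Finset.univ.biUnion fun τ => (c τ).coeff.support), fun j i hji => ?_⟩
    rw [hcoeff] at hji
    exact Finset.mem_biUnion.2 ⟨_, hS i, Finset.mem_biUnion.2 ⟨j.1, Finset.mem_univ _,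
      Finsupp.mem_support_iff.2 hji⟩⟩

lemma rowFinite_chainMatrix (hf : IsControlled F f) (hF : ∀ y, (F ⁻¹' {y}).Finite) :
    RowFinite (chainMatrix f) := by
  obtain ⟨-, D, hD, hfD⟩ := exists_finite_chainMatrix hf
  intro j
  refine (Set.finite_univ.prod ((hD.image fun e => j.2 * e⁻¹).biUnion fun y _ => hF y)).subset
    fun i hi => ⟨trivial, Set.mem_biUnion (Set.mem_image_of_mem _ (hfD j i hi)) ?_⟩
  simp

lemma transfer_chainMatrix_comp {f' : Y.Chain →ₗ[ℤ] Z.Chain}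
    (hf' : RowFinite (chainMatrix f')) (hf : RowFinite (chainMatrix f)) (z : X.Cell × G → ℝ) :
    transfer (chainMatrix (f' ∘ₗ f)) z = transfer (chainMatrix f') (transfer (chainMatrix f) z) :=
  (transfer_transfer hf hf' (chainMatrix_comp_apply f' f) z).symm

end ChainMatrix

section TopCycles

open scoped Pointwise

variable {G H : Type*} [Group G] [Group H] {X : CellComplex ℤ[G]} {Y : CellComplex ℤ[H]}
  {F : G → H} {F' : H → G} {f : X.Chain →ₗ[ℤ] Y.Chain} {f' : Y.Chain →ₗ[ℤ] X.Chain} {z : G → ℝ}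

variable (X) in
/-- The locally finite real chain of top degree whose coefficients are given by `z`. -/
noncomputable def topChain (z : G → ℝ) : X.Cell × G → ℝ :=
  Function.extend (Prod.mk X.top) z 0

variable (X) in
/-- The locally finite real cycles of top degree. -/
def topCycles : Set (G → ℝ) :=
  {z | transfer (chainMatrix (X.d.restrictScalars ℤ)) (X.topChain z) = 0}

/-- The block of the matrix of `f` which relates the translates of the top cells. -/
noncomputable def topMatrix (f : X.Chain →ₗ[ℤ] Y.Chain) : Matrix H G ℤ :=
  (chainMatrix f).submatrix (Prod.mk Y.top) (Prod.mk X.top)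

lemma topChain_injective : Function.Injective X.topChain := fun z z' h => by
  ext x
  simpa [topChain, (Prod.mk_right_injective X.top).extend_apply] using congrFun h (X.top, x)

lemma rowFinite_chainMatrix_id {f : X.Chain →ₗ[ℤ] X.Chain} (hf : IsControlled (id : G → G) f) :
    RowFinite (chainMatrix f) :=
  rowFinite_chainMatrix hf fun y => by simp

lemma transfer_topChain_eq_zero (hf : ∀ c ∈ X.chains X.dim, f c = 0) (z : G → ℝ) :
    transfer (chainMatrix f) (X.topChain z) = 0 := by
  have hzero : (chainMatrix f).submatrix id (Prod.mk X.top) = 0 := by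
    ext j x
    simp [chainMatrix_apply, hf _ (chainBasis_mem_homogeneousChains (p := (X.top, x)) deg_top)]
  rw [topChain, transfer_extend _ (Prod.mk_right_injective _), hzero, transfer_zero_left]

lemma transfer_topChain (hf : ∀ c ∈ X.chains X.dim, f c ∈ Y.chains X.dim) (hdim : X.dim = Y.dim)
    (z : G → ℝ) :
    transfer (chainMatrix f) (X.topChain z) = Y.topChain (transfer (topMatrix f) z) := by
  rw [topChain, transfer_extend _ (Prod.mk_right_injective _)]
  ext ⟨τ, y⟩
  by_cases hτ : τ = Y.top
  · subst hτ
    rw [topChain, (Prod.mk_right_injective _).extend_apply]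
    rfl
  · have hrow (x : G) : chainMatrix f (τ, y) (X.top, x) = 0 := by
      rw [chainMatrix_apply, hf _ (chainBasis_mem_homogeneousChains deg_top) τ
        fun h => hτ ((Y.deg_eq_dim_iff τ).1 (h.trans hdim))]
      simp
    rw [topChain, Function.extend_apply' _ _ _ fun ⟨_, h⟩ => hτ (Prod.mk.inj h).1.symm]
    simp [transfer, hrow]

lemma transfer_topChain_of_close (hX : X.IsResolution (augmentationIdeal ℤ G)) {E : G → G}
    (hE : CoarselyClose id E) {f : X.Chain →ₗ[ℤ] X.Chain} (hf : IsControlledChainMap E f)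
    (hz : z ∈ X.topCycles) : transfer (chainMatrix f) (X.topChain z) = X.topChain z := by
  classical
  obtain ⟨h, hh, hh_mem, hfh⟩ := hf.exists_homotopy hX hE
  obtain ⟨d, hd_eq⟩ : ∃ d, d = X.d.restrictScalars ℤ := ⟨_, rfl⟩
  have hd : IsControlled (id : G → G) d := hd_eq ▸ .of_linearMap X.d
  have hdz : transfer (chainMatrix d) (X.topChain z) = 0 := hd_eq ▸ hz
  have hhz : transfer (chainMatrix h) (X.topChain z) = 0 :=
    transfer_topChain_eq_zero
      (fun c hc => eq_zero_of_dim_lt X.dim.lt_succ_self (hh_mem X.dim c hc)) z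
  have hf_eq : f = LinearMap.id + (d ∘ₗ h + h ∘ₗ d) := by
    refine LinearMap.ext fun c => ?_
    rw [hfh, hd_eq, add_assoc]
    rfl
  have hdh := rowFinite_chainMatrix_id (hd.comp hh)
  have hhd := rowFinite_chainMatrix_id (hh.comp hd)
  have hsum := rowFinite_chainMatrix_id ((hd.comp hh).add (hh.comp hd))
  rw [chainMatrix_add] at hsum
  rw [hf_eq, chainMatrix_add, chainMatrix_add,
    transfer_add_left (rowFinite_chainMatrix_id .id) hsum, transfer_add_left hdh hhd,
    transfer_chainMatrix_comp (rowFinite_chainMatrix_id hd) (rowFinite_chainMatrix_id hh),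
    transfer_chainMatrix_comp (rowFinite_chainMatrix_id hh) (rowFinite_chainMatrix_id hd),
    hdz, hhz, transfer_zero_right, transfer_zero_right, add_zero, add_zero, chainMatrix_id,
    transfer_one]

lemma dim_le_dim (hX : X.IsResolution (augmentationIdeal ℤ G))
    (hY : Y.IsResolution (augmentationIdeal ℤ H)) (hF : IsCoarseInverse F F')
    (hz : z ∈ X.topCycles) (hz_ne : z ≠ 0) : X.dim ≤ Y.dim := by
  by_contra! hdim
  obtain ⟨f, hf⟩ := exists_isControlledChainMap hX hY hF.bornologous
  obtain ⟨f', hf'⟩ := exists_isControlledChainMap hY hX hF.bornologous_inv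
  have hzero : transfer (chainMatrix f) (X.topChain z) = 0 :=
    transfer_topChain_eq_zero (fun c hc => eq_zero_of_dim_lt hdim (hf.mem_chains _ c hc)) z
  have hfix := transfer_topChain_of_close hX hF.left (hf'.comp hf) hz
  rw [transfer_chainMatrix_comp (rowFinite_chainMatrix hf'.isControlled hF.symm.finite_fiber)
    (rowFinite_chainMatrix hf.isControlled hF.finite_fiber), hzero, transfer_zero_right] at hfix
  refine hz_ne (topChain_injective (hfix.symm.trans ?_))
  exact (Function.extend_zero _).symm

lemma transfer_topMatrix_mem_topCycles (hF : IsCoarseInverse F F') (hf : IsControlledChainMap F f)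
    (hdim : X.dim = Y.dim) (hz : z ∈ X.topCycles) : transfer (topMatrix f) z ∈ Y.topCycles := by
  have hf_finite := rowFinite_chainMatrix hf.isControlled hF.finite_fiber
  have hcomm : Y.d.restrictScalars ℤ ∘ₗ f = f ∘ₗ X.d.restrictScalars ℤ :=
    LinearMap.ext hf.d_comm
  rw [topCycles, Set.mem_ofPred_eq] at hz ⊢
  rw [← transfer_topChain (hf.mem_chains _) hdim,
    ← transfer_chainMatrix_comp (rowFinite_chainMatrix_id (.of_linearMap Y.d)) hf_finite, hcomm,
    transfer_chainMatrix_comp hf_finite (rowFinite_chainMatrix_id (.of_linearMap X.d)), hz,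
    transfer_zero_right]

lemma isTransferMatrix_topMatrix (hF : IsCoarseInverse F F') (hf : IsControlledChainMap F f)
    (hdim : X.dim = Y.dim) : IsTransferMatrix X.topCycles Y.topCycles F' (topMatrix f) := by
  obtain ⟨hentries, D, hD, hfD⟩ := exists_finite_chainMatrix hf.isControlled
  refine ⟨fun z => transfer_topMatrix_mem_topCycles hF hf hdim,
    hentries.subset (Set.range_subset_iff.2 fun p => ⟨((Y.top, p.1), (X.top, p.2)), rfl⟩), ?_⟩
  obtain ⟨E₁, hE₁, hF'⟩ := hF.bornologous_inv D hD
  obtain ⟨E₂, hE₂, hFF'⟩ := hF.left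
  refine ⟨(E₂ * E₁)⁻¹, (hE₂.mul hE₁).inv, fun y x hyx => ?_⟩
  rw [Set.mem_inv]
  simpa [mul_assoc] using Set.mul_mem_mul (hFF' x) (hF' _ _ (hfD _ _ hyx))

lemma transfer_topMatrix_transfer_topMatrix (hX : X.IsResolution (augmentationIdeal ℤ G))
    (hF : IsCoarseInverse F F') (hf : IsControlledChainMap F f) (hf' : IsControlledChainMap F' f')
    (hdim : X.dim = Y.dim) (hz : z ∈ X.topCycles) :
    transfer (topMatrix f') (transfer (topMatrix f) z) = z := by
  apply topChain_injective
  rw [← transfer_topChain (hf'.mem_chains _) hdim.symm, ← transfer_topChain (hf.mem_chains _) hdim,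
    ← transfer_chainMatrix_comp (rowFinite_chainMatrix hf'.isControlled hF.symm.finite_fiber)
      (rowFinite_chainMatrix hf.isControlled hF.finite_fiber)]
  exact transfer_topChain_of_close hX hF.left (hf'.comp hf) hz

theorem exists_isTransferMatrix (hX : X.IsResolution (augmentationIdeal ℤ G))
    (hY : Y.IsResolution (augmentationIdeal ℤ H)) (hF : IsCoarseInverse F F')
    (hdim : X.dim = Y.dim) : ∃ (M : Matrix H G ℤ) (M' : Matrix G H ℤ),
      IsTransferMatrix X.topCycles Y.topCycles F' M ∧
      IsTransferMatrix Y.topCycles X.topCycles F M' ∧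
      Set.InvOn (transfer M') (transfer M) X.topCycles Y.topCycles := by
  obtain ⟨f, hf⟩ := exists_isControlledChainMap hX hY hF.bornologous
  obtain ⟨f', hf'⟩ := exists_isControlledChainMap hY hX hF.bornologous_inv
  exact ⟨topMatrix f, topMatrix f', isTransferMatrix_topMatrix hF hf hdim,
    isTransferMatrix_topMatrix hF.symm hf' hdim.symm,
    fun _ => transfer_topMatrix_transfer_topMatrix hX hF hf hf' hdim,
    fun _ => transfer_topMatrix_transfer_topMatrix hY hF.symm hf' hf hdim.symm⟩

end TopCycles

section Convolution

variable {G : Type*} [Group G] {X : CellComplex ℤ[G]} {z : G → ℝ}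

/-- The value at `y` of the convolution of `z` with a variable element of the group ring. -/
noncomputable def convolve (z : G → ℝ) (y : G) : ℤ[G] →ₗ[ℤ] ℝ :=
  (MonoidAlgebra.basis G ℤ).constr ℤ fun g => z (y * g⁻¹)

lemma convolve_of (z : G → ℝ) (y g : G) : convolve z y (of ℤ G g) = z (y * g⁻¹) := by
  rw [convolve, MonoidAlgebra.of_apply, ← MonoidAlgebra.basis_apply, Module.Basis.constr_basis]

lemma transfer_chainMatrix_d_topChain (z : G → ℝ) (τ : X.Cell) (y : G) :
    transfer (chainMatrix (X.d.restrictScalars ℤ)) (X.topChain z) (τ, y) =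
      convolve z y (X.d (Pi.single X.top 1) τ) := by
  set r := X.d (Pi.single X.top 1) τ with hr
  have hentry (x : G) : chainMatrix (X.d.restrictScalars ℤ) (τ, y) (X.top, x) =
      r.coeff (x⁻¹ * y) := by
    have hcell : (chainBasis (X.top, x) : X.Chain) = of ℤ G x • Pi.single X.top 1 := by
      rw [chainBasis_apply, ← Pi.single_smul, smul_eq_mul, mul_one]
    rw [chainMatrix_apply, hcell, LinearMap.restrictScalars_apply, map_smul]
    simp [hr]
  rw [topChain, transfer_extend _ (Prod.mk_right_injective _), transfer,
    ← finsum_comp_equiv ((Equiv.inv G).trans (Equiv.mulLeft y))]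
  simp only [Matrix.submatrix_apply, id, Equiv.trans_apply, Equiv.inv_apply, Equiv.coe_mulLeft,
    hentry, mul_inv_rev, inv_inv, inv_mul_cancel_right]
  rw [convolve, Module.Basis.constr_apply, Finsupp.sum, finsum_eq_sum_of_support_subset]
  · refine Finset.sum_congr rfl fun g _ => (zsmul_eq_mul _ _).symm
  · intro g hg
    refine Finset.mem_coe.2 (Finsupp.mem_support_iff.2 fun h => hg ?_)
    have hr_coeff : r.coeff g = 0 := h
    simp only [hr_coeff, Int.cast_zero, zero_mul]

lemma mem_topCycles_iff : z ∈ X.topCycles ↔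
    ∀ y, ∀ r ∈ AddSubgroup.closure (Set.range (X.d (Pi.single X.top 1))), convolve z y r = 0 := by
  have hclosure (y : G) : (∀ τ, convolve z y (X.d (Pi.single X.top 1) τ) = 0) ↔
      ∀ r ∈ AddSubgroup.closure (Set.range (X.d (Pi.single X.top 1))), convolve z y r = 0 := by
    change _ ↔ AddSubgroup.closure _ ≤ (convolve z y).toAddMonoidHom.ker
    rw [AddSubgroup.closure_le, Set.range_subset_iff]
    rfl
  simp only [← hclosure, topCycles, Set.mem_ofPred_eq, funext_iff, Prod.forall,
    transfer_chainMatrix_d_topChain, Pi.zero_apply]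
  exact forall_comm

end Convolution

end CellComplex

namespace GammaGroup

/-! ### Top-dimensional cycles -/

section IsCycle

variable {k l : ℕ} {n : Fin k → ℕ} {m : Fin l → ℕ}

/-- The `s`-th child of `g` in direction `i`. The coset of `g` for the subgroup generated by `b` has
the `n i` children represented by `0 ≤ s < n i`. -/
def child (i : Fin k) (g : GammaGroup n) (s : ℕ) : GammaGroup n :=
  g * (gammaB n ^ s)⁻¹ * (gammaA n i)⁻¹

/-- Coefficient functions of locally finite real cycles of top degree of `GammaGroup n`. They are
functions on the cosets of the subgroup generated by `b`, and in each direction the value at a coset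
is the sum of the values at its children. -/
structure IsCycle (z : GammaGroup n → ℝ) : Prop where
  apply_mul_gammaB : ∀ y, z (y * gammaB n) = z y
  eq_sum : ∀ i y, z y = ∑ s ∈ Finset.range (n i), z (child i y s)

lemma convolve_gammaB_sub_one (z : GammaGroup n → ℝ) (y : GammaGroup n) :
    CellComplex.convolve z y (of ℤ _ (gammaB n) - 1) = z (y * (gammaB n)⁻¹) - z y := by
  rw [map_sub, ← map_one (of ℤ (GammaGroup n)), CellComplex.convolve_of, CellComplex.convolve_of,
    inv_one, mul_one]

lemma convolve_one_sub_relatorSum (z : GammaGroup n → ℝ) (i : Fin k) (y : GammaGroup n) :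
    CellComplex.convolve z y (1 - relatorSum n i) =
      z y - ∑ s ∈ Finset.range (n i), z (child i y s) := by
  rw [map_sub, ← map_one (of ℤ (GammaGroup n)), CellComplex.convolve_of, inv_one, mul_one,
    relatorSum, Finset.mul_sum, map_sum]
  congr! 2 with s
  rw [← map_pow, ← map_mul, CellComplex.convolve_of, mul_inv_rev, ← mul_assoc,
    child]

lemma isCycle_iff_convolve_eq_zero {z : GammaGroup n → ℝ} : IsCycle z ↔ ∀ y, ∀ r ∈
    AddSubgroup.closure (insert (of ℤ _ (gammaB n) - 1) (Set.range (1 - relatorSum n ·))),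
      CellComplex.convolve z y r = 0 := by
  have hclosure (y : GammaGroup n) : (∀ r ∈ AddSubgroup.closure
      (insert (of ℤ _ (gammaB n) - 1) (Set.range (1 - relatorSum n ·))),
        CellComplex.convolve z y r = 0) ↔ z (y * (gammaB n)⁻¹) = z y ∧
      ∀ i, z y = ∑ s ∈ Finset.range (n i), z (child i y s) := by
    change AddSubgroup.closure _ ≤ (CellComplex.convolve z y).toAddMonoidHom.ker ↔ _
    rw [AddSubgroup.closure_le, Set.insert_subset_iff, Set.range_subset_iff]
    refine and_congr ?_ (forall_congr' fun i => ?_)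
    · exact (iff_of_eq (congrArg (· = 0) (convolve_gammaB_sub_one z y))).trans sub_eq_zero
    · exact (iff_of_eq (congrArg (· = 0) (convolve_one_sub_relatorSum z i y))).trans sub_eq_zero
  simp only [hclosure, forall_and]
  refine ⟨fun hz => ⟨fun y => ?_, fun y i => hz.eq_sum i y⟩,
    fun hz => ⟨fun y => ?_, fun i y => hz.2 y i⟩⟩
  · rw [← hz.apply_mul_gammaB, inv_mul_cancel_right]
  · rw [← hz.1, mul_inv_cancel_right]

variable [PositiveTuple n] [PositiveTuple m]

@[simp]
lemma exponent_child (i : Fin k) (g : GammaGroup n) (s : ℕ) :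
    exponent (child i g s) = exponent g - Pi.single i 1 := by
  simp [child, sub_eq_add_neg]

@[simp]
lemma modulus_child (i : Fin k) (g : GammaGroup n) (s : ℕ) :
    modulus (child i g s) = modulus g * (n i : ℚ)⁻¹ := by
  simp [child, ← zpow_natCast]

lemma translation_child (i : Fin k) (g : GammaGroup n) (s : ℕ) :
    translation (child i g s) = translation g - (modulus g)⁻¹ * s := by
  simp [child, translation_mul, translation_inv, ← zpow_natCast, sub_eq_add_neg]

variable (n) in
lemma exists_isResolution_topCycles_eq : ∃ X : CellComplex ℤ[GammaGroup n],
    X.IsResolution (augmentationIdeal ℤ (GammaGroup n)) ∧ X.dim = k + 1 ∧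
      X.topCycles = {z | IsCycle z} := by
  obtain ⟨X, hX, hdim, hclosure⟩ := exists_isResolution n
  refine ⟨X, hX, hdim, Set.ext fun z => ?_⟩
  rw [CellComplex.mem_topCycles_iff, hclosure]
  exact isCycle_iff_convolve_eq_zero.symm

lemma isCycle_modulus : IsCycle fun g : GammaGroup n => (modulus g : ℝ) where
  apply_mul_gammaB y := by simp
  eq_sum i y := by
    have hn : (n i : ℝ) ≠ 0 := by exact_mod_cast PositiveTuple.cast_ne_zero (n := n) i
    simp only [modulus_child, Rat.cast_mul, Rat.cast_inv, Rat.cast_natCast,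
      Finset.sum_const, Finset.card_range, nsmul_eq_mul]
    field_simp

theorem exists_isTransferMatrix {F : GammaGroup n → GammaGroup m}
    {F' : GammaGroup m → GammaGroup n} (hF : IsCoarseInverse F F') :
    k = l ∧ ∃ (M : Matrix (GammaGroup m) (GammaGroup n) ℤ)
      (M' : Matrix (GammaGroup n) (GammaGroup m) ℤ),
      IsTransferMatrix {z | IsCycle z} {z | IsCycle z} F' M ∧
      IsTransferMatrix {z | IsCycle z} {z | IsCycle z} F M' ∧
      Set.InvOn (transfer M') (transfer M) {z | IsCycle z} {z | IsCycle z} := by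
  obtain ⟨X, hX, hX_dim, hX_cycles⟩ := exists_isResolution_topCycles_eq n
  obtain ⟨Y, hY, hY_dim, hY_cycles⟩ := exists_isResolution_topCycles_eq m
  have hmodulus {k : ℕ} {n : Fin k → ℕ} [PositiveTuple n] :
      (fun g : GammaGroup n => (modulus g : ℝ)) ≠ 0 :=
    Function.ne_iff.2 ⟨1, by simp⟩
  have hdim : X.dim = Y.dim := le_antisymm
    (CellComplex.dim_le_dim hX hY hF (hX_cycles ▸ isCycle_modulus) hmodulus)
    (CellComplex.dim_le_dim hY hX hF.symm (hY_cycles ▸ isCycle_modulus) hmodulus)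
  have htransfer := CellComplex.exists_isTransferMatrix hX hY hF hdim
  rw [hX_cycles, hY_cycles] at htransfer
  exact ⟨by omega, htransfer⟩

end IsCycle

end GammaGroup

/-! ### Denominators coprime to a given integer -/

section CoprimeDen

/-- The ring of rationals whose denominator is coprime to `p`. -/
def coprimeDen (p : ℕ) : Subring ℚ where
  carrier := {q | q.den.Coprime p}
  one_mem' := by simp
  zero_mem' := by simp
  mul_mem' hx hy := (hx.mul_left hy).coprime_dvd_left (Rat.mul_den_dvd _ _)
  add_mem' hx hy := (hx.mul_left hy).coprime_dvd_left (Rat.add_den_dvd _ _)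
  neg_mem' hx := by simpa using hx

lemma mem_coprimeDen {p : ℕ} {q : ℚ} : q ∈ coprimeDen p ↔ q.den.Coprime p := Iff.rfl

lemma inv_natCast_mem_coprimeDen {p c : ℕ} (hc : c.Coprime p) : (c : ℚ)⁻¹ ∈ coprimeDen p := by
  rcases eq_or_ne c 0 with rfl | hc0
  · simp
  · rwa [mem_coprimeDen, Rat.inv_natCast_den_of_pos (Nat.pos_of_ne_zero hc0)]

lemma inv_natCast_self_notMem_coprimeDen {p : ℕ} (hp : 2 ≤ p) : (p : ℚ)⁻¹ ∉ coprimeDen p := by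
  rw [mem_coprimeDen, Rat.inv_natCast_den_of_pos (by omega), Nat.coprime_self]
  omega

lemma den_dvd_of_mul_natCast_eq_intCast {q : ℚ} {c : ℕ} {z : ℤ} (hc : c ≠ 0) (h : q * c = z) :
    q.den ∣ c := by
  have hq : q = Rat.divInt z c := by
    rw [Rat.divInt_eq_div, ← h]
    push_cast
    field_simp
  exact_mod_cast hq ▸ Rat.den_dvd z c

lemma exists_eq_intCast_of_mem_coprimeDen {p R : ℕ} {q : ℚ} {z : ℤ} (hp : p ≠ 0)
    (hq : q ∈ coprimeDen p) (h : q * (p : ℚ) ^ R = z) : ∃ w : ℤ, q = w := by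
  have hden : q.den = 1 := Nat.Coprime.eq_one_of_dvd (Nat.Coprime.pow_right R hq)
    (den_dvd_of_mul_natCast_eq_intCast (pow_ne_zero R hp) (by exact_mod_cast h))
  exact ⟨q.num, (Rat.coe_int_num_of_den_eq_one hden).symm⟩

lemma exists_residue {p : ℕ} (hp : p ≠ 0) {q : ℚ} (hq : q ∈ coprimeDen p) :
    ∃ s < p, (q - (s : ℕ)) * (p : ℚ)⁻¹ ∈ coprimeDen p := by
  have : NeZero p := ⟨hp⟩
  let s : ZMod p := q.num * (q.den : ZMod p)⁻¹
  obtain ⟨w, hw⟩ : (p : ℤ) ∣ q.num - s.val * q.den := by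
    rw [← ZMod.intCast_zmod_eq_zero_iff_dvd]
    push_cast
    rw [ZMod.natCast_zmod_val, mul_assoc, mul_comm _ (q.den : ZMod p),
      ZMod.coe_mul_inv_eq_one _ hq, mul_one, sub_self]
  have hquot : (q - s.val) * (p : ℚ)⁻¹ = w * (q.den : ℚ)⁻¹ := by
    have hw_cast : (q.num : ℚ) - s.val * q.den = p * w := by exact_mod_cast hw
    have hp_cast : (p : ℚ) ≠ 0 := Nat.cast_ne_zero.2 hp
    have hden : (q.den : ℚ) ≠ 0 := Nat.cast_ne_zero.2 q.den_ne_zero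
    nth_rw 1 [← Rat.num_div_den q]
    field_simp
    linarith
  refine ⟨s.val, s.val_lt, ?_⟩
  rw [hquot]
  exact mul_mem (intCast_mem _ w) (inv_natCast_mem_coprimeDen hq)

lemma residue_unique {p s t : ℕ} {q : ℚ} (hsp : s < p) (htp : t < p)
    (hs : (q - s) * (p : ℚ)⁻¹ ∈ coprimeDen p) (ht : (q - t) * (p : ℚ)⁻¹ ∈ coprimeDen p) :
    s = t := by
  have hp : p ≠ 0 := by omega
  have hp_cast : (p : ℚ) ≠ 0 := Nat.cast_ne_zero.2 hp
  have hsub : ((q - s) * (p : ℚ)⁻¹ - (q - t) * (p : ℚ)⁻¹) * p = t - s := by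
    field_simp
    ring
  obtain ⟨w, hw⟩ := exists_eq_intCast_of_mem_coprimeDen (R := 1) (z := t - s) hp (sub_mem hs ht)
    (by rw [pow_one, hsub]; push_cast; rfl)
  rw [hw] at hsub
  have hdvd : (p : ℤ) ∣ t - s := ⟨w, by rw [mul_comm]; exact_mod_cast hsub.symm⟩
  exact (Nat.modEq_iff_dvd.2 hdvd).eq_of_lt_of_lt hsp htp

end CoprimeDen

lemma sum_range_mul_eq_sum_range {R : Type*} [AddCommMonoid R] {p u : ℕ} {f : ℕ → R}
    (hf : ∀ s t, s ≡ t [MOD p] → f s = f t) (hu : u.Coprime p) :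
    ∑ s ∈ Finset.range p, f (s * u) = ∑ s ∈ Finset.range p, f s := by
  rcases p.eq_zero_or_pos with rfl | hp
  · simp
  have hmaps : Set.MapsTo (fun s => s * u % p) (Finset.range p) (Finset.range p) := fun s _ => by
    simpa using Nat.mod_lt _ hp
  have hinj : Set.InjOn (fun s => s * u % p) (Finset.range p) := fun s hs t ht hst =>
    (Nat.ModEq.cancel_right_of_coprime (Nat.coprime_comm.1 hu) hst).eq_of_lt_of_lt
      (Finset.mem_range.1 hs) (Finset.mem_range.1 ht)
  exact Finset.sum_nbij _ hmaps hinj (Finset.surjOn_of_injOn_of_card_le _ hmaps hinj le_rfl)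
    fun s _ => hf _ _ (Nat.mod_modEq _ _).symm

namespace GammaGroup

section IsCycle

variable {k : ℕ} {n : Fin k → ℕ} {z : GammaGroup n → ℝ}

lemma gammaB_zpow_mul_gammaA_pow (i : Fin k) (j : ℤ) (d : ℕ) :
    gammaB n ^ j * gammaA n i ^ d = gammaA n i ^ d * gammaB n ^ (j * n i ^ d) := by
  induction d generalizing j with
  | zero => simp
  | succ d ih =>
    have hsemi (j : ℤ) : gammaB n ^ j * gammaA n i = gammaA n i * gammaB n ^ (n i * j) := by
      rw [zpow_mul, zpow_natCast, ((semiconjBy_gammaA n i).zpow_right j).eq]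
    rw [pow_succ, ← mul_assoc, ih, mul_assoc, hsemi, ← mul_assoc, pow_succ]
    ring_nf

lemma child_mul_gammaA_pow_succ (i : Fin k) (g : GammaGroup n) (s d : ℕ) :
    child i g s * gammaA n i ^ (d + 1) = g * gammaB n ^ (-s : ℤ) * gammaA n i ^ d := by
  rw [child, pow_succ', zpow_neg, zpow_natCast]
  group

lemma child_mul_gammaA_pow (i j : Fin k) (g : GammaGroup n) (s d : ℕ) :
    child j g s * gammaA n i ^ d = child j (g * gammaA n i ^ d) (s * n i ^ d) := by
  have hcomm : (gammaA n j)⁻¹ * gammaA n i ^ d = gammaA n i ^ d * (gammaA n j)⁻¹ :=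
    ((commute_gammaA n j i).inv_left.pow_right d).eq
  have hb := gammaB_zpow_mul_gammaA_pow (n := n) i (-s) d
  rw [neg_mul, zpow_neg, zpow_neg, zpow_natCast] at hb
  rw [child, child, mul_assoc, hcomm, ← mul_assoc, mul_assoc g, hb]
  simp only [← mul_assoc]
  norm_cast

lemma child_add_mul (i : Fin k) (g : GammaGroup n) (s t : ℕ) :
    child i g (s + n i * t) = child i g s * gammaB n ^ (-t : ℤ) := by
  have hb : (gammaA n i)⁻¹ * gammaB n ^ (-t : ℤ) =
      gammaB n ^ (-t * n i ^ 1 : ℤ) * (gammaA n i)⁻¹ := by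
    have := gammaB_zpow_mul_gammaA_pow (n := n) i (-t) 1
    rw [pow_one (gammaA n i)] at this
    rw [inv_mul_eq_iff_eq_mul, ← mul_assoc, ← this, mul_inv_cancel_right]
  rw [child, child, mul_assoc _ _ (gammaB n ^ _), hb, pow_one, neg_mul]
  group

namespace IsCycle

lemma apply_mul_gammaB_zpow (hz : IsCycle z) (y : GammaGroup n) (j : ℤ) :
    z (y * gammaB n ^ j) = z y := by
  induction j with
  | zero => simp
  | succ j ih => rw [zpow_add_one, ← mul_assoc, hz.apply_mul_gammaB, ih]
  | pred j ih => rw [← hz.apply_mul_gammaB, mul_assoc, ← zpow_add_one, sub_add_cancel, ih]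

lemma apply_mul_gammaB_zpow_mul_gammaA_pow (hz : IsCycle z) (i : Fin k) (y : GammaGroup n) (j : ℤ)
    (d : ℕ) : z (y * gammaB n ^ j * gammaA n i ^ d) = z (y * gammaA n i ^ d) := by
  rw [mul_assoc, gammaB_zpow_mul_gammaA_pow, ← mul_assoc, hz.apply_mul_gammaB_zpow]

lemma translate (hz : IsCycle z) (w : GammaGroup n) : IsCycle fun g => z (w * g) where
  apply_mul_gammaB y := by rw [← mul_assoc, hz.apply_mul_gammaB]
  eq_sum i y := by
    rw [hz.eq_sum i]
    simp only [child, mul_assoc]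

lemma apply_child_of_modEq (hz : IsCycle z) (i : Fin k) (y : GammaGroup n) {s t : ℕ}
    (hst : s ≡ t [MOD n i]) : z (child i y s) = z (child i y t) := by
  rw [← Nat.mod_add_div s (n i), ← Nat.mod_add_div t (n i), show s % n i = t % n i from hst,
    child_add_mul, child_add_mul, hz.apply_mul_gammaB_zpow, hz.apply_mul_gammaB_zpow]

lemma eq_sum_mul_gammaA_pow (hz : IsCycle z) {i j : Fin k} (hij : (n i).Coprime (n j))
    (y : GammaGroup n) (d : ℕ) :
    z (y * gammaA n i ^ d) = ∑ s ∈ Finset.range (n j), z (child j y s * gammaA n i ^ d) := by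
  simp only [child_mul_gammaA_pow]
  rw [hz.eq_sum j, sum_range_mul_eq_sum_range (fun s t => hz.apply_child_of_modEq j _)
    (hij.pow_left d)]

end IsCycle

end IsCycle

/-! ### Collapsing a cycle onto a ray -/

section Collapse

variable {k : ℕ} {n : Fin k → ℕ} [AdmissibleTuple n] {z : GammaGroup n → ℝ}

lemma modulus_mem_coprimeDen {i : Fin k} {g : GammaGroup n} (hg : 0 ≤ exponent g i) :
    modulus g ∈ coprimeDen (n i) := by
  refine prod_mem fun j _ => ?_
  rcases eq_or_ne j i with rfl | hj
  · lift exponent g j to ℕ using hg with d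
    exact pow_mem (natCast_mem _ _) d
  · cases exponent g j with
    | ofNat d => exact pow_mem (natCast_mem _ _) d
    | negSucc d =>
      rw [zpow_negSucc, ← inv_pow]
      exact pow_mem (inv_natCast_mem_coprimeDen (AdmissibleTuple.coprime hj)) _

lemma inv_modulus_mem_coprimeDen {i : Fin k} {g : GammaGroup n} (hg : exponent g i ≤ 0) :
    (modulus g)⁻¹ ∈ coprimeDen (n i) := by
  rw [← modulus_inv]
  exact modulus_mem_coprimeDen (by simpa using hg)

/-- The descendants of the identity in direction `i`. -/
def halfSpace (i : Fin k) : Set (GammaGroup n) :=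
  {g | exponent g i ≤ 0 ∧ translation g ∈ coprimeDen (n i)}

/-- The line in direction `i` towards `-1`, which in each generation below the identity contains
exactly one coset, and avoids the first child of the identity. -/
def ray (i : Fin k) : Set (GammaGroup n) :=
  {g | modulus g * (translation g + 1) ∈ coprimeDen (n i)}

lemma mul_gammaB_mem_halfSpace_iff {i : Fin k} {g : GammaGroup n} :
    g * gammaB n ∈ halfSpace i ↔ g ∈ halfSpace i := by
  simp only [halfSpace, Set.mem_ofPred_eq, exponent_mul, exponent_gammaB, add_zero, translation_mul,
    translation_gammaB, mul_one]
  exact and_congr_right fun hg => add_mem_cancel_right (inv_modulus_mem_coprimeDen hg)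

lemma mul_gammaB_mem_ray_iff {i : Fin k} {g : GammaGroup n} :
    g * gammaB n ∈ ray i ↔ g ∈ ray i := by
  have hmul : modulus (g * gammaB n) * (translation (g * gammaB n) + 1) =
      modulus g * (translation g + 1) + 1 := by
    have := (modulus_pos g).ne'
    rw [modulus_mul, translation_mul, modulus_gammaB, translation_gammaB]
    field_simp
    ring
  rw [ray, Set.mem_ofPred_eq, hmul, Set.mem_ofPred_eq]
  exact add_mem_cancel_right (one_mem _)

lemma translation_child_mem_coprimeDen_iff {i : Fin k} (j : Fin k) {g : GammaGroup n}
    (hg : exponent g i ≤ 0) (s : ℕ) :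
    translation (child j g s) ∈ coprimeDen (n i) ↔ translation g ∈ coprimeDen (n i) := by
  rw [translation_child, sub_eq_add_neg]
  exact add_mem_cancel_right
    (neg_mem (mul_mem (inv_modulus_mem_coprimeDen hg) (natCast_mem _ s)))

lemma exponent_child_of_ne {i j : Fin k} (hij : i ≠ j) (g : GammaGroup n) (s : ℕ) :
    exponent (child j g s) i = exponent g i := by
  simp [hij]

lemma exponent_child_self (i : Fin k) (g : GammaGroup n) (s : ℕ) :
    exponent (child i g s) i = exponent g i - 1 := by
  simp

lemma child_mem_ray_iff {i j : Fin k} {g : GammaGroup n} {s : ℕ} :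
    child j g s ∈ ray i ↔
      (modulus g * (translation g + 1) - s) * (n j : ℚ)⁻¹ ∈ coprimeDen (n i) := by
  have hmul : modulus (child j g s) * (translation (child j g s) + 1) =
      (modulus g * (translation g + 1) - s) * (n j : ℚ)⁻¹ := by
    have := (modulus_pos g).ne'
    rw [modulus_child, translation_child]
    field_simp
    ring
  rw [ray, Set.mem_ofPred_eq, hmul]

lemma child_mem_halfSpace_iff_of_ne {i j : Fin k} (hij : i ≠ j) {g : GammaGroup n} (s : ℕ) :
    child j g s ∈ halfSpace i ↔ g ∈ halfSpace i := by
  simp only [halfSpace, Set.mem_ofPred_eq, exponent_child_of_ne hij]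
  exact and_congr_right fun hg => translation_child_mem_coprimeDen_iff j hg s

lemma child_mem_ray_iff_of_ne {i j : Fin k} (hij : i ≠ j) {g : GammaGroup n} (s : ℕ) :
    child j g s ∈ ray i ↔ g ∈ ray i := by
  have hinv : (n j : ℚ)⁻¹ ∈ coprimeDen (n i) :=
    inv_natCast_mem_coprimeDen (AdmissibleTuple.coprime hij.symm)
  rw [child_mem_ray_iff, ray, Set.mem_ofPred_eq]
  refine ⟨fun hg => ?_, fun hg => mul_mem (sub_mem hg (natCast_mem _ s)) hinv⟩
  have := add_mem (mul_mem hg (natCast_mem _ (n j))) (natCast_mem _ s)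
  rwa [inv_mul_cancel_right₀ (PositiveTuple.cast_ne_zero j), sub_add_cancel] at this

lemma child_mem_halfSpace {i : Fin k} {g : GammaGroup n} (hg : g ∈ halfSpace i) (s : ℕ) :
    child i g s ∈ halfSpace i := by
  refine ⟨?_, (translation_child_mem_coprimeDen_iff i hg.1 s).2 hg.2⟩
  rw [exponent_child_self]
  linarith [hg.1]

lemma exponent_eq_one_of_child_mem_halfSpace {i : Fin k} {g : GammaGroup n} {s : ℕ}
    (hg : g ∉ halfSpace i) (hs : child i g s ∈ halfSpace i) : exponent g i = 1 := by
  by_contra hne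
  have hs_exp := hs.1
  rw [exponent_child_self] at hs_exp
  have hg_exp : exponent g i ≤ 0 := by omega
  exact hg ⟨hg_exp, (translation_child_mem_coprimeDen_iff i hg_exp s).1 hs.2⟩

lemma mem_ray_of_mem_halfSpace {i : Fin k} {g : GammaGroup n} (hg : g ∈ halfSpace i)
    (hexp : exponent g i = 0) : g ∈ ray i :=
  mul_mem (modulus_mem_coprimeDen hexp.ge) (add_mem hg.2 (one_mem _))

lemma mem_ray_of_child_mem_ray {i : Fin k} {g : GammaGroup n} {s : ℕ} (hs : child i g s ∈ ray i) :
    g ∈ ray i := by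
  have := add_mem (mul_mem (child_mem_ray_iff.1 hs) (natCast_mem _ (n i))) (natCast_mem _ s)
  rwa [inv_mul_cancel_right₀ (PositiveTuple.cast_ne_zero i), sub_add_cancel] at this

open Classical in
/-- The function that agrees with `z` outside `halfSpace i` and is obtained inside `halfSpace i` by
moving the whole weight of `z` onto `ray i`. -/
noncomputable def collapse (i : Fin k) (z : GammaGroup n → ℝ) (g : GammaGroup n) : ℝ :=
  if g ∈ halfSpace i then
    if g ∈ ray i then z (g * gammaA n i ^ (-exponent g i).toNat) else 0
  else z g

lemma collapse_of_mem_ray {i : Fin k} {g : GammaGroup n} (hg : g ∈ halfSpace i) (hg' : g ∈ ray i) :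
    collapse i z g = z (g * gammaA n i ^ (-exponent g i).toNat) := by
  rw [collapse, if_pos hg, if_pos hg']

lemma collapse_of_notMem_ray {i : Fin k} {g : GammaGroup n} (hg : g ∈ halfSpace i)
    (hg' : g ∉ ray i) : collapse i z g = 0 := by
  rw [collapse, if_pos hg, if_neg hg']

lemma collapse_of_notMem_halfSpace {i : Fin k} {g : GammaGroup n} (hg : g ∉ halfSpace i) :
    collapse i z g = z g := by
  rw [collapse, if_neg hg]

lemma collapse_child_of_notMem_halfSpace {i : Fin k} {g : GammaGroup n} (hg : g ∉ halfSpace i)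
    (s : ℕ) : collapse i z (child i g s) = z (child i g s) := by
  by_cases hs : child i g s ∈ halfSpace i
  · have hexp : exponent (child i g s) i = 0 := by
      rw [exponent_child_self, exponent_eq_one_of_child_mem_halfSpace hg hs, sub_self]
    rw [collapse_of_mem_ray hs (mem_ray_of_mem_halfSpace hs hexp), hexp]
    simp
  · exact collapse_of_notMem_halfSpace hs

lemma IsCycle.collapse_child_of_mem_ray (hz : IsCycle z) {i : Fin k} {g : GammaGroup n} {s : ℕ}
    (hg : g ∈ halfSpace i) (hs : child i g s ∈ ray i) :
    collapse i z (child i g s) = collapse i z g := by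
  have hexp : (-(exponent g i - 1)).toNat = (-exponent g i).toNat + 1 := by
    have := hg.1
    omega
  rw [collapse_of_mem_ray (child_mem_halfSpace hg s) hs, exponent_child_self, hexp,
    child_mul_gammaA_pow_succ, hz.apply_mul_gammaB_zpow_mul_gammaA_pow,
    collapse_of_mem_ray hg (mem_ray_of_child_mem_ray hs)]

lemma IsCycle.collapse_eq_sum_self (hz : IsCycle z) (i : Fin k) (g : GammaGroup n) :
    collapse i z g = ∑ s ∈ Finset.range (n i), collapse i z (child i g s) := by
  by_cases hg : g ∈ halfSpace i
  swap
  · simp only [collapse_child_of_notMem_halfSpace hg, collapse_of_notMem_halfSpace hg, ← hz.eq_sum]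
  by_cases hray : g ∈ ray i
  · obtain ⟨s, hsn, hs⟩ := exists_residue (PositiveTuple.pos (n := n) i).ne' hray
    rw [Finset.sum_eq_single_of_mem s (Finset.mem_range.2 hsn) fun t ht hts =>
      collapse_of_notMem_ray (child_mem_halfSpace hg t) fun ht' =>
        hts (residue_unique (Finset.mem_range.1 ht) hsn (child_mem_ray_iff.1 ht') hs)]
    exact (hz.collapse_child_of_mem_ray hg (child_mem_ray_iff.2 hs)).symm
  · rw [collapse_of_notMem_ray hg hray, Finset.sum_eq_zero fun s _ =>
      collapse_of_notMem_ray (child_mem_halfSpace hg s) (mt mem_ray_of_child_mem_ray hray)]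

lemma IsCycle.collapse_eq_sum_of_ne (hz : IsCycle z) {i j : Fin k} (hij : i ≠ j)
    (g : GammaGroup n) :
    collapse i z g = ∑ s ∈ Finset.range (n j), collapse i z (child j g s) := by
  by_cases hg : g ∈ halfSpace i
  swap
  · have hg' := fun s => mt (child_mem_halfSpace_iff_of_ne hij s).1 hg
    simp only [collapse_of_notMem_halfSpace hg, collapse_of_notMem_halfSpace (hg' _), hz.eq_sum j g]
  have hg' := fun s => (child_mem_halfSpace_iff_of_ne hij s).2 hg
  by_cases hray : g ∈ ray i
  · have hray' := fun s => (child_mem_ray_iff_of_ne hij s).2 hray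
    simp only [collapse_of_mem_ray hg hray, collapse_of_mem_ray (hg' _) (hray' _),
      exponent_child_of_ne hij]
    exact hz.eq_sum_mul_gammaA_pow (AdmissibleTuple.coprime hij) g _
  · have hray' := fun s => mt (child_mem_ray_iff_of_ne hij s).1 hray
    simp only [collapse_of_notMem_ray hg hray, collapse_of_notMem_ray (hg' _) (hray' _),
      Finset.sum_const_zero]

lemma IsCycle.collapse (hz : IsCycle z) (i : Fin k) : IsCycle (collapse i z) where
  apply_mul_gammaB g := by
    classical
    have hpush := hz.apply_mul_gammaB_zpow_mul_gammaA_pow i g 1 (-exponent g i).toNat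
    rw [zpow_one] at hpush
    simp only [GammaGroup.collapse, exponent_mul, exponent_gammaB, add_zero, hz.apply_mul_gammaB,
      hpush]
    exact if_congr mul_gammaB_mem_halfSpace_iff (if_congr mul_gammaB_mem_ray_iff rfl rfl) rfl
  eq_sum j g := by
    rcases eq_or_ne i j with rfl | hij
    · exact hz.collapse_eq_sum_self i g
    · exact hz.collapse_eq_sum_of_ne hij g

lemma mem_halfSpace_of_gammaA_mul_mem {i : Fin k} {g : GammaGroup n}
    (hg : gammaA n i * g ∈ halfSpace i) : g ∈ halfSpace i := by
  obtain ⟨hexp, htrans⟩ := hg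
  simp only [exponent_mul, exponent_gammaA, Pi.add_apply, Pi.single_eq_same] at hexp
  rw [translation_mul, translation_gammaA, zero_add, modulus_gammaA] at htrans
  refine ⟨by omega, ?_⟩
  have := mul_mem (natCast_mem (coprimeDen (n i)) (n i)) htrans
  rwa [mul_inv_cancel_left₀ (PositiveTuple.cast_ne_zero i)] at this

lemma notMem_ray_of_gammaA_mul_mem_halfSpace {i : Fin k} {g : GammaGroup n}
    (hg : gammaA n i * g ∈ halfSpace i) : g ∉ ray i := by
  intro hray
  refine inv_natCast_self_notMem_coprimeDen (AdmissibleTuple.two_le (n := n) i) ?_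
  have hdiff : (modulus (gammaA n i * g))⁻¹ * (modulus g * (translation g + 1)) -
      translation (gammaA n i * g) = (n i : ℚ)⁻¹ := by
    have hmod := (modulus_pos g).ne'
    have hn := PositiveTuple.cast_ne_zero (n := n) i
    rw [modulus_mul, modulus_gammaA, translation_mul, translation_gammaA, modulus_gammaA]
    field_simp
    ring
  exact hdiff ▸ sub_mem (mul_mem (inv_modulus_mem_coprimeDen hg.1) hray) hg.2

lemma IsCycle.exists_collapse (hz : IsCycle z) (i : Fin k) (w : GammaGroup n) :
    ∃ z', IsCycle z' ∧ (∀ g, w⁻¹ * g ∉ halfSpace i → z' g = z g) ∧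
      ∀ g, gammaA n i * (w⁻¹ * g) ∈ halfSpace i → z' g = 0 := by
  refine ⟨fun g => GammaGroup.collapse i (fun h => z (w * h)) (w⁻¹ * g),
    ((hz.translate w).collapse i).translate w⁻¹, fun g hg => ?_, fun g hg => ?_⟩
  · exact (collapse_of_notMem_halfSpace hg).trans (by rw [mul_inv_cancel_left])
  · exact collapse_of_notMem_ray (mem_halfSpace_of_gammaA_mul_mem hg)
      (notMem_ray_of_gammaA_mul_mem_halfSpace hg)

end Collapse

end GammaGroup

/-! ### Coarse inverses preserve columns -/

lemma transfer_congr {ι κ : Type*} {M : Matrix κ ι ℤ} {z z' : ι → ℝ} {j : κ}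
    (h : ∀ i, M j i ≠ 0 → z i = z' i) : transfer M z j = transfer M z' j :=
  finsum_congr fun i => by
    by_cases hi : M j i = 0
    · simp [hi]
    · rw [h i hi]

namespace GammaGroup

section Columns

variable {k l : ℕ} {n : Fin k → ℕ} {m : Fin l → ℕ} [AdmissibleTuple n]

lemma inv_gammaA_pow_mul_mem_halfSpace_iff {i : Fin k} {r : ℕ} {g : GammaGroup n} :
    (gammaA n i ^ r)⁻¹ * g ∈ halfSpace i ↔
      exponent g i ≤ r ∧ (n i : ℚ) ^ r * translation g ∈ coprimeDen (n i) := by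
  have htrans : translation (gammaA n i ^ r) = 0 := by
    rw [← zpow_natCast, translation_gammaA_zpow]
  rw [halfSpace, Set.mem_ofPred_eq, translation_inv_mul, htrans, sub_zero, modulus_pow,
    modulus_gammaA, exponent_inv_mul]
  simp

lemma eventually_pow_mul_translation_mem_coprimeDen (g : GammaGroup n) (i : Fin k) :
    ∀ᶠ r in Filter.atTop, (n i : ℚ) ^ r * translation g ∈ coprimeDen (n i) := by
  obtain ⟨R, z, hz⟩ := exists_translation_mul_pow_eq g
  obtain ⟨c, hc⟩ : ∃ c, c = ∏ j ∈ Finset.univ.erase i, n j := ⟨_, rfl⟩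
  have hprod : ∏ j, n j = n i * c := by rw [hc, Finset.mul_prod_erase _ _ (Finset.mem_univ i)]
  have hcop : c.Coprime (n i) := hc ▸ Nat.Coprime.prod_left fun j hj =>
    AdmissibleTuple.coprime (Finset.ne_of_mem_erase hj)
  have hc0 : (c : ℚ) ≠ 0 := by
    rw [hc, Nat.cast_prod]
    exact Finset.prod_ne_zero_iff.2 fun j _ => PositiveTuple.cast_ne_zero j
  filter_upwards [Filter.eventually_ge_atTop R] with r hr
  obtain ⟨t, rfl⟩ := Nat.exists_eq_add_of_le hr
  have hval : (n i : ℚ) ^ (R + t) * translation g = (n i : ℚ) ^ t * (z * (c : ℚ)⁻¹ ^ R) := by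
    rw [← hz, hprod, Nat.cast_mul, mul_pow, pow_add, inv_pow]
    field_simp
  rw [hval]
  exact mul_mem (pow_mem (natCast_mem _ _) t)
    (mul_mem (intCast_mem _ z) (pow_mem (inv_natCast_mem_coprimeDen hcop) R))

lemma exists_forall_exponent_le_pow_mul_translation_mem {E : Set (GammaGroup n)} (hE : E.Finite) :
    ∃ R : ℕ, ∀ e ∈ E, ∀ i,
      |exponent e i| ≤ R ∧ (n i : ℚ) ^ R * translation e ∈ coprimeDen (n i) :=
  ((Filter.eventually_all_finite hE).2 fun e _ => Filter.eventually_all.2 fun i =>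
    (tendsto_natCast_atTop_atTop.eventually_ge_atTop |exponent e i|).and
      (eventually_pow_mul_translation_mem_coprimeDen e i)).exists

lemma exists_translation_mul_pow_eq_of_mem_coprimeDen {g : GammaGroup n} {r : ℕ}
    (hg : ∀ i, (n i : ℚ) ^ r * translation g ∈ coprimeDen (n i)) :
    ∃ z : ℤ, translation g * ((∏ i, n i : ℕ) : ℚ) ^ r = z := by
  obtain ⟨R, z, hz⟩ := exists_translation_mul_pow_eq g
  refine exists_eq_intCast_of_mem_coprimeDen (p := ∏ i, n i) (R := R) (z := z * (∏ i, n i : ℕ) ^ r)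
    (Finset.prod_pos fun i _ => PositiveTuple.pos (n := n) i).ne'
    (Nat.Coprime.prod_right fun i _ => mem_coprimeDen.1 ?_) ?_
  · rw [← Finset.mul_prod_erase _ _ (Finset.mem_univ i), Nat.cast_mul, mul_pow, ← mul_assoc,
      mul_comm (translation g)]
    exact mul_mem (hg i) (pow_mem (natCast_mem _ _) r)
  · push_cast at hz ⊢
    rw [← hz]
    ring

lemma exists_finite_gammaB_zpow_mul_mem (r : ℕ) : ∃ E : Set (GammaGroup n), E.Finite ∧ ∀ g,
    (∀ i, |exponent g i| ≤ r ∧ (n i : ℚ) ^ r * translation g ∈ coprimeDen (n i)) →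
      ∃ j : ℤ, ∃ e ∈ E, g = gammaB n ^ j * e := by
  refine ⟨_, finite_setOf_exponent_le_translation_mem r, fun g hg => ?_⟩
  have htrans : translation (gammaB n ^ (-⌊translation g⌋) * g) = Int.fract (translation g) := by
    rw [translation_mul, translation_gammaB_zpow, modulus_gammaB_zpow, inv_one, one_mul,
      Int.cast_neg, neg_add_eq_sub, Int.self_sub_floor]
  refine ⟨⌊translation g⌋, gammaB n ^ (-⌊translation g⌋) * g,
    ⟨fun i => by simpa using (hg i).1, ?_, ?_⟩, by group⟩
  · rw [htrans]
    exact ⟨Int.fract_nonneg _, Int.fract_lt_one _⟩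
  · obtain ⟨z, hz⟩ := exists_translation_mul_pow_eq_of_mem_coprimeDen fun i => (hg i).2
    refine ⟨z - ⌊translation g⌋ * (∏ i, n i : ℕ) ^ r, ?_⟩
    rw [htrans, ← Int.self_sub_floor, sub_mul, hz]
    push_cast
    rfl

lemma exists_inv_gammaA_pow_mul_mem_halfSpace {F' : GammaGroup m → GammaGroup n}
    {M : Matrix (GammaGroup m) (GammaGroup n) ℤ} {E : Set (GammaGroup n)}
    (hmap : Set.MapsTo (transfer M) {z | IsCycle z} {z | IsCycle z})
    (hsupp : ∀ y x, M y x ≠ 0 → (F' y)⁻¹ * x ∈ E) {i : Fin k} {R : ℕ}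
    (hR : ∀ e ∈ E, (gammaA n i ^ R)⁻¹ * e ∈ halfSpace i) (y : GammaGroup m) (j : ℤ)
    (hne : ∃ z, IsCycle z ∧ transfer M z (y * gammaB m ^ j) ≠ 0) :
    ∃ e ∈ E, (gammaA n i ^ (R + 1))⁻¹ * ((F' y)⁻¹ * F' (y * gammaB m ^ j) * e) ∈ halfSpace i := by
  -- Otherwise collapsing `z` would leave its transfer at `y * b ^ j` unchanged, but kill it at `y`.
  by_contra! hnotMem
  obtain ⟨z, hz, hz_ne⟩ := hne
  obtain ⟨z', hz', hz'_eq, hz'_zero⟩ := hz.exists_collapse i (F' y * gammaA n i ^ (R + 1))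
  have heq : transfer M z (y * gammaB m ^ j) = transfer M z' (y * gammaB m ^ j) :=
    transfer_congr fun x hx => by
      refine (hz'_eq x ?_).symm
      convert hnotMem _ (hsupp _ _ hx) using 2
      group
  have hzero : transfer M z' y = 0 := by
    rw [transfer_congr (z' := 0) fun x hx => hz'_zero x ?_, transfer_zero_right, Pi.zero_apply]
    convert hR _ (hsupp _ _ hx) using 1
    rw [pow_succ]
    group
  exact hz_ne (by rw [heq, IsCycle.apply_mul_gammaB_zpow (hmap hz'), hzero])

lemma pow_mul_translation_mem_coprimeDen_of_mul {g e : GammaGroup n} {i : Fin k} {R s : ℕ}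
    (he : (n i : ℚ) ^ R * translation e ∈ coprimeDen (n i)) (hg : exponent g i ≤ s)
    (hge : (n i : ℚ) ^ R * translation (g * e) ∈ coprimeDen (n i)) :
    (n i : ℚ) ^ (R + s) * translation g ∈ coprimeDen (n i) := by
  have hmod : (n i : ℚ) ^ s * (modulus g)⁻¹ ∈ coprimeDen (n i) := by
    rw [← modulus_gammaA, ← modulus_pow, ← modulus_inv, ← modulus_mul]
    exact modulus_mem_coprimeDen (by simpa using hg)
  have hval : (n i : ℚ) ^ (R + s) * translation g =
      (n i : ℚ) ^ s * ((n i : ℚ) ^ R * translation (g * e)) -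
        (n i : ℚ) ^ s * (modulus g)⁻¹ * ((n i : ℚ) ^ R * translation e) := by
    rw [translation_mul]
    ring
  rw [hval]
  exact sub_mem (mul_mem (pow_mem (natCast_mem _ _) s) hge) (mul_mem hmod he)

lemma abs_exponent_le_and_pow_mul_translation_mem {g e e' : GammaGroup n} {i : Fin k} {R : ℕ}
    (he : |exponent e i| ≤ R ∧ (n i : ℚ) ^ R * translation e ∈ coprimeDen (n i))
    (he' : |exponent e' i| ≤ R) (hge : (gammaA n i ^ (R + 1))⁻¹ * (g * e) ∈ halfSpace i)
    (hge' : (gammaA n i ^ (R + 1))⁻¹ * (g⁻¹ * e') ∈ halfSpace i) :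
    |exponent g i| ≤ (2 * R + 1 : ℕ) ∧
      (n i : ℚ) ^ (R + 1 + (2 * R + 1)) * translation g ∈ coprimeDen (n i) := by
  rw [inv_gammaA_pow_mul_mem_halfSpace_iff, exponent_mul, Pi.add_apply] at hge
  rw [inv_gammaA_pow_mul_mem_halfSpace_iff, exponent_mul, exponent_inv, Pi.add_apply,
    Pi.neg_apply] at hge'
  have hexp : |exponent g i| ≤ (2 * R + 1 : ℕ) := by
    have he_abs := abs_le.1 he.1
    have he'_abs := abs_le.1 he'
    rw [abs_le]
    push_cast at hge hge' ⊢
    constructor <;> linarith [hge.1, hge'.1]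
  refine ⟨hexp, pow_mul_translation_mem_coprimeDen_of_mul (e := e) ?_ (abs_le.1 hexp).2 hge.2⟩
  rw [pow_succ', mul_assoc]
  exact mul_mem (natCast_mem _ _) he.2

/-- Up to a bounded error, the map `G` sends left cosets of the subgroup generated by `b` into left
cosets of the subgroup generated by `b`. -/
def PreservesColumns (G : GammaGroup m → GammaGroup n) : Prop :=
  ∃ E : Set (GammaGroup n), E.Finite ∧ ∀ (y : GammaGroup m) (j : ℤ),
    ∃ i : ℤ, ∃ e ∈ E, G (y * gammaB m ^ j) = G y * gammaB n ^ i * e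

lemma preservesColumns_of_isTransferMatrix {F' : GammaGroup m → GammaGroup n}
    {M : Matrix (GammaGroup m) (GammaGroup n) ℤ}
    (hM : IsTransferMatrix {z | IsCycle z} {z | IsCycle z} F' M)
    (hne : ∀ y, ∃ z, IsCycle z ∧ transfer M z y ≠ 0) : PreservesColumns F' := by
  obtain ⟨E, hE, hsupp⟩ := hM.exists_finite_support
  obtain ⟨R, hR⟩ := exists_forall_exponent_le_pow_mul_translation_mem hE
  have hmem (y : GammaGroup m) (j : ℤ) (i : Fin k) := exists_inv_gammaA_pow_mul_mem_halfSpace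
    hM.mapsTo hsupp (fun e he => inv_gammaA_pow_mul_mem_halfSpace_iff.2
      ⟨(abs_le.1 (hR e he i).1).2, (hR e he i).2⟩) y j (hne _)
  obtain ⟨E', hE', hcolumn⟩ := exists_finite_gammaB_zpow_mul_mem (n := n) (R + 1 + (2 * R + 1))
  refine ⟨E', hE', fun y j => ?_⟩
  obtain ⟨g, hg⟩ : ∃ g, g = (F' y)⁻¹ * F' (y * gammaB m ^ j) := ⟨_, rfl⟩
  have hbound (i : Fin k) : |exponent g i| ≤ (2 * R + 1 : ℕ) ∧
      (n i : ℚ) ^ (R + 1 + (2 * R + 1)) * translation g ∈ coprimeDen (n i) := by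
    obtain ⟨e, he, hge⟩ := hmem y j i
    obtain ⟨e', he', hge'⟩ := hmem (y * gammaB m ^ j) (-j) i
    rw [mul_assoc y, ← zpow_add, add_neg_cancel, zpow_zero, mul_one] at hge'
    refine abs_exponent_le_and_pow_mul_translation_mem (hR e he i) (hR e' he' i).1 (hg ▸ hge) ?_
    rwa [hg, mul_inv_rev, inv_inv]
  obtain ⟨i, e, he, hge⟩ := hcolumn g fun i =>
    ⟨(hbound i).1.trans (by push_cast; linarith), (hbound i).2⟩
  exact ⟨i, e, he, by rw [mul_assoc, ← hge, hg, mul_inv_cancel_left]⟩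

end Columns

end GammaGroup

/-! ### The height estimate -/

lemma exists_pos_forall_abs_le {X : Type*} {E : Set X} (hE : E.Finite) (f : X → ℚ) :
    ∃ C, 0 < C ∧ ∀ e ∈ E, |f e| ≤ C := by
  obtain ⟨C, hC⟩ := (hE.image fun e => |f e|).bddAbove
  exact ⟨max C 1, lt_max_of_lt_right one_pos, fun e he =>
    le_max_of_le_left (hC (Set.mem_image_of_mem _ he))⟩

lemma abs_sub_apply_zero_le {f : ℤ → ℚ} {K : ℚ} (hf : ∀ j, |f (j + 1) - f j| ≤ K) (j : ℤ) :
    |f j - f 0| ≤ K * |(j : ℚ)| := by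
  induction j with
  | zero => simp
  | succ i ih =>
    have habs : |(((i : ℤ) + 1 : ℤ) : ℚ)| = |((i : ℤ) : ℚ)| + 1 := by
      push_cast
      rw [Nat.abs_cast, abs_of_nonneg (by positivity)]
    rw [habs, mul_add, mul_one, add_comm (K * _)]
    exact (abs_sub_le _ _ _).trans (add_le_add (hf i) ih)
  | pred i ih =>
    have habs : |((-(i : ℤ) - 1 : ℤ) : ℚ)| = |((-(i : ℤ) : ℤ) : ℚ)| + 1 := by
      push_cast
      rw [abs_neg, Nat.abs_cast, ← neg_add', abs_neg, abs_of_nonneg (by positivity)]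
    have hlast := hf (-(i : ℤ) - 1)
    rw [sub_add_cancel, abs_sub_comm] at hlast
    rw [habs, mul_add, mul_one, add_comm (K * _)]
    exact (abs_sub_le _ _ _).trans (add_le_add hlast ih)

lemma le_of_forall_mul_natCast_le_add {a b c : ℚ} (h : ∀ u : ℕ, a * u ≤ b * u + c) : a ≤ b := by
  by_contra! hba
  obtain ⟨u, hu⟩ := exists_nat_gt (c / (a - b))
  rw [div_lt_iff₀ (sub_pos.2 hba)] at hu
  linarith [h u]

namespace GammaGroup

section Height

variable {k l : ℕ} {n : Fin k → ℕ} {m : Fin l → ℕ}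
variable {F : GammaGroup n → GammaGroup m} {G : GammaGroup m → GammaGroup n}

section

variable [PositiveTuple n]

lemma PreservesColumns.exists_modulus_mul_abs_le (hG : Bornologous G)
    (hcol : PreservesColumns G) :
    ∃ K, 0 < K ∧ ∀ y (j : ℤ),
      modulus (G y) * |translation (G (y * gammaB m ^ j)) - translation (G y)| ≤
        K * |(j : ℚ)| := by
  obtain ⟨E, hE, hcol⟩ := hcol
  obtain ⟨E', hE', hG⟩ := hG {gammaB m} (Set.finite_singleton _)
  obtain ⟨C, hC, hE_le⟩ := exists_pos_forall_abs_le hE fun e => (modulus e)⁻¹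
  obtain ⟨C', hC', hE'_le⟩ := exists_pos_forall_abs_le hE' translation
  refine ⟨C * C', by positivity, fun y j => ?_⟩
  have hsucc (j : ℤ) : |modulus (G y) * translation (G (y * gammaB m ^ (j + 1))) -
      modulus (G y) * translation (G (y * gammaB m ^ j))| ≤ C * C' := by
    obtain ⟨i, e, he, hie⟩ := hcol y j
    have hmod : modulus (G y) = (modulus e)⁻¹ * modulus (G (y * gammaB m ^ j)) := by
      have := (modulus_pos e).ne'
      rw [hie, modulus_mul, modulus_mul, modulus_gammaB_zpow]
      field_simp
    rw [← mul_sub, hmod, mul_assoc, ← translation_inv_mul, abs_mul]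
    refine mul_le_mul (hE_le e he) (hE'_le _ (hG _ _ ?_)) (abs_nonneg _) hC.le
    rw [Set.mem_singleton_iff]
    group
  have := abs_sub_apply_zero_le
    (f := fun j => modulus (G y) * translation (G (y * gammaB m ^ j))) hsucc j
  rwa [← mul_sub, abs_mul, abs_of_pos (modulus_pos _), zpow_zero, mul_one] at this

lemma PreservesColumns.exists_abs_le_modulus_mul_add (hcol : PreservesColumns G) :
    ∃ E : Set (GammaGroup n), E.Finite ∧ ∃ C, ∀ y (j : ℤ), ∃ i : ℤ,
      (G y * gammaB n ^ i)⁻¹ * G (y * gammaB m ^ j) ∈ E ∧ |(i : ℚ)| ≤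
        modulus (G y) * |translation (G (y * gammaB m ^ j)) - translation (G y)| + C := by
  obtain ⟨E, hE, hcol⟩ := hcol
  obtain ⟨C, -, hE_le⟩ := exists_pos_forall_abs_le hE translation
  refine ⟨E, hE, C, fun y j => ?_⟩
  obtain ⟨i, e, he, hie⟩ := hcol y j
  refine ⟨i, by rwa [hie, inv_mul_cancel_left], ?_⟩
  have hi : (i : ℚ) = modulus (G y) * (translation (G (y * gammaB m ^ j)) - translation (G y)) -
      translation e := by
    rw [← translation_inv_mul, hie, mul_assoc, inv_mul_cancel_left, translation_mul,
      translation_gammaB_zpow, modulus_gammaB_zpow, inv_one, one_mul, add_sub_cancel_right]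
  rw [hi, ← abs_of_pos (modulus_pos (G y)), ← abs_mul, abs_of_pos (modulus_pos (G y))]
  exact (abs_sub _ _).trans (add_le_add_right (hE_le e he) _)

lemma PreservesColumns.exists_abs_translation_sub_le (hG : PreservesColumns G)
    {E : Set (GammaGroup n)} (hE : E.Finite) :
    ∃ C, ∀ (j : ℤ) g, (G (gammaB m ^ j))⁻¹ * g ∈ E →
      |translation g - translation (G (gammaB m ^ j))| ≤ C := by
  obtain ⟨E', hE', hG⟩ := hG
  obtain ⟨C, -, hC⟩ := exists_pos_forall_abs_le hE translation
  obtain ⟨C', hC'_pos, hC'⟩ := exists_pos_forall_abs_le hE' fun e => (modulus (G 1) * modulus e)⁻¹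
  refine ⟨C' * C, fun j g hg => ?_⟩
  obtain ⟨i, e, he, hie⟩ := hG 1 j
  have hmod : modulus (G (gammaB m ^ j)) = modulus (G 1) * modulus e := by
    rw [← one_mul (gammaB m ^ j), hie, modulus_mul, modulus_mul, modulus_gammaB_zpow, mul_one]
  have hne := (modulus_pos (G (gammaB m ^ j))).ne'
  calc |translation g - translation (G (gammaB m ^ j))|
      = |(modulus (G 1) * modulus e)⁻¹| * |translation ((G (gammaB m ^ j))⁻¹ * g)| := by
        rw [← abs_mul, ← hmod, translation_inv_mul, inv_mul_cancel_left₀ hne]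
    _ ≤ C' * C := mul_le_mul (hC' e he) (hC _ hg) (abs_nonneg _) hC'_pos.le

end

variable [PositiveTuple m]

lemma mul_gammaB_zpow_num_mul (y : GammaGroup m) (u : ℤ) :
    y * gammaB m ^ ((modulus y).num * u) = gammaB m ^ ((modulus y).den * u) * y := by
  have hmod := (modulus_pos y).ne'
  refine ext_translation_exponent ?_ (by simp)
  rw [translation_mul, translation_mul, translation_gammaB_zpow, translation_gammaB_zpow,
    modulus_gammaB_zpow, inv_one, one_mul, add_comm, Int.cast_mul, Int.cast_mul, Int.cast_natCast]
  rw [← Int.cast_natCast (modulus y).den, mul_left_comm, ← Rat.den_mul_eq_num]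
  field_simp
  push_cast
  ring

lemma exists_abs_translation_inv_mul_le (hFG : IsCoarseInverse F G) {E : Set (GammaGroup n)}
    (hE : E.Finite) :
    ∃ C, ∀ x y, x⁻¹ * G y ∈ E → |translation (y⁻¹ * F x)| ≤ C := by
  obtain ⟨E₁, hE₁, hF⟩ := hFG.bornologous E hE
  obtain ⟨E₂, hE₂, hclose⟩ := hFG.right
  obtain ⟨C, -, hC⟩ := exists_pos_forall_abs_le (hE₂.mul hE₁.inv) translation
  refine ⟨C, fun x y hxy => hC _ (Set.mem_mul.2
    ⟨_, hclose y, _, Set.inv_mem_inv.2 (hF _ _ hxy), ?_⟩)⟩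
  simp only [id, Function.comp_apply]
  group

variable [PositiveTuple n]

lemma PreservesColumns.exists_abs_le_mul_abs_translation (hFG : IsCoarseInverse F G)
    (hF : PreservesColumns F) (hG : PreservesColumns G) :
    ∃ L, 0 < L ∧ ∃ C, ∀ j : ℤ, |(j : ℚ)| ≤ L * |translation (G (gammaB m ^ j))| + C := by
  obtain ⟨E, hE, C₁, hG⟩ := hG.exists_abs_le_modulus_mul_add
  obtain ⟨C₂, hC₂⟩ := exists_abs_translation_inv_mul_le hFG hE
  obtain ⟨K, hK, hF⟩ := hF.exists_modulus_mul_abs_le hFG.bornologous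
  obtain ⟨c, hc⟩ : ∃ c, c = modulus (F (G 1)) := ⟨_, rfl⟩
  obtain ⟨d, hd⟩ : ∃ d, d = modulus (G 1) := ⟨_, rfl⟩
  have hc_pos : 0 < c := hc ▸ modulus_pos _
  have hd_pos : 0 < d := hd ▸ modulus_pos _
  refine ⟨K / c * d, by positivity, K / c * (d * |translation (G 1)| + C₁) +
    |translation (F (G 1))| + C₂, fun j => ?_⟩
  obtain ⟨i, hi_mem, hi⟩ := hG 1 j
  rw [one_mul, ← hd] at hi
  rw [one_mul] at hi_mem
  obtain ⟨x, hx⟩ : ∃ x, x = G 1 * gammaB n ^ i := ⟨_, rfl⟩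
  have hxj : |translation (F x) - j| ≤ C₂ := by
    have := hC₂ _ _ (hx ▸ hi_mem)
    rwa [translation_inv_mul, modulus_gammaB_zpow, translation_gammaB_zpow, one_mul] at this
  have hx1 : |translation (F x) - translation (F (G 1))| ≤ K / c * |(i : ℚ)| := by
    rw [div_mul_eq_mul_div, le_div_iff₀' hc_pos, hc, hx]
    exact hF (G 1) i
  calc |(j : ℚ)| = |(translation (F x) - translation (F (G 1))) + translation (F (G 1)) -
        (translation (F x) - j)| := by ring_nf
    _ ≤ |translation (F x) - translation (F (G 1))| + |translation (F (G 1))| +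
        |translation (F x) - j| := (abs_sub _ _).trans (by gcongr; exact abs_add_le _ _)
    _ ≤ K / c * (d * (|translation (G (gammaB m ^ j))| + |translation (G 1)|) + C₁) +
        |translation (F (G 1))| + C₂ := by
      gcongr
      refine hx1.trans (mul_le_mul_of_nonneg_left (hi.trans ?_) (by positivity))
      gcongr
      exact abs_sub _ _
    _ = _ := by ring

lemma PreservesColumns.exists_den_mul_natCast_le (hFG : IsCoarseInverse F G)
    (hF : PreservesColumns F) (hG : PreservesColumns G) :
    ∃ K, ∀ y, ∃ C, ∀ u : ℕ,
      ((modulus y).den : ℚ) * u ≤ K * (modulus y).num / modulus (G y) * u + C := by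
  obtain ⟨K, -, hdist⟩ := hG.exists_modulus_mul_abs_le hFG.bornologous_inv
  obtain ⟨L, hL, C₁, hj⟩ := hF.exists_abs_le_mul_abs_translation hFG hG
  refine ⟨L * K, fun y => ?_⟩
  obtain ⟨E, hE, hmem⟩ := hFG.bornologous_inv {y} (Set.finite_singleton _)
  obtain ⟨C₂, hC₂⟩ := hG.exists_abs_translation_sub_le hE
  refine ⟨L * (|translation (G y)| + C₂) + C₁, fun u => ?_⟩
  have hnum_nonneg : (0 : ℚ) ≤ (modulus y).num :=
    Int.cast_nonneg (Rat.num_pos.2 (modulus_pos y)).le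
  obtain ⟨g, hg⟩ : ∃ g, g = G (y * gammaB m ^ ((modulus y).num * u : ℤ)) := ⟨_, rfl⟩
  obtain ⟨h, hh⟩ : ∃ h, h = G (gammaB m ^ ((modulus y).den * u : ℤ)) := ⟨_, rfl⟩
  have hden := hj ((modulus y).den * u)
  have hnum := hdist y ((modulus y).num * u)
  have hclose := hC₂ ((modulus y).den * u) g <| hg ▸ hmem _ _ (by
    rw [mul_gammaB_zpow_num_mul, inv_mul_cancel_left]
    exact Set.mem_singleton y)
  rw [Int.cast_mul, Int.cast_natCast, Int.cast_natCast, abs_of_nonneg (by positivity),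
    ← hh] at hden
  rw [Int.cast_mul, Int.cast_natCast, abs_of_nonneg (mul_nonneg hnum_nonneg u.cast_nonneg),
    ← hg] at hnum
  rw [← hh] at hclose
  calc ((modulus y).den : ℚ) * u ≤ L * |translation h| + C₁ := hden
    _ = L * |(translation g - translation (G y)) + translation (G y) -
          (translation g - translation h)| + C₁ := by ring_nf
    _ ≤ L * (|translation g - translation (G y)| + |translation (G y)| +
          |translation g - translation h|) + C₁ := by
        gcongr
        exact (abs_sub _ _).trans (by gcongr; exact abs_add_le _ _)
    _ ≤ L * (K * (modulus y).num / modulus (G y) * u + |translation (G y)| + C₂) + C₁ := by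
        gcongr
        rw [div_mul_eq_mul_div, le_div_iff₀' (modulus_pos _), mul_assoc]
        exact hnum
    _ = _ := by ring

lemma PreservesColumns.exists_modulus_le_mul_modulus (hFG : IsCoarseInverse F G)
    (hF : PreservesColumns F) (hG : PreservesColumns G) :
    ∃ C, ∀ y, modulus (G y) ≤ C * modulus y := by
  obtain ⟨K, hlin⟩ := hF.exists_den_mul_natCast_le hFG hG
  refine ⟨K, fun y => ?_⟩
  obtain ⟨C, hC⟩ := hlin y
  have hle := le_of_forall_mul_natCast_le_add hC
  rw [le_div_iff₀ (modulus_pos _), mul_comm, ← Rat.mul_den_eq_num, ← mul_assoc] at hle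
  exact le_of_mul_le_mul_right hle (Nat.cast_pos.2 (modulus y).den_pos)

end Height

end GammaGroup

/-! ### Cycles near their maximal density -/

lemma exists_lt_le_card_map_eq {α : Type*} {s : Finset α} {f : ℕ → α} (hf : ∀ r, f r ∈ s) :
    ∃ r r', r < r' ∧ r' ≤ s.card ∧ f r = f r' := by
  obtain ⟨r, hr, r', hr', hne, heq⟩ := Finset.exists_ne_map_eq_of_card_lt_of_maps_to
    (s := Finset.range (s.card + 1)) (by simp) fun r _ => hf r
  rw [Finset.mem_range, Nat.lt_succ_iff] at hr hr'
  rcases hne.lt_or_gt with hlt | hlt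
  · exact ⟨r, r', hlt, hr', heq⟩
  · exact ⟨r', r, hlt, hr, heq.symm⟩

namespace GammaGroup

section Density

variable {k l : ℕ} {n : Fin k → ℕ} {m : Fin l → ℕ}
variable {G : GammaGroup m → GammaGroup n} {z : GammaGroup m → ℝ}

lemma IsCycle.neg (hz : IsCycle z) : IsCycle (-z) where
  apply_mul_gammaB y := by rw [Pi.neg_apply, Pi.neg_apply, hz.apply_mul_gammaB]
  eq_sum i y := by simp only [Pi.neg_apply, Finset.sum_neg_distrib, ← hz.eq_sum]

variable [PositiveTuple m]

/-- The density of a function relative to the cycle `modulus`. The density of a cycle at a coset is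
the average of its densities at the children in any direction. -/
noncomputable def density (z : GammaGroup m → ℝ) (y : GammaGroup m) : ℝ :=
  z y / modulus y

lemma density_neg (z : GammaGroup m → ℝ) : density (-z) = -density z :=
  funext fun _ => neg_div _ _

lemma IsCycle.natCast_mul_density (hz : IsCycle z) (j : Fin l) (y : GammaGroup m) :
    m j * density z y = ∑ t ∈ Finset.range (m j), density z (child j y t) := by
  simp only [density, modulus_child, Rat.cast_mul, Rat.cast_inv, Rat.cast_natCast,
    ← Finset.sum_div, ← hz.eq_sum]
  have hm : (m j : ℝ) ≠ 0 := by exact_mod_cast PositiveTuple.cast_ne_zero (n := m) j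
  field_simp

lemma IsCycle.sub_density_child_le (hz : IsCycle z) {c : ℝ} (hc : ∀ y, density z y ≤ c)
    {j : Fin l} {t : ℕ} (ht : t < m j) (y : GammaGroup m) :
    c - density z (child j y t) ≤ m j * (c - density z y) := by
  have hsum : m j * (c - density z y) =
      ∑ t ∈ Finset.range (m j), (c - density z (child j y t)) := by
    rw [mul_sub, hz.natCast_mul_density, Finset.sum_sub_distrib, Finset.sum_const,
      Finset.card_range, nsmul_eq_mul]
  rw [hsum]
  exact Finset.single_le_sum (f := fun t => c - density z (child j y t))
    (fun t _ => sub_nonneg.2 (hc _)) (Finset.mem_range.2 ht)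

lemma IsCycle.sub_density_mul_inv_gammaA_pow_le (hz : IsCycle z) {c : ℝ}
    (hc : ∀ y, density z y ≤ c) (j : Fin l) (y : GammaGroup m) (r : ℕ) :
    c - density z (y * (gammaA m j ^ r)⁻¹) ≤ (m j : ℝ) ^ r * (c - density z y) := by
  induction r with
  | zero => simp
  | succ r ih =>
    have hchild : y * (gammaA m j ^ (r + 1))⁻¹ = child j (y * (gammaA m j ^ r)⁻¹) 0 := by
      rw [child, pow_zero, inv_one, mul_one, pow_succ', mul_inv_rev, mul_assoc]
    rw [hchild, pow_succ', mul_assoc]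
    exact (hz.sub_density_child_le hc (PositiveTuple.pos j) _).trans
      (mul_le_mul_of_nonneg_left ih (Nat.cast_nonneg _))

lemma IsCycle.exists_forall_lt_density (hz : IsCycle z)
    (hbdd : BddAbove (Set.range (density z))) {c : ℝ} (hc : c < sSup (Set.range (density z)))
    (j : Fin l) (R : ℕ) : ∃ y, ∀ r ≤ R, c < density z (y * (gammaA m j ^ r)⁻¹) := by
  obtain ⟨s, hs⟩ : ∃ s, s = sSup (Set.range (density z)) := ⟨_, rfl⟩
  rw [← hs] at hc
  have hle (y : GammaGroup m) : density z y ≤ s := hs ▸ le_csSup hbdd (Set.mem_range_self y)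
  have hm : (1 : ℝ) ≤ m j := Nat.one_le_cast.2 (PositiveTuple.pos j)
  have hlt : s - (s - c) / (m j : ℝ) ^ R < sSup (Set.range (density z)) :=
    hs ▸ sub_lt_self _ (div_pos (sub_pos.2 hc) (by positivity))
  obtain ⟨_, ⟨y, rfl⟩, hy⟩ := exists_lt_of_lt_csSup (Set.range_nonempty _) hlt
  refine ⟨y, fun r hr => ?_⟩
  suffices s - density z (y * (gammaA m j ^ r)⁻¹) < s - c by linarith
  calc s - density z (y * (gammaA m j ^ r)⁻¹)
      ≤ (m j : ℝ) ^ r * (s - density z y) := hz.sub_density_mul_inv_gammaA_pow_le hle j y r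
    _ ≤ (m j : ℝ) ^ R * (s - density z y) :=
        mul_le_mul_of_nonneg_right (pow_le_pow_right₀ hm hr) (sub_nonneg.2 (hle y))
    _ < s - c := by
        rw [← lt_div_iff₀' (by positivity)]
        linarith

variable [PositiveTuple n]

lemma density_mul_inv_gammaA_pow_eq (y : GammaGroup m) (j : Fin l) {d : ℕ}
    (h : z (y * (gammaA m j ^ d)⁻¹) / modulus (G (y * (gammaA m j ^ d)⁻¹)) =
      z y / modulus (G y)) :
    density z (y * (gammaA m j ^ d)⁻¹) =
      modulus ((G y)⁻¹ * G (y * (gammaA m j ^ d)⁻¹)) * (m j : ℝ) ^ d * density z y := by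
  have hGy := (Rat.cast_pos (K := ℝ)).2 (modulus_pos (G y))
  have hGy' := (Rat.cast_pos (K := ℝ)).2 (modulus_pos (G (y * (gammaA m j ^ d)⁻¹)))
  have hy := (Rat.cast_pos (K := ℝ)).2 (modulus_pos y)
  have hm : (m j : ℝ) ≠ 0 := by exact_mod_cast PositiveTuple.cast_ne_zero (n := m) j
  rw [div_eq_iff hGy'.ne'] at h
  rw [density, density, h, modulus_mul, modulus_mul, modulus_inv, modulus_inv, modulus_pow,
    modulus_gammaA]
  push_cast
  field_simp

lemma exists_finite_density_ratio (hG : Bornologous G)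
    (hfin : (Set.range fun y => z y / modulus (G y)).Finite) (j : Fin l) :
    ∃ (R : ℕ) (A : Set ℝ), A.Finite ∧
      (∀ α ∈ A, ∃ (d : ℕ) (g : GammaGroup n), 0 < d ∧ α = modulus g * (m j : ℝ) ^ d) ∧
      ∀ y, ∃ r ≤ R, ∃ r' ≤ R, ∃ α ∈ A, density z (y * (gammaA m j ^ r')⁻¹) =
        α * density z (y * (gammaA m j ^ r)⁻¹) := by
  obtain ⟨R, hR⟩ : ∃ R, R = hfin.toFinset.card := ⟨_, rfl⟩
  obtain ⟨E, hE, hmem⟩ := hG ((fun d : ℕ => (gammaA m j ^ d)⁻¹) '' Set.Icc 1 R)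
    ((Set.finite_Icc 1 R).image _)
  refine ⟨R, Set.image2 (fun (g : GammaGroup n) (d : ℕ) => (modulus g : ℝ) * (m j : ℝ) ^ d) E
    (Set.Icc 1 R), hE.image2 _ (Set.finite_Icc 1 R), ?_, fun y => ?_⟩
  · rintro _ ⟨g, -, d, hd, rfl⟩
    exact ⟨d, g, hd.1, rfl⟩
  obtain ⟨w, hw⟩ : ∃ w : ℕ → GammaGroup m, ∀ r, w r = y * (gammaA m j ^ r)⁻¹ :=
    ⟨_, fun _ => rfl⟩
  have hw_add (r d : ℕ) : w (r + d) = w r * (gammaA m j ^ d)⁻¹ := by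
    rw [hw, hw, mul_assoc, ← mul_inv_rev, ← pow_add, add_comm]
  obtain ⟨r, r', hlt, hr', heq⟩ := exists_lt_le_card_map_eq
    (f := fun r => z (w r) / modulus (G (w r))) fun r => hfin.mem_toFinset.2 ⟨w r, rfl⟩
  rw [← hR] at hr'
  obtain ⟨d, rfl⟩ := Nat.exists_eq_add_of_lt hlt
  have hd : d + 1 ∈ Set.Icc 1 R := ⟨by omega, by omega⟩
  refine ⟨r, hlt.le.trans hr', r + d + 1, hr', _, Set.mem_image2_of_mem
    (hmem (w r) (w (r + d + 1)) ⟨d + 1, hd, ?_⟩) hd, ?_⟩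
  · rw [add_assoc, hw_add, inv_mul_cancel_left]
  · rw [← hw, ← hw, add_assoc, hw_add]
    refine density_mul_inv_gammaA_pow_eq _ _ ?_
    rw [← hw_add, ← add_assoc]
    exact heq.symm

lemma IsCycle.exists_pow_eq_modulus_of_pos (hG : Bornologous G) (hz : IsCycle z)
    (hfin : (Set.range fun y => z y / modulus (G y)).Finite)
    (hbdd : BddAbove (Set.range (density z))) (hpos : ∃ y, 0 < z y) (j : Fin l) :
    ∃ (d : ℕ) (g : GammaGroup n), 0 < d ∧ (m j : ℚ) ^ d = modulus g := by
  -- Near the supremum of the density, the ratios that occur are arbitrarily close to `1`, which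
  -- must thus belong to the finite set `A`.
  obtain ⟨R, A, hA, hA_eq, hratio⟩ := exists_finite_density_ratio hG hfin j
  by_cases hone : 1 ∈ A
  · obtain ⟨d, g, hd, hdg⟩ := hA_eq 1 hone
    refine ⟨d, g⁻¹, hd, ?_⟩
    rw [modulus_inv]
    exact eq_inv_of_mul_eq_one_right (by exact_mod_cast hdg.symm)
  exfalso
  obtain ⟨δ, hδ, hball⟩ := Metric.isOpen_iff.1 hA.isClosed.isOpen_compl 1 hone
  obtain ⟨s, hs⟩ : ∃ s, s = sSup (Set.range (density z)) := ⟨_, rfl⟩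
  have hle (y : GammaGroup m) : density z y ≤ s := hs ▸ le_csSup hbdd (Set.mem_range_self y)
  have hs_pos : 0 < s := by
    obtain ⟨y, hy⟩ := hpos
    exact (div_pos hy (Rat.cast_pos.2 (modulus_pos y))).trans_le (hle y)
  obtain ⟨y, hy⟩ := hz.exists_forall_lt_density hbdd (c := s / (1 + δ))
    (hs ▸ div_lt_self hs_pos (by linarith)) j R
  obtain ⟨r, hr, r', hr', α, hα, heq⟩ := hratio y
  have hlt := hy r hr
  have hlt' := hy r' hr'
  have hpos : 0 < density z (y * (gammaA m j ^ r)⁻¹) := lt_trans (by positivity) hlt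
  rw [div_lt_iff₀ (by linarith)] at hlt hlt'
  refine hball (Metric.mem_ball.2 ?_) hα
  rw [Real.dist_eq, ← mul_lt_mul_iff_of_pos_right hpos, ← abs_of_pos hpos, ← abs_mul,
    sub_mul, one_mul, ← heq, abs_of_pos hpos, abs_lt]
  constructor <;> nlinarith [hle (y * (gammaA m j ^ r)⁻¹), hle (y * (gammaA m j ^ r')⁻¹)]

lemma IsCycle.exists_pow_eq_modulus (hG : Bornologous G) (hz : IsCycle z) (hne : z ≠ 0)
    (hfin : (Set.range fun y => z y / modulus (G y)).Finite)
    (hbdd : ∃ C, ∀ y, |density z y| ≤ C) (j : Fin l) :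
    ∃ (d : ℕ) (g : GammaGroup n), 0 < d ∧ (m j : ℚ) ^ d = modulus g := by
  obtain ⟨C, hC⟩ := hbdd
  obtain ⟨y, hy⟩ := Function.ne_iff.1 hne
  rcases hy.lt_or_gt with hneg | hpos
  · refine hz.neg.exists_pow_eq_modulus_of_pos hG ?_ ⟨C, ?_⟩ ⟨y, neg_pos.2 hneg⟩ j
    · convert hfin.image Neg.neg
      rw [← Set.range_comp]
      exact congrArg Set.range (funext fun y => neg_div _ _)
    · rintro _ ⟨y, rfl⟩
      rw [density_neg]
      exact (neg_le_abs _).trans (hC y)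
  · refine hz.exists_pow_eq_modulus_of_pos hG hfin ⟨C, ?_⟩ ⟨y, hpos⟩ j
    rintro _ ⟨y, rfl⟩
    exact (le_abs_self _).trans (hC y)

end Density

section PowerRelation

variable {k l : ℕ} {n : Fin k → ℕ} {m : Fin l → ℕ}
variable {F : GammaGroup n → GammaGroup m} {G : GammaGroup m → GammaGroup n}

lemma finite_range_transfer_modulus_div [PositiveTuple n] {Z W}
    {M : Matrix (GammaGroup m) (GammaGroup n) ℤ} (hM : IsTransferMatrix Z W G M) :
    (Set.range fun y => transfer M (fun g => (modulus g : ℝ)) y / modulus (G y)).Finite := by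
  obtain ⟨E, hE, hsupp⟩ := hM.exists_finite_support
  lift E to Finset (GammaGroup n) using hE
  refine ((Set.Finite.pi' fun _ : E => hM.finite_entries).image fun f : E → ℤ =>
    ∑ e, (f e : ℝ) * modulus (e : GammaGroup n)).subset ?_
  rintro _ ⟨y, rfl⟩
  refine ⟨fun e => M y (G y * e), fun e => ⟨(y, G y * e), rfl⟩, ?_⟩
  have hGy : (modulus (G y) : ℝ) ≠ 0 := Rat.cast_ne_zero.2 (modulus_pos _).ne'
  have hrow : Function.support (M y) ⊆
      (E.map (mulLeftEmbedding (G y)) : Set (GammaGroup n)) := fun x hx => by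
    simpa using hsupp y x hx
  beta_reduce
  rw [transfer_apply_eq_sum hrow, Finset.sum_map, eq_div_iff hGy, Finset.sum_mul,
    ← E.sum_coe_sort]
  refine Finset.sum_congr rfl fun e _ => ?_
  rw [mulLeftEmbedding_apply, modulus_mul, Rat.cast_mul]
  ring

lemma exists_abs_density_le [PositiveTuple n] [PositiveTuple m] {z : GammaGroup m → ℝ}
    (hfin : (Set.range fun y => z y / modulus (G y)).Finite)
    (hG : ∃ C : ℚ, ∀ y, modulus (G y) ≤ C * modulus y) : ∃ C, ∀ y, |density z y| ≤ C := by
  obtain ⟨C, hC⟩ := hG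
  obtain ⟨B, hB⟩ := (hfin.image abs).bddAbove
  refine ⟨B * C, fun y => ?_⟩
  have hGy := (Rat.cast_pos (K := ℝ)).2 (modulus_pos (G y))
  have hy := (Rat.cast_pos (K := ℝ)).2 (modulus_pos y)
  have hle : |z y / modulus (G y)| ≤ B := hB ⟨_, ⟨y, rfl⟩, rfl⟩
  have hCy : (modulus (G y) : ℝ) / modulus y ≤ C := by
    rw [div_le_iff₀ hy]
    exact_mod_cast hC y
  calc |density z y| = |z y / modulus (G y)| * (modulus (G y) / modulus y) := by
        rw [density, abs_div, abs_div, abs_of_pos hGy, abs_of_pos hy]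
        field_simp
    _ ≤ B * C := mul_le_mul hle hCy (by positivity) ((abs_nonneg _).trans hle)

theorem exists_pow_eq_modulus [AdmissibleTuple n] [AdmissibleTuple m] (hFG : IsCoarseInverse F G)
    (j : Fin l) : ∃ (d : ℕ) (g : GammaGroup n), 0 < d ∧ (m j : ℚ) ^ d = modulus g := by
  obtain ⟨-, M, M', hM, hM', hinv⟩ := exists_isTransferMatrix hFG
  have hF : PreservesColumns F := preservesColumns_of_isTransferMatrix hM' fun y =>
    ⟨_, hM.mapsTo isCycle_modulus, by
      rw [hinv.1 isCycle_modulus]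
      exact Rat.cast_ne_zero.2 (modulus_pos y).ne'⟩
  have hG : PreservesColumns G := preservesColumns_of_isTransferMatrix hM fun y =>
    ⟨_, hM'.mapsTo isCycle_modulus, by
      rw [hinv.2 isCycle_modulus]
      exact Rat.cast_ne_zero.2 (modulus_pos y).ne'⟩
  have hne : transfer M (fun g => (modulus g : ℝ)) ≠ 0 := fun hzero => by
    have hfix := congrFun (hinv.1 isCycle_modulus) 1
    rw [hzero, transfer_zero_right, modulus_one, Rat.cast_one] at hfix
    exact zero_ne_one hfix
  have hfin := finite_range_transfer_modulus_div hM
  exact (hM.mapsTo isCycle_modulus).exists_pow_eq_modulus hFG.bornologous_inv hne hfin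
    (exists_abs_density_le hfin (hF.exists_modulus_le_mul_modulus hFG hG)) j

end PowerRelation

/-! ### Multiplicatively dependent tuples -/

namespace AdmissibleTuple

variable {k l : ℕ} {n : Fin k → ℕ} {m : Fin l → ℕ} [AdmissibleTuple n]

lemma one_lt (i : Fin k) : 1 < n i := two_le i

lemma not_dvd_pow {i i' : Fin k} (hne : i ≠ i') (d : ℕ) : ¬n i ∣ n i' ^ d := fun h =>
  (one_lt i).ne' (((coprime hne).pow_right d).eq_one_of_dvd h)

lemma prod_pow_eq_pow_of_dvd {f : Fin k → ℕ} {i : Fin k} {d : ℕ}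
    (h : ∏ i', n i' ^ f i' ∣ n i ^ d) : ∏ i', n i' ^ f i' = n i ^ f i := by
  refine Finset.prod_eq_single_of_mem i (Finset.mem_univ i) fun i' hi' hne => ?_
  by_contra hpow
  have hf : f i' ≠ 0 := fun hzero => hpow (by rw [hzero, pow_zero])
  exact not_dvd_pow hne d
    (((dvd_pow_self _ hf).trans (Finset.dvd_prod_of_mem (fun i => n i ^ f i) hi')).trans h)

lemma exists_pow_eq_pow [AdmissibleTuple m]
    (hm : ∀ j, ∃ (d : ℕ) (f : Fin k → ℕ), 0 < d ∧ m j ^ d = ∏ i, n i ^ f i)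
    (hn : ∀ i, ∃ (d : ℕ) (f : Fin l → ℕ), 0 < d ∧ n i ^ d = ∏ j, m j ^ f j) (i : Fin k) :
    ∃ j, ∃ s t : ℕ, 0 < s ∧ 0 < t ∧ n i ^ s = m j ^ t := by
  obtain ⟨d, f, hd, hnf⟩ := hn i
  obtain ⟨j, hj⟩ : ∃ j, f j ≠ 0 := by
    by_contra! hf
    refine (Nat.one_lt_pow hd.ne' (one_lt i)).ne' (hnf.trans ?_)
    simp [hf]
  obtain ⟨e, f', he, hmf⟩ := hm j
  have hdvd : m j ∣ n i ^ d := hnf ▸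
    (dvd_pow_self _ hj).trans (Finset.dvd_prod_of_mem (fun j => m j ^ f j) (Finset.mem_univ j))
  have heq : m j ^ e = n i ^ f' i := by
    rw [hmf]
    refine prod_pow_eq_pow_of_dvd (d := d * e) ?_
    rw [← hmf, pow_mul]
    exact pow_dvd_pow_of_dvd hdvd e
  refine ⟨j, f' i, e, Nat.pos_of_ne_zero fun hzero => ?_, he, heq.symm⟩
  rw [hzero, pow_zero] at heq
  exact (Nat.one_lt_pow he.ne' (one_lt j)).ne' heq

lemma injective_of_pow_eq_pow {σ : Fin k → Fin l}
    (hσ : ∀ i, ∃ s t : ℕ, 0 < s ∧ 0 < t ∧ n i ^ s = m (σ i) ^ t) : Function.Injective σ := by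
  intro i i' heq
  by_contra hne
  obtain ⟨s, t, hs, -, hst⟩ := hσ i
  obtain ⟨s', t', -, ht', hst'⟩ := hσ i'
  refine not_dvd_pow (n := n) hne (s' * t) ?_
  rw [pow_mul, hst', ← heq, ← pow_mul, mul_comm t', pow_mul, ← hst, ← pow_mul]
  exact dvd_pow_self _ (Nat.mul_pos hs ht').ne'

end AdmissibleTuple

section Modulus

variable {k : ℕ} {n : Fin k → ℕ} [AdmissibleTuple n] {N : ℕ} {g : GammaGroup n}

lemma natCast_mul_prod_pow_eq (h : (N : ℚ) = modulus g) :
    N * ∏ i, n i ^ (-exponent g i).toNat = ∏ i, n i ^ (exponent g i).toNat := by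
  have hcast : (N : ℚ) * ∏ i, (n i : ℚ) ^ (-exponent g i).toNat =
      ∏ i, (n i : ℚ) ^ (exponent g i).toNat := by
    rw [h, modulus, ← Finset.prod_mul_distrib]
    refine Finset.prod_congr rfl fun i _ => ?_
    rw [← zpow_natCast, ← zpow_natCast, ← zpow_add₀ (PositiveTuple.cast_ne_zero i)]
    congr 1
    omega
  exact_mod_cast hcast

lemma exponent_nonneg_of_natCast_eq_modulus (h : (N : ℚ) = modulus g) (i : Fin k) :
    0 ≤ exponent g i := by
  by_contra! hneg
  have hdvd : n i ∣ ∏ i', n i' ^ (exponent g i').toNat :=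
    natCast_mul_prod_pow_eq h ▸ ((dvd_pow_self (n i) (by omega)).trans
      (Finset.dvd_prod_of_mem (fun i' => n i' ^ (-exponent g i').toNat)
        (Finset.mem_univ i))).mul_left N
  have hcop : (n i).Coprime (∏ i', n i' ^ (exponent g i').toNat) :=
    Nat.Coprime.prod_right fun i' _ => by
      rcases eq_or_ne i i' with rfl | hne
      · rw [Int.toNat_of_nonpos hneg.le, pow_zero]
        exact Nat.coprime_one_right _
      · exact (AdmissibleTuple.coprime hne).pow_right _
  exact (AdmissibleTuple.one_lt (n := n) i).ne' (hcop.eq_one_of_dvd hdvd)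

lemma exists_eq_prod_pow_of_natCast_eq_modulus (h : (N : ℚ) = modulus g) :
    ∃ f : Fin k → ℕ, N = ∏ i, n i ^ f i := by
  refine ⟨fun i => (exponent g i).toNat, ?_⟩
  rw [← natCast_mul_prod_pow_eq h, Finset.prod_eq_one, mul_one]
  intro i _
  rw [Int.toNat_of_nonpos (neg_nonpos.2 (exponent_nonneg_of_natCast_eq_modulus h i)), pow_zero]

end Modulus

section Classification

variable {k l : ℕ} {n : Fin k → ℕ} {m : Fin l → ℕ} [AdmissibleTuple n] [AdmissibleTuple m]

lemma exists_pow_eq_prod_pow {F : GammaGroup n → GammaGroup m} {G : GammaGroup m → GammaGroup n}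
    (hFG : IsCoarseInverse F G) (j : Fin l) :
    ∃ (d : ℕ) (f : Fin k → ℕ), 0 < d ∧ m j ^ d = ∏ i, n i ^ f i := by
  obtain ⟨d, g, hd, h⟩ := exists_pow_eq_modulus hFG j
  obtain ⟨f, hf⟩ := exists_eq_prod_pow_of_natCast_eq_modulus (N := m j ^ d) (by exact_mod_cast h)
  exact ⟨d, f, hd, hf⟩

theorem exists_equiv_pow_eq_pow (h : CoarselyEquivalent (GammaGroup n) (GammaGroup m)) :
    ∃ σ : Fin k ≃ Fin l, ∀ i, ∃ s t : ℕ, 0 < s ∧ 0 < t ∧ n i ^ s = m (σ i) ^ t := by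
  obtain ⟨F, G, hFG⟩ := h
  choose σ hσ using AdmissibleTuple.exists_pow_eq_pow (exists_pow_eq_prod_pow hFG)
    (exists_pow_eq_prod_pow hFG.symm)
  obtain ⟨rfl, -⟩ := exists_isTransferMatrix hFG
  exact ⟨.ofBijective σ
    (Finite.injective_iff_bijective.1 (AdmissibleTuple.injective_of_pow_eq_pow hσ)), hσ⟩

end Classification

end GammaGroup

/-- **Quasi-isometry classification of the groups `Γ(S)`.**  For tuples
`S₁ = (n₁,…,n_k)` and `S₂ = (m₁,…,m_l)` of pairwise coprime integers at least
2, the groups `Γ(S₁)` and `Γ(S₂)` are quasi-isometric iff `k = l` and, after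
reordering, each `nᵢ` is a rational power of `mᵢ` (i.e. `nᵢ^s = mᵢ^t` for some
positive integers `s`, `t`). -/
theorem gammaGroup_quasiIsometry_classification
    {k l : ℕ} (n : Fin k → ℕ) (m : Fin l → ℕ)
    (hn2 : ∀ i, 2 ≤ n i) (hm2 : ∀ j, 2 ≤ m j)
    (hncop : ∀ i j, i ≠ j → Nat.Coprime (n i) (n j))
    (hmcop : ∀ i j, i ≠ j → Nat.Coprime (m i) (m j)) :
    QuasiIsometricGroups (GammaGroup n) (GammaGroup m) ↔
      ∃ σ : Fin k ≃ Fin l, ∀ i, ∃ s t : ℕ, 0 < s ∧ 0 < t ∧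
        (n i) ^ s = (m (σ i)) ^ t := by
  have : GammaGroup.AdmissibleTuple n := ⟨hn2, fun _ _ => hncop _ _⟩
  have : GammaGroup.AdmissibleTuple m := ⟨hm2, fun _ _ => hmcop _ _⟩
  exact ⟨fun h => GammaGroup.exists_equiv_pow_eq_pow h.coarselyEquivalent,
    GammaGroup.quasiIsometricGroups_of_pow_eq_pow⟩
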